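/- arXiv:0802.0959 — 4 statements merged into one kernel-verified Lean document; each statement's English description precedes it below -/
import Mathlib

section
/- Let k be an algebraically closed field of characteristic zero and let f ∈ k[x_0, x_1, x_2, x_3] be a squarefree homogeneous polynomial of degree d ≥ 3. Then the Hessian polynomial h_f is identically zero if and only if there exists a nonzero vector (c_0, c_1, c_2, c_3) ∈ k^4 such that c_0·∂f/∂x_0 + c_1·∂f/∂x_1 + c_2·∂f/∂x_2 + c_3·∂f/∂x_3 = 0, i.e. if and only if the hypersurface V(f) ⊂ P^3 is a cone. -/
open MvPolynomial

/-- The Hessian polynomial of a multivariate polynomial: the determinant of the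
matrix of second partial derivatives. -/
noncomputable def hessianDet {k : Type*} [CommRing k] {m : ℕ}
    (f : MvPolynomial (Fin m) k) : MvPolynomial (Fin m) k :=
  Matrix.det (Matrix.of fun i j => pderiv i (pderiv j f))

namespace GN

variable {k : Type*} [Field k]

theorem indep_option {S A ι : Type*} [CommRing S] [IsDomain S] [CommRing A] [Algebra k S]
    [Algebra k A] (φ : S →ₐ[k] A) (p : S) (hp : p ≠ 0) (hφ : φ p = 0) (v : ι → S)
    (hv : AlgebraicIndependent k (fun i => φ (v i))) :
    AlgebraicIndependent k (fun o : Option ι => o.elim p v) := by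
  have hv' : AlgebraicIndependent k v := AlgebraicIndependent.of_comp φ hv
  rw [hv'.option_iff_transcendental]
  intro halg
  obtain ⟨F, hF0, hF⟩ := halg.exists_nonzero_coeff_and_aeval_eq_zero (mem_nonZeroDivisors_of_ne_zero hp)
  apply hF0
  have h1 : φ (F.coeff 0 : S) = 0 := by
    have := Polynomial.divX_mul_X_add F
    rw [← this] at hF
    simp only [map_add, map_mul, Polynomial.aeval_X, Polynomial.aeval_C] at hF
    have h2 := congrArg φ hF
    simp only [map_add, map_mul, hφ, mul_zero, zero_add, map_zero] at h2
    exact h2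
  have hmem : (F.coeff 0 : S) ∈ (aeval v : MvPolynomial ι k →ₐ[k] S).range :=
    (Algebra.adjoin_range_eq_range_aeval k v).le (F.coeff 0).2
  obtain ⟨G, hG⟩ := hmem
  have hG' : aeval v G = (F.coeff 0 : S) := hG
  have h3 : aeval (fun i => φ (v i)) G = 0 := by
    rw [← h1, ← hG']
    exact (comp_aeval_apply (f := v) φ G).symm
  have := hv.eq_zero_of_aeval_eq_zero _ h3
  rw [this, map_zero] at hG'
  exact Subtype.ext hG'.symm

theorem dep_three {A : Type*} [CommRing A] [IsDomain A] [Algebra k A]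
    (φ : MvPolynomial (Fin 4) k →ₐ[k] A) (p : Fin 4 → MvPolynomial (Fin 4) k)
    (hp0 : p ≠ 0) (hcop : ∀ q, Irreducible q → ∃ i, ¬ q ∣ p i) (hφ : ∀ i, φ (p i) = 0)
    (v : Fin 3 → MvPolynomial (Fin 4) k) :
    ¬ AlgebraicIndependent k (fun i => φ (v i)) := by
  intro hv
  obtain ⟨i, hi⟩ := Function.ne_iff.mp hp0
  have hprime : (RingHom.ker φ).IsPrime := RingHom.ker_isPrime φ
  have hne : RingHom.ker φ ≠ ⊥ := by
    intro h
    have : p i ∈ RingHom.ker φ := hφ i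
    rw [h] at this
    exact hi this
  obtain ⟨q, hqm, hq⟩ := hprime.exists_mem_prime_of_ne_bot hne
  obtain ⟨j, hj⟩ := hcop q hq.irreducible
  have : (Ideal.span {q}).IsPrime := (Ideal.span_singleton_prime hq.ne_zero).2 hq
  let ψ : (MvPolynomial (Fin 4) k ⧸ Ideal.span {q}) →ₐ[k] A :=
    Ideal.Quotient.liftₐ (Ideal.span {q}) φ (by
      intro a ha
      obtain ⟨b, rfl⟩ := Ideal.mem_span_singleton.mp ha
      rw [map_mul, show φ q = 0 from hqm, zero_mul])
  let mk := Ideal.Quotient.mkₐ k (Ideal.span {q})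
  have hψ : ∀ a, ψ (mk a) = φ a := fun a => rfl
  have h1 := indep_option ψ (mk (p j)) (by
      intro h
      exact hj (Ideal.mem_span_singleton.mp (Ideal.Quotient.eq_zero_iff_mem.mp h)))
      (hφ j) (fun i => mk (v i)) hv
  have h2 := indep_option mk q hq.ne_zero
    (Ideal.Quotient.eq_zero_iff_mem.mpr (Ideal.mem_span_singleton_self q))
    (fun o : Option (Fin 3) => o.elim (p j) v) (by
      have heq : (fun o : Option (Fin 3) => mk (o.elim (p j) v))
          = fun o => o.elim (mk (p j)) (fun i => mk (v i)) := by
        funext o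
        cases o <;> rfl
      rw [heq]
      exact h1)
  have h3 := h2.lift_cardinalMk_le_trdeg
  simp at h3
  norm_num at h3

theorem hom_scale {σ : Type*} {A : Type*} [CommRing A] [Algebra k A] {p : MvPolynomial σ k} {n : ℕ}
    (hp : p.IsHomogeneous n) (r : A) (v : σ → A) :
    aeval (fun i => r * v i) p = r ^ n * aeval v p := by
  rw [aeval_def, aeval_def, eval₂_eq, eval₂_eq, Finset.mul_sum]
  refine Finset.sum_congr rfl fun d hd => ?_
  have : d.degree = n := by
    by_contra h
    exact (mem_support_iff.mp hd) (hp.coeff_eq_zero h)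
  simp only [mul_pow, Finset.prod_mul_distrib, Finset.prod_pow_eq_pow_sum]
  rw [show ∑ i ∈ d.support, d i = n from this]
  ring

/-- homogeneous scaling hom -/
theorem scale_coeff {σ : Type*} (p : MvPolynomial σ k) (j : ℕ) :
    (aeval (fun i => (Polynomial.X : Polynomial (MvPolynomial σ k)) * Polynomial.C (X i)) p).coeff j
      = homogeneousComponent j p := by
  have hC : ∀ q : MvPolynomial σ k,
      aeval (fun i => (Polynomial.C (X i) : Polynomial (MvPolynomial σ k))) q = Polynomial.C q := by
    intro q
    have := comp_aeval_apply (f := (X : σ → MvPolynomial σ k)) (Polynomial.CAlgHom (R := k) (A := MvPolynomial σ k)) q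
    rw [aeval_X_left_apply] at this
    exact this.symm
  conv_lhs => rw [← sum_homogeneousComponent p]
  rw [map_sum, Polynomial.finsetSum_coeff]
  have : ∀ i, (aeval (fun i => (Polynomial.X : Polynomial (MvPolynomial σ k)) * Polynomial.C (X i))
      (homogeneousComponent i p)).coeff j = if i = j then homogeneousComponent i p else 0 := by
    intro i
    rw [hom_scale (homogeneousComponent_isHomogeneous i p), hC, mul_comm, Polynomial.coeff_C_mul_X_pow]
    simp [eq_comm]
  simp only [this]
  rw [Finset.sum_ite_eq']
  split_ifs with h
  · rfl
  · rw [homogeneousComponent_eq_zero]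
    simpa using h

theorem hom_factor {σ : Type*} {a b : MvPolynomial σ k} {n : ℕ} (hab : (a * b).IsHomogeneous n)
    (h0 : a * b ≠ 0) : a.IsHomogeneous a.totalDegree := by
  set S : MvPolynomial σ k →ₐ[k] Polynomial (MvPolynomial σ k) :=
    aeval (fun i => (Polynomial.X : Polynomial (MvPolynomial σ k)) * Polynomial.C (X i)) with hS
  have hco : ∀ p j, (S p).coeff j = homogeneousComponent j p := scale_coeff
  have hinj : ∀ p, p ≠ 0 → S p ≠ 0 := by
    intro p hp h
    apply hp
    rw [← sum_homogeneousComponent p]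
    refine Finset.sum_eq_zero fun i _ => ?_
    rw [← hco, h, Polynomial.coeff_zero]
  have ha := hinj a (left_ne_zero_of_mul h0)
  have hb := hinj b (right_ne_zero_of_mul h0)
  have hab' : S a * S b = Polynomial.C (a * b) * Polynomial.X ^ n := by
    rw [← map_mul]
    ext1 j
    rw [hco, Polynomial.coeff_C_mul_X_pow, homogeneousComponent_of_mem hab]
  have d1 : (S a).natDegree + (S b).natDegree = n := by
    rw [← Polynomial.natDegree_mul ha hb, hab', Polynomial.natDegree_C_mul_X_pow n _ h0]
  have d2 : (S a).natTrailingDegree + (S b).natTrailingDegree = n := by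
    rw [← Polynomial.natTrailingDegree_mul ha hb, hab', Polynomial.C_mul_X_pow_eq_monomial,
      Polynomial.natTrailingDegree_monomial h0]
  have d3 := (S a).natTrailingDegree_le_natDegree
  have d4 := (S b).natTrailingDegree_le_natDegree
  have d5 : (S a).natTrailingDegree = (S a).natDegree := by omega
  have h1 : homogeneousComponent (S a).natDegree a = a := by
    conv_rhs => rw [← sum_homogeneousComponent a]
    symm
    apply Finset.sum_eq_single
    · intro j _ hj
      rw [← hco]
      rcases lt_or_gt_of_ne hj with h | h
      · exact Polynomial.coeff_eq_zero_of_lt_natTrailingDegree (by omega)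
      · exact Polynomial.coeff_eq_zero_of_natDegree_lt h
    · intro hj
      apply homogeneousComponent_eq_zero
      simpa using hj
  have h2 : a.IsHomogeneous (S a).natDegree := by
    have := homogeneousComponent_isHomogeneous (S a).natDegree a
    rwa [h1] at this
  rwa [h2.totalDegree (left_ne_zero_of_mul h0)]

end GN

namespace GN

variable {k : Type*} [Field k] {m : ℕ}

theorem D_apply (h : Fin m → MvPolynomial (Fin m) k) (p : MvPolynomial (Fin m) k) :
    mkDerivation k h p = ∑ i, h i * pderiv i p := by
  induction p using MvPolynomial.induction_on with
  | C a => simp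
  | add p q hp hq => simp only [map_add, hp, hq, mul_add, Finset.sum_add_distrib]
  | mul_X p i hp =>
    simp only [Derivation.leibniz, smul_eq_mul, hp, mkDerivation_X, mul_add,
      Finset.sum_add_distrib]
    congr 1
    · rw [Finset.sum_eq_single i]
      · simp [mul_comm]
      · intro j _ hj
        rw [pderiv_X_of_ne (Ne.symm hj)]; simp
      · simp
    · rw [Finset.mul_sum]
      refine Finset.sum_congr rfl fun j _ => ?_
      ring

/-- The translation `x ↦ x + t h`. -/
noncomputable def E (h : Fin m → MvPolynomial (Fin m) k) :
    MvPolynomial (Fin m) k →ₐ[k] Polynomial (MvPolynomial (Fin m) k) :=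
  aeval (fun i => Polynomial.C (X i) + Polynomial.X * Polynomial.C (h i))

theorem E_C (h : Fin m → MvPolynomial (Fin m) k) (a : k) : E h (C a) = Polynomial.C (C a) := by
  rw [E, aeval_C]; rfl

theorem E_X (h : Fin m → MvPolynomial (Fin m) k) (i : Fin m) :
    E h (X i) = Polynomial.C (X i) + Polynomial.X * Polynomial.C (h i) := by
  rw [E, aeval_X]

theorem E_coeff_zero (h : Fin m → MvPolynomial (Fin m) k) (p : MvPolynomial (Fin m) k) :
    (E h p).coeff 0 = p := by
  induction p using MvPolynomial.induction_on with
  | C a => rw [E_C]; simp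
  | add p q hp hq => rw [map_add, Polynomial.coeff_add, hp, hq]
  | mul_X p i hp => rw [map_mul, Polynomial.mul_coeff_zero, hp, E_X]; simp

theorem E_derivative (h : Fin m → MvPolynomial (Fin m) k) (p : MvPolynomial (Fin m) k) :
    Polynomial.derivative (E h p) = ∑ i, E h (pderiv i p) * Polynomial.C (h i) := by
  induction p using MvPolynomial.induction_on with
  | C a => rw [E_C]; simp
  | add p q hp hq => simp only [map_add, hp, hq, add_mul, Finset.sum_add_distrib]
  | mul_X p i hp =>
    rw [map_mul, Polynomial.derivative_mul, hp, E_X]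
    simp only [Derivation.leibniz, smul_eq_mul, map_add, map_mul, E_X, Polynomial.derivative_C,
      Polynomial.derivative_mul, Polynomial.derivative_X, add_mul, Finset.sum_add_distrib]
    rw [add_comm]
    congr 1
    · rw [Finset.sum_eq_single i]
      · simp
      · intro j _ hj
        rw [pderiv_X_of_ne (Ne.symm hj)]; simp
      · simp
    · rw [← Finset.sum_add_distrib, Finset.sum_mul]
      refine Finset.sum_congr rfl fun j _ => ?_
      ring

theorem E_coeff_one (h : Fin m → MvPolynomial (Fin m) k) (p : MvPolynomial (Fin m) k) :
    (E h p).coeff 1 = mkDerivation k h p := by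
  have := congrArg (fun q => Polynomial.coeff q 0) (E_derivative h p)
  simp only [Polynomial.coeff_derivative, Polynomial.finsetSum_coeff, Polynomial.coeff_mul_C,
    E_coeff_zero] at this
  rw [D_apply]
  simp only [zero_add, Nat.cast_zero, mul_one] at this
  rw [this]
  exact Finset.sum_congr rfl fun j _ => mul_comm _ _

theorem D_of_E {h : Fin m → MvPolynomial (Fin m) k} {p : MvPolynomial (Fin m) k}
    (hp : E h p = Polynomial.C p) : mkDerivation k h p = 0 := by
  rw [← E_coeff_one, hp, Polynomial.coeff_C]; simp

theorem D_iter_sum {h : Fin m → MvPolynomial (Fin m) k}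
    (hh : ∀ i, mkDerivation k h (h i) = 0) (n : ℕ) (q : Fin m → MvPolynomial (Fin m) k) :
    (mkDerivation k h)^[n] (∑ i, h i * q i) = ∑ i, h i * (mkDerivation k h)^[n] (q i) := by
  induction n with
  | zero => rfl
  | succ n ih =>
    simp only [Function.iterate_succ_apply', ih, map_sum, Derivation.leibniz, hh, smul_eq_mul,
      mul_zero, add_zero]

theorem E_coeff {h : Fin m → MvPolynomial (Fin m) k}
    (hh : ∀ i, mkDerivation k h (h i) = 0) (n : ℕ) (p : MvPolynomial (Fin m) k) :
    (E h p).coeff n * (n.factorial : MvPolynomial (Fin m) k) = (mkDerivation k h)^[n] p := by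
  induction n generalizing p with
  | zero => simp [E_coeff_zero]
  | succ n ih =>
    have := congrArg (fun q => Polynomial.coeff q n) (E_derivative h p)
    simp only [Polynomial.coeff_derivative, Polynomial.finsetSum_coeff, Polynomial.coeff_mul_C]
      at this
    rw [Function.iterate_succ_apply, D_apply, D_iter_sum hh, Nat.factorial_succ, Nat.cast_mul,
      ← mul_assoc, Nat.cast_succ, this, Finset.sum_mul]
    refine Finset.sum_congr rfl fun j _ => ?_
    rw [← ih]; ring

theorem E_of_D [CharZero k] {h : Fin m → MvPolynomial (Fin m) k}
    (hh : ∀ i, mkDerivation k h (h i) = 0) {p : MvPolynomial (Fin m) k}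
    (hp : mkDerivation k h p = 0) : E h p = Polynomial.C p := by
  ext1 n
  rw [Polynomial.coeff_C]
  split_ifs with hn
  · rw [hn, E_coeff_zero]
  · have h1 := E_coeff hh n p
    obtain ⟨l, rfl⟩ := Nat.exists_eq_succ_of_ne_zero hn
    rw [Function.iterate_succ_apply, hp] at h1
    have h2 : (mkDerivation k h)^[l] 0 = 0 := by
      clear h1 hn
      induction l with
      | zero => rfl
      | succ l ih => rw [Function.iterate_succ_apply, map_zero, ih]
    rw [h2] at h1
    refine (mul_eq_zero.mp h1).resolve_right ?_
    have : CharZero (MvPolynomial (Fin m) k) := inferInstance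
    exact_mod_cast Nat.factorial_ne_zero _

theorem E_factor {h : Fin m → MvPolynomial (Fin m) k} {a b : MvPolynomial (Fin m) k}
    (hab : E h (a * b) = Polynomial.C (a * b)) (h0 : a * b ≠ 0) : E h a = Polynomial.C a := by
  have hne : E h a * E h b ≠ 0 := by
    rw [← map_mul, hab]; simpa using h0
  have d : (E h a).natDegree + (E h b).natDegree = 0 := by
    rw [← Polynomial.natDegree_mul (left_ne_zero_of_mul hne) (right_ne_zero_of_mul hne), ← map_mul,
      hab, Polynomial.natDegree_C]
  rw [Polynomial.eq_C_of_natDegree_eq_zero (by omega : (E h a).natDegree = 0), E_coeff_zero]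

/-- top coefficient: `p(h) = 0`. -/
theorem self_vanish {h : Fin m → MvPolynomial (Fin m) k} {p : MvPolynomial (Fin m) k}
    (hp : E h p = Polynomial.C p) {n : ℕ} (hn : n ≠ 0) (hom : p.IsHomogeneous n) :
    aeval h p = 0 := by
  let R := MvPolynomial (Fin m) k
  let K := FractionRing (Polynomial R)
  let T : K := algebraMap (Polynomial R) K Polynomial.X
  have hT : T ≠ 0 := by
    intro h
    have := (IsFractionRing.injective (Polynomial R) K) (h.trans (map_zero _).symm)
    exact Polynomial.X_ne_zero this
  let q : Polynomial R := aeval (fun i => Polynomial.X * Polynomial.C (X i) + Polynomial.C (h i)) p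
  let ev : Polynomial R →ₐ[R] K := Polynomial.aeval (T⁻¹)
  have h1 : ev (E h p) = algebraMap R K p := by
    rw [hp]; exact Polynomial.aeval_C _ _
  have h2 : ev (E h p) = aeval (fun i => algebraMap R K (X i) + T⁻¹ * algebraMap R K (h i)) p := by
    have := comp_aeval_apply (R := k)
      (f := fun i => (Polynomial.C (X i) + Polynomial.X * Polynomial.C (h i) : Polynomial R))
      (ev.restrictScalars k) p
    refine Eq.trans this ?_
    congr 2
    funext i
    simp only [ev, AlgHom.coe_restrictScalars', map_add, map_mul, Polynomial.aeval_C, Polynomial.aeval_X]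
  have h3 : algebraMap (Polynomial R) K q
      = aeval (fun i => T * (algebraMap R K (X i) + T⁻¹ * algebraMap R K (h i))) p := by
    have := comp_aeval_apply (R := k)
      (f := fun i => (Polynomial.X * Polynomial.C (X i) + Polynomial.C (h i) : Polynomial R))
      (IsScalarTower.toAlgHom k (Polynomial R) K) p
    refine Eq.trans this ?_
    congr 2
    funext i
    have hc : ∀ r : R, algebraMap (Polynomial R) K (Polynomial.C r) = algebraMap R K r := fun r => rfl
    simp only [IsScalarTower.coe_toAlgHom', map_add, map_mul, hc]
    rw [mul_add, ← mul_assoc, mul_inv_cancel₀ hT, one_mul]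
  rw [hom_scale hom, ← h2, h1] at h3
  have h4 : q = Polynomial.X ^ n * Polynomial.C p := by
    apply IsFractionRing.injective (Polynomial R) K
    rw [h3, map_mul, map_pow]
    rfl
  have h5 : Polynomial.aeval (0 : R) q = aeval h p := by
    have := comp_aeval_apply (R := k)
      (f := fun i => (Polynomial.X * Polynomial.C (X i) + Polynomial.C (h i) : Polynomial R))
      ((Polynomial.aeval (0 : R) : Polynomial R →ₐ[R] R).restrictScalars k) p
    refine Eq.trans this ?_
    congr 2
    funext i
    simp
  rw [← h5, h4]
  simp [hn]

/-- Jacobian criterion -/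
theorem exists_relation [CharZero k] (g c : Fin m → MvPolynomial (Fin m) k) (hc : c ≠ 0)
    (hD : ∀ j, mkDerivation k c (g j) = 0) : ¬ AlgebraicIndependent k g := by
  intro hg
  let R := MvPolynomial (Fin m) k
  let D := mkDerivation k c
  have hb : IsTranscendenceBasis k g := by
    apply hg.isTranscendenceBasis_of_lift_trdeg_le_of_finite
    simp
  have halg := hb.isAlgebraic
  let B : Subalgebra k R :=
    { carrier := {a | D a = 0}
      mul_mem' := by
        intro a b ha hb
        simp only [Set.mem_ofPred_eq] at *
        rw [Derivation.leibniz, ha, hb]; simp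
      add_mem' := by
        intro a b ha hb
        simp only [Set.mem_ofPred_eq] at *
        rw [map_add, ha, hb, add_zero]
      algebraMap_mem' := fun r => D.map_algebraMap r }
  have hle : Algebra.adjoin k (Set.range g) ≤ B := by
    apply Algebra.adjoin_le
    rintro _ ⟨j, rfl⟩
    exact hD j
  let DB : Derivation B R R := Derivation.mk'
    { toFun := D
      map_add' := map_add D
      map_smul' := by
        intro b a
        have hb : D (b : R) = 0 := b.2
        change D ((b : R) * a) = (b : R) * D a
        rw [Derivation.leibniz, hb]; simp }
    (by intro a b; exact D.leibniz a b)
  apply hc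
  funext j
  have hxalg : IsAlgebraic B (X j : R) := by
    obtain ⟨F, hF0, hF⟩ := halg.isAlgebraic (X j : R)
    refine ⟨F.map (Subalgebra.inclusion hle).toRingHom, ?_, ?_⟩
    · exact (Polynomial.map_ne_zero_iff (Subalgebra.inclusion_injective hle)).2 hF0
    · rw [Polynomial.aeval_def, Polynomial.eval₂_map]
      exact hF
  -- minimal degree
  classical
  have hex : ∃ n, ∃ F : Polynomial B, F ≠ 0 ∧ Polynomial.aeval (X j : R) F = 0 ∧ F.natDegree = n := by
    obtain ⟨F, h1, h2⟩ := hxalg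
    exact ⟨_, F, h1, h2, rfl⟩
  obtain ⟨F, hF0, hF, hFn⟩ := Nat.find_spec hex
  have hd0 : F.natDegree ≠ 0 := by
    intro h
    rw [Polynomial.eq_C_of_natDegree_eq_zero h, Polynomial.aeval_C] at hF
    apply hF0
    rw [Polynomial.eq_C_of_natDegree_eq_zero h]
    have : F.coeff 0 = 0 := Subtype.ext hF
    rw [this, map_zero]
  have : CharZero R := inferInstance
  have : CharZero B := ⟨fun a b hab => by
    have := congrArg (fun x : B => (x : R)) hab
    simpa using this⟩
  have hder : Polynomial.derivative F ≠ 0 := by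
    intro h
    exact hd0 (Polynomial.derivative_eq_zero.1 h)
  have hder' : Polynomial.aeval (X j : R) (Polynomial.derivative F) ≠ 0 := by
    intro h
    exact Nat.find_min hex (m := (Polynomial.derivative F).natDegree)
      (by rw [← hFn]; exact Polynomial.natDegree_derivative_lt hd0) ⟨_, hder, h, rfl⟩
  have h1 := DB.map_aeval F (X j)
  rw [hF, map_zero, smul_eq_mul] at h1
  have h2 := (mul_eq_zero.mp h1.symm).resolve_left hder'
  have h3 : D (X j) = c j := mkDerivation_X k c j
  exact h3.symm.trans h2

end GN

namespace GN

variable {k : Type*} [Field k] {m : ℕ}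

theorem hom_relation {n e : ℕ} (he : e ≠ 0) (v : Fin n → MvPolynomial (Fin m) k)
    (hv : ∀ i, (v i).IsHomogeneous e) (hdep : ¬ AlgebraicIndependent k v) :
    ∃ N, ∃ B : MvPolynomial (Fin n) k, B.IsHomogeneous N ∧ B ≠ 0 ∧ aeval v B = 0 := by
  rw [algebraicIndependent_iff] at hdep
  push Not at hdep
  obtain ⟨A, hA, hA0⟩ := hdep
  have hex : ∃ N, homogeneousComponent N A ≠ 0 := by
    by_contra h
    push Not at h
    apply hA0
    rw [← sum_homogeneousComponent A]
    exact Finset.sum_eq_zero fun i _ => h i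
  obtain ⟨N, hN⟩ := hex
  refine ⟨N, homogeneousComponent N A, homogeneousComponent_isHomogeneous _ _, hN, ?_⟩
  have hh : ∀ i, (aeval v (homogeneousComponent i A)).IsHomogeneous (e * i) := fun i =>
    (homogeneousComponent_isHomogeneous i A).aeval v hv
  have h1 := congrArg (homogeneousComponent (e * N)) hA
  rw [← sum_homogeneousComponent A, map_sum, map_sum, map_zero] at h1
  have h2 : ∀ i, homogeneousComponent (e * N) (aeval v (homogeneousComponent i A))
      = if i = N then aeval v (homogeneousComponent i A) else 0 := by
    intro i
    rw [homogeneousComponent_of_mem (hh i)]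
    simp [he, eq_comm]
  simp only [h2, Finset.sum_ite_eq'] at h1
  split_ifs at h1 with h3
  · exact h1
  · exfalso
    apply hN
    apply homogeneousComponent_eq_zero
    simpa using h3

theorem dehom {K : Type*} [Field K] [Algebra k K] {N : ℕ} {B : MvPolynomial (Fin 2) k}
    (hB : B.IsHomogeneous N) (a b : K) (hb : b ≠ 0) :
    aeval ![a, b] B = b ^ N * Polynomial.aeval (a / b) (aeval ![Polynomial.X, 1] B : Polynomial k) := by
  have h1 : (![a, b] : Fin 2 → K) = fun i => b * (![a / b, 1] : Fin 2 → K) i := by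
    funext i
    fin_cases i
    · simp; field_simp
    · simp
  rw [h1, hom_scale hB]
  congr 1
  have := comp_aeval_apply (f := ![(Polynomial.X : Polynomial k), 1])
    (Polynomial.aeval (R := k) (a / b)) B
  rw [this]
  congr 2
  funext i
  fin_cases i <;> simp

theorem binary [IsAlgClosed k] {L : Type*} [CommRing L] [IsDomain L] [Algebra k L] {N : ℕ}
    {B : MvPolynomial (Fin 2) k}
    (hB : B.IsHomogeneous N) (hB0 : B ≠ 0) (a b : L) (hab : aeval ![a, b] B = 0) :
    b = 0 ∨ ∃ r : k, a = r • b := by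
  by_cases hb : b = 0
  · exact Or.inl hb
  right
  let p : Polynomial k := aeval ![Polynomial.X, 1] B
  have hp : p ≠ 0 := by
    intro hp
    apply hB0
    let K := FractionRing (MvPolynomial (Fin 2) k)
    have hinj := IsFractionRing.injective (MvPolynomial (Fin 2) k) K
    have h1 := dehom hB (algebraMap (MvPolynomial (Fin 2) k) K (X 0)) (algebraMap (MvPolynomial (Fin 2) k) K (X 1)) (by
      intro h
      exact X_ne_zero (R := k) (1 : Fin 2) (hinj (h.trans (map_zero _).symm)))
    rw [show (aeval ![Polynomial.X, 1] B : Polynomial k) = 0 from hp, map_zero, mul_zero] at h1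
    apply hinj
    rw [map_zero, ← h1]
    have := comp_aeval_apply (f := (X : Fin 2 → MvPolynomial (Fin 2) k))
      (IsScalarTower.toAlgHom k (MvPolynomial (Fin 2) k) K) B
    rw [aeval_X_left_apply] at this
    refine Eq.trans this ?_
    congr 2
    funext i
    fin_cases i <;> rfl
  let K := FractionRing L
  have hinj := IsFractionRing.injective L K
  have hb' : algebraMap L K b ≠ 0 := fun h => hb (hinj (h.trans (map_zero _).symm))
  have h1 := dehom hB (algebraMap L K a) (algebraMap L K b) hb'
  have h2 : aeval ![algebraMap L K a, algebraMap L K b] B = 0 := by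
    have := comp_aeval_apply (f := ![a, b]) (IsScalarTower.toAlgHom k L K) B
    rw [hab, map_zero] at this
    rw [this]
    congr 2
    funext i
    fin_cases i <;> rfl
  rw [h2] at h1
  have h3 := (mul_eq_zero.mp h1.symm).resolve_left (pow_ne_zero _ hb')
  have halg : IsAlgebraic k (algebraMap L K a / algebraMap L K b) := ⟨p, hp, h3⟩
  have hdeg := IsAlgClosed.degree_eq_one_of_irreducible k (minpoly.irreducible halg.isIntegral)
  obtain ⟨r, hr⟩ := minpoly.mem_range_of_degree_eq_one k _ hdeg
  refine ⟨r, ?_⟩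
  apply hinj
  rw [eq_div_iff hb'] at hr
  rw [← hr, Algebra.smul_def, map_mul]
  congr 1

theorem pderiv_comm' (i j : Fin m) (p : MvPolynomial (Fin m) k) :
    pderiv i (pderiv j p) = pderiv j (pderiv i p) := by
  have : ⁅(pderiv i : Derivation k (MvPolynomial (Fin m) k) (MvPolynomial (Fin m) k)),
      (pderiv j : Derivation k (MvPolynomial (Fin m) k) (MvPolynomial (Fin m) k))⁆ = 0 := by
    apply derivation_ext
    intro l
    rw [Derivation.commutator_apply]
    simp only [pderiv_X, Derivation.coe_zero, Pi.zero_apply]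
    simp only [Pi.single_apply]
    split_ifs <;> simp
  have h := congrArg (fun D : Derivation k (MvPolynomial (Fin m) k) (MvPolynomial (Fin m) k) => D p) this
  simp only [Derivation.commutator_apply, Derivation.coe_zero, Pi.zero_apply] at h
  exact sub_eq_zero.mp h

theorem chain {n : ℕ} (D : Derivation k (MvPolynomial (Fin m) k) (MvPolynomial (Fin m) k))
    (v : Fin n → MvPolynomial (Fin m) k) (p : MvPolynomial (Fin n) k) :
    D (aeval v p) = ∑ i, aeval v (pderiv i p) * D (v i) := by
  induction p using MvPolynomial.induction_on with
  | C a => simp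
  | add p q hp hq => simp only [map_add, hp, hq, add_mul, Finset.sum_add_distrib]
  | mul_X p i hp =>
    simp only [map_mul, aeval_X, Derivation.leibniz, smul_eq_mul, hp, map_add, add_mul,
      Finset.sum_add_distrib]
    congr 1
    · rw [Finset.sum_eq_single i]
      · simp
      · intro j _ hj
        rw [pderiv_X_of_ne (Ne.symm hj)]; simp
      · simp
    · rw [Finset.mul_sum]
      refine Finset.sum_congr rfl fun j _ => ?_
      ring

theorem D_smul (q : MvPolynomial (Fin m) k) (h : Fin m → MvPolynomial (Fin m) k)
    (p : MvPolynomial (Fin m) k) :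
    mkDerivation k (fun i => q * h i) p = q * mkDerivation k h p := by
  rw [D_apply, D_apply, Finset.mul_sum]
  exact Finset.sum_congr rfl fun j _ => mul_assoc _ _ _

theorem const_of_pderiv [CharZero k] {n : ℕ} {p : MvPolynomial (Fin m) k} (hp : p.IsHomogeneous n)
    (hn : n ≠ 0) (h : ∀ i, pderiv i p = 0) : p = 0 := by
  have := hp.sum_X_mul_pderiv
  simp only [h, mul_zero, Finset.sum_const_zero] at this
  rw [nsmul_eq_mul, eq_comm, mul_eq_zero] at this
  refine this.resolve_left ?_
  have : CharZero (MvPolynomial (Fin m) k) := inferInstance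
  exact_mod_cast hn

theorem exists_first [CharZero k] (f : MvPolynomial (Fin m) k) (d : ℕ) (hd : 2 ≤ d)
    (hf : f.IsHomogeneous d) (c : Fin m → MvPolynomial (Fin m) k) (hc : c ≠ 0)
    (hD : ∀ j, mkDerivation k c (pderiv j f) = 0) :
    ∃ e, ∃ g : Fin m → MvPolynomial (Fin m) k, g ≠ 0 ∧ (∀ i, (g i).IsHomogeneous e) ∧
      (∀ i, mkDerivation k g (g i) = 0) ∧ (∀ j, mkDerivation k g (pderiv j f) = 0) := by
  classical
  let v : Fin m → MvPolynomial (Fin m) k := fun j => pderiv j f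
  have hv : ∀ i, (v i).IsHomogeneous (d - 1) := fun i => hf.pderiv
  have hex := hom_relation (by omega : d - 1 ≠ 0) v hv (exists_relation v c hc hD)
  obtain ⟨π, hπ, hπ0, hπv⟩ := Nat.find_spec hex
  set n := Nat.find hex with hn
  have hn0 : n ≠ 0 := by
    intro h
    rw [h] at hπ
    have h1 := hπ.totalDegree hπ0
    rw [totalDegree_eq_zero_iff_eq_C] at h1
    rw [h1, aeval_C] at hπv
    apply hπ0
    rw [h1]
    have : C (coeff 0 π) = (0 : MvPolynomial (Fin m) k) := hπv
    rw [C_eq_zero.mp this, C_0]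
  let g : Fin m → MvPolynomial (Fin m) k := fun i => aeval v (pderiv i π)
  have hgf : ∀ j, mkDerivation k g (pderiv j f) = 0 := by
    intro j
    have h1 := chain (pderiv j) v π
    rw [hπv, map_zero] at h1
    rw [D_apply, h1]
    refine Finset.sum_congr rfl fun i _ => ?_
    rw [pderiv_comm']
  refine ⟨(d - 1) * (n - 1), g, ?_, fun i => (hπ.pderiv).aeval v hv, ?_, hgf⟩
  · intro hg
    apply hπ0
    refine const_of_pderiv hπ hn0 fun i => ?_
    by_contra h
    exact Nat.find_min hex (m := n - 1) (by omega) ⟨pderiv i π, hπ.pderiv, h, congrFun hg i⟩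
  · intro i
    change mkDerivation k g (aeval v (pderiv i π)) = 0
    rw [chain]
    refine Finset.sum_eq_zero fun j _ => ?_
    rw [show mkDerivation k g (v j) = 0 from hgf j, mul_zero]

theorem exists_second [CharZero k] (f : MvPolynomial (Fin m) k) (d : ℕ) (hd : 2 ≤ d)
    (hf : f.IsHomogeneous d) (c : Fin m → MvPolynomial (Fin m) k) (hc : c ≠ 0)
    (hD : ∀ j, mkDerivation k c (pderiv j f) = 0) :
    ∃ e, ∃ g : Fin m → MvPolynomial (Fin m) k, g ≠ 0 ∧ (∀ i, (g i).IsHomogeneous e) ∧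
      (∀ i, mkDerivation k g (g i) = 0) ∧ (∀ j, mkDerivation k g (pderiv j f) = 0) ∧
      (∀ q, Irreducible q → ∃ i, ¬ q ∣ g i) := by
  classical
  have hex := exists_first f d hd hf c hc hD
  obtain ⟨g, hg0, hgh, hgg, hgf⟩ := Nat.find_spec hex
  set e := Nat.find hex with he
  refine ⟨e, g, hg0, hgh, hgg, hgf, ?_⟩
  intro q hq
  by_contra hcon
  push Not at hcon
  choose h hh using hcon
  have hgeq : g = fun i => q * h i := funext hh
  have hq1 : q.totalDegree ≠ 0 := by
    intro h0
    rw [totalDegree_eq_zero_iff_eq_C] at h0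
    apply hq.not_isUnit
    rw [h0]
    apply IsUnit.map
    rw [isUnit_iff_ne_zero]
    intro h1
    rw [h1, C_0] at h0
    exact hq.ne_zero h0
  have hdeg : ∀ i, h i ≠ 0 → q.totalDegree + (h i).totalDegree = e := by
    intro i hi
    rw [← totalDegree_mul_of_isDomain hq.ne_zero hi, ← hh i]
    exact (hgh i).totalDegree (by rw [hh i]; exact mul_ne_zero hq.ne_zero hi)
  have hDh : ∀ p, mkDerivation k g p = 0 → mkDerivation k h p = 0 := by
    intro p hp
    rw [hgeq, D_smul] at hp
    exact (mul_eq_zero.mp hp).resolve_left hq.ne_zero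
  have hh0 : h ≠ 0 := by
    intro h1
    apply hg0
    rw [hgeq, h1]
    funext i; simp
  obtain ⟨i₀, hi₀⟩ := Function.ne_iff.mp hh0
  have := hdeg i₀ hi₀
  refine Nat.find_min hex (m := e - q.totalDegree) (by omega) ⟨h, hh0, ?_, ?_, ?_⟩
  · intro i
    by_cases hi : h i = 0
    · rw [hi]; exact isHomogeneous_zero _ _ _
    · have h1 : (h i).IsHomogeneous (h i).totalDegree := by
        apply hom_factor (b := q) (n := e)
        · rw [mul_comm, ← hh i]; exact hgh i
        · exact mul_ne_zero hi hq.ne_zero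
      rwa [show e - q.totalDegree = (h i).totalDegree by have := hdeg i hi; omega]
  · intro i
    by_cases hi : h i = 0
    · rw [hi, map_zero]
    · apply hDh
      apply D_of_E
      apply E_factor (b := q)
      · rw [mul_comm, ← hh i]; exact E_of_D hgg (hgg i)
      · exact mul_ne_zero hi hq.ne_zero
  · intro j
    exact hDh _ (hgf j)

end GN

namespace GN

variable {k : Type*} [Field k] {m : ℕ}

theorem zero_of_dvd {n : ℕ} {a q : MvPolynomial (Fin m) k} (hn : n ≠ 0) (ha : a.IsHomogeneous n)
    (ha0 : a ≠ 0) (hq : q.IsHomogeneous (n - 1)) (h : a ∣ q) : q = 0 := by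
  by_contra hq0
  obtain ⟨b, rfl⟩ := h
  have h1 := hq.totalDegree hq0
  have hb : b ≠ 0 := right_ne_zero_of_mul hq0
  rw [totalDegree_mul_of_isDomain ha0 hb, ha.totalDegree ha0] at h1
  omega

theorem line_case [CharZero k] (f : MvPolynomial (Fin m) k) {e : ℕ} (he : e ≠ 0)
    {a b : MvPolynomial (Fin m) k} (ha : a.IsHomogeneous e) (hb : b.IsHomogeneous e)
    (α β : Fin m → k) (h : Fin m → MvPolynomial (Fin m) k)
    (hh : ∀ i, h i = C (α i) * a + C (β i) * b) (h0 : h ≠ 0)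
    (hcop : ∀ q, Irreducible q → ∃ i, ¬ q ∣ h i)
    (hDj : ∀ j, mkDerivation k h (pderiv j f) = 0) (hDf : mkDerivation k h f = 0) :
    ∃ c : Fin m → k, c ≠ 0 ∧ ∑ i, c i • pderiv i f = 0 := by
  have hab0 : ¬ (a = 0 ∧ b = 0) := by
    rintro ⟨rfl, rfl⟩
    apply h0
    funext i
    rw [hh i]; simp
  have hrel : IsRelPrime a b := by
    apply WfDvdMonoid.isRelPrime_of_no_irreducible_factors hab0
    intro q hq hqa hqb
    obtain ⟨i, hi⟩ := hcop q hq
    apply hi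
    rw [hh i]
    exact dvd_add (Dvd.dvd.mul_left hqa _) (Dvd.dvd.mul_left hqb _)
  set F := ∑ i, C (α i) * pderiv i f with hF
  set G := ∑ i, C (β i) * pderiv i f with hG
  have h1 : a * F + b * G = 0 := by
    rw [← hDf, D_apply, hF, hG, Finset.mul_sum, Finset.mul_sum, ← Finset.sum_add_distrib]
    refine Finset.sum_congr rfl fun i _ => ?_
    rw [hh i]; ring
  have h2 : ∀ j, pderiv j a * F + pderiv j b * G = 0 := by
    intro j
    have e1 : a * pderiv j F + b * pderiv j G = 0 := by
      rw [← hDj j, D_apply, hF, hG, map_sum, map_sum, Finset.mul_sum, Finset.mul_sum,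
        ← Finset.sum_add_distrib]
      refine Finset.sum_congr rfl fun i _ => ?_
      rw [hh i, pderiv_C_mul, pderiv_C_mul, pderiv_comm' j i]
      ring
    have e2 := congrArg (pderiv j) h1
    rw [map_add, pderiv_mul, pderiv_mul, map_zero] at e2
    linear_combination e2 - e1
  by_cases hFG : F = 0 ∧ G = 0
  · by_cases hα : α = 0
    · refine ⟨β, ?_, ?_⟩
      · intro hβ
        apply h0
        funext i
        rw [hh i, hα, hβ]; simp
      · simp only [smul_eq_C_mul]; exact hFG.2
    · refine ⟨α, hα, ?_⟩
      simp only [smul_eq_C_mul]; exact hFG.1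
  · exfalso
    have h3 : ∀ j, a * pderiv j b = b * pderiv j a := by
      intro j
      by_cases hG0 : G = 0
      · have hF0 : F ≠ 0 := fun h => hFG ⟨h, hG0⟩
        have a0 : a = 0 := by
          rw [hG0, mul_zero, add_zero] at h1
          exact (mul_eq_zero.mp h1).resolve_right hF0
        rw [a0]; simp
      · apply mul_right_cancel₀ hG0
        linear_combination a * h2 j - pderiv j a * h1
    apply hab0
    constructor
    · by_contra ha0
      apply ha0
      refine const_of_pderiv ha he fun j => ?_
      refine zero_of_dvd he ha ha0 ha.pderiv ?_
      exact hrel.dvd_of_dvd_mul_left ⟨_, (h3 j).symm⟩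
    · by_contra hb0
      apply hb0
      refine const_of_pderiv hb he fun j => ?_
      refine zero_of_dvd he hb hb0 hb.pderiv ?_
      exact hrel.symm.dvd_of_dvd_mul_left ⟨_, h3 j⟩

theorem D_f [CharZero k] (f : MvPolynomial (Fin m) k) {d : ℕ} (hd : 2 ≤ d) (hf : f.IsHomogeneous d)
    (h : Fin m → MvPolynomial (Fin m) k)
    (hDj : ∀ j, mkDerivation k h (pderiv j f) = 0) : mkDerivation k h f = 0 := by
  have h1 := congrArg (mkDerivation k h) hf.sum_X_mul_pderiv
  rw [map_sum, map_nsmul] at h1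
  simp only [Derivation.leibniz, hDj, mul_zero, zero_add, mkDerivation_X, smul_eq_mul] at h1
  have h2 : ∑ i, pderiv i f * h i = mkDerivation k h f := by
    rw [D_apply]; exact Finset.sum_congr rfl fun i _ => mul_comm _ _
  rw [h2, nsmul_eq_mul] at h1
  have h3 : ((d - 1 : ℕ) : MvPolynomial (Fin m) k) * mkDerivation k h f = 0 := by
    rw [Nat.cast_sub (by omega)]
    push_cast
    linear_combination -h1
  refine (mul_eq_zero.mp h3).resolve_left ?_
  have : CharZero (MvPolynomial (Fin m) k) := inferInstance
  have : d - 1 ≠ 0 := by omega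
  exact_mod_cast this

theorem exists_irr {p : MvPolynomial (Fin m) k} (hp : p ≠ 0) (y : Fin m → k)
    (hy : eval y p = 0) : ∃ P, Irreducible P ∧ P ∣ p ∧ eval y P = 0 := by
  have := WfDvdMonoid.exists_factors p hp
  obtain ⟨s, hs, u, hu⟩ := this
  have h1 : eval y (s.prod * u) = 0 := by rw [hu]; exact hy
  rw [map_mul, map_multiset_prod] at h1
  have h2 := (mul_eq_zero.mp h1).resolve_right (IsUnit.ne_zero (IsUnit.map (eval y) u.isUnit))
  rw [Multiset.prod_eq_zero_iff, Multiset.mem_map] at h2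
  obtain ⟨P, hP, hP0⟩ := h2
  exact ⟨P, hs P hP, (Multiset.dvd_prod hP).trans ⟨u, hu.symm⟩, hP0⟩

end GN

namespace GN

variable {k : Type*} [Field k] {m : ℕ}

theorem finSucc_rename {n : ℕ} (B : MvPolynomial (Fin n) k) :
    finSuccEquiv k n (rename Fin.succ B) = Polynomial.C B := by
  induction B using MvPolynomial.induction_on with
  | C a => rw [rename_C, finSuccEquiv_apply]; simp
  | add p q hp hq => simp only [map_add, hp, hq]
  | mul_X p i hp => rw [map_mul, map_mul, hp, rename_X, finSuccEquiv_X_succ, map_mul]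

theorem split_zero {n : ℕ} (A : MvPolynomial (Fin (n + 1)) k) :
    ∃ A', A = X 0 * A' + rename Fin.succ ((finSuccEquiv k n A).coeff 0) := by
  refine ⟨(finSuccEquiv k n).symm (Polynomial.divX (finSuccEquiv k n A)), ?_⟩
  apply (finSuccEquiv k n).injective
  rw [map_add, map_mul, finSuccEquiv_X_zero, finSucc_rename, AlgEquiv.apply_symm_apply]
  exact (Polynomial.X_mul_divX_add _).symm

theorem irr_deg {q : MvPolynomial (Fin m) k} (hq : Irreducible q) : q.totalDegree ≠ 0 := by
  intro h0
  rw [totalDegree_eq_zero_iff_eq_C] at h0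
  apply hq.not_isUnit
  rw [h0]
  apply IsUnit.map
  rw [isUnit_iff_ne_zero]
  intro h1
  rw [h1, C_0] at h0
  exact hq.ne_zero h0

theorem key_dvd [IsAlgClosed k] {e : ℕ} (he : e ≠ 0) {u b c P : MvPolynomial (Fin m) k}
    (hu : u.IsHomogeneous e) (hb : b.IsHomogeneous e) (hc : c.IsHomogeneous e) (hu0 : u ≠ 0)
    (hP : Irreducible P) (hPu : P ∣ u) (hPb : ¬ P ∣ b)
    (hdep : ¬ AlgebraicIndependent k ![u, c, b]) : ∃ r : k, P ∣ c - C r * b := by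
  classical
  have hex := hom_relation he ![u, c, b] (by intro i; fin_cases i <;> assumption) hdep
  obtain ⟨A, hA, hA0, hAv⟩ := Nat.find_spec hex
  set N := Nat.find hex with hN
  obtain ⟨A', hA'⟩ := split_zero A
  set B := (finSuccEquiv k 2 A).coeff 0 with hB
  have hBhom : B.IsHomogeneous N := hA.finSuccEquiv_coeff_isHomogeneous 0 N (zero_add N)
  have hB0 : B ≠ 0 := by
    intro hB0
    rw [hB0, map_zero, add_zero] at hA'
    have hA'0 : A' ≠ 0 := by rintro rfl; exact hA0 (by rw [hA', mul_zero])
    have h1 : A'.IsHomogeneous A'.totalDegree := by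
      apply hom_factor (b := X 0) (n := N)
      · rw [mul_comm, ← hA']; exact hA
      · exact mul_ne_zero hA'0 (X_ne_zero _)
    have h2 := hA.totalDegree hA0
    rw [hA', totalDegree_mul_of_isDomain (X_ne_zero _) hA'0, totalDegree_X] at h2
    refine Nat.find_min hex (m := A'.totalDegree) (by omega) ⟨A', h1, hA'0, ?_⟩
    rw [hA', map_mul, aeval_X] at hAv
    exact (mul_eq_zero.mp hAv).resolve_left hu0
  have hPp : Prime P := hP.prime
  let I : Ideal (MvPolynomial (Fin m) k) := Ideal.span {P}
  have hI : I.IsPrime := (Ideal.span_singleton_prime hPp.ne_zero).mpr hPp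
  let q : MvPolynomial (Fin m) k →ₐ[k] (MvPolynomial (Fin m) k ⧸ I) := Ideal.Quotient.mkₐ k I
  have hq : ∀ x, q x = 0 ↔ P ∣ x := by
    intro x
    rw [← Ideal.mem_span_singleton]
    exact Ideal.Quotient.eq_zero_iff_mem
  have h3 : aeval ![q c, q b] B = 0 := by
    have h4 := congrArg q hAv
    rw [hA', map_add, map_mul, aeval_X, map_add, map_mul, map_zero, aeval_rename] at h4
    rw [show q (![u, c, b] 0) = 0 from (hq u).mpr hPu, zero_mul, zero_add, comp_aeval_apply] at h4
    rw [← h4]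
    congr 2
    funext i
    fin_cases i <;> rfl
  rcases binary hBhom hB0 (q c) (q b) h3 with h | ⟨r, hr⟩
  · exact absurd ((hq b).mp h) hPb
  · refine ⟨r, (hq _).mp ?_⟩
    rw [map_sub, hr, ← smul_eq_C_mul, map_smul, sub_self]

theorem E_eval (h : Fin m → MvPolynomial (Fin m) k) (p : MvPolynomial (Fin m) k) (y : Fin m → k)
    (s : k) : eval y (Polynomial.eval (C s) (E h p)) = eval (fun l => y l + s * eval y (h l)) p := by
  induction p using MvPolynomial.induction_on with
  | C a => rw [E_C]; simp
  | add p q hp hq => simp only [map_add, Polynomial.eval_add, hp, hq]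
  | mul_X p i hp => rw [map_mul, Polynomial.eval_mul, map_mul, hp, E_X]; simp; left; ring

theorem eval_aeval' {n : ℕ} (h : Fin n → MvPolynomial (Fin m) k) (p : MvPolynomial (Fin n) k)
    (y : Fin m → k) : eval y (aeval h p) = eval (fun l => eval y (h l)) p := by
  induction p using MvPolynomial.induction_on with
  | C a => simp
  | add p q hp hq => simp only [map_add, hp, hq]
  | mul_X p i hp => rw [map_mul, map_mul, hp]; simp

theorem claim [IsAlgClosed k] [CharZero k] {e : ℕ} (he : e ≠ 0)
    (h : Fin 4 → MvPolynomial (Fin 4) k) (h0 : h ≠ 0) (hh : ∀ i, (h i).IsHomogeneous e)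
    (hD : ∀ i, mkDerivation k h (h i) = 0) (hcop : ∀ q, Irreducible q → ∃ i, ¬ q ∣ h i)
    (y₀ z : Fin 4 → k) (hz : ∀ i, eval y₀ (h i) = z i)
    (hne : ∃ i j, C (z i) * h j ≠ C (z j) * h i)
    (y : Fin 4 → k) (s t : k) (i j : Fin 4) :
    z i * eval (fun l => t * eval y (h l) + s * z l) (h j) =
      z j * eval (fun l => t * eval y (h l) + s * z l) (h i) := by
  have hm : ∃ n, z n ≠ 0 := by
    by_contra hcon
    push Not at hcon
    obtain ⟨i, j, hij⟩ := hne
    apply hij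
    rw [hcon i, hcon j]; simp
  obtain ⟨n, hn⟩ := hm
  have hCn : (C (z n) : MvPolynomial (Fin 4) k) ≠ 0 := by simpa using hn
  let u : Fin 4 → MvPolynomial (Fin 4) k := fun i => C (z n) * h i - C (z i) * h n
  have huh : ∀ i, (u i).IsHomogeneous e := fun i =>
    ((hh i).C_mul _).sub ((hh n).C_mul _)
  have hui : ∃ a, u a ≠ 0 := by
    by_contra hcon
    push Not at hcon
    obtain ⟨i, j, hij⟩ := hne
    apply hij
    have h1 : C (z n) * h i - C (z i) * h n = 0 := hcon i
    have h2 : C (z n) * h j - C (z j) * h n = 0 := hcon j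
    apply mul_left_cancel₀ hCn
    linear_combination C (z i) * h2 - C (z j) * h1
  obtain ⟨a, ha⟩ := hui
  have huz : ∀ i, eval y₀ (u i) = 0 := by
    intro i
    simp only [u, map_sub, map_mul, eval_C, hz]
    ring
  have hEh : ∀ i, E h (h i) = Polynomial.C (h i) := fun i => E_of_D hD (hD i)
  have hDu : ∀ i, mkDerivation k h (u i) = 0 := by
    intro i
    simp only [u, map_sub, Derivation.leibniz, hD, derivation_C, smul_zero, add_zero, sub_zero]
  have hEu : ∀ i, E h (u i) = Polynomial.C (u i) := fun i => E_of_D hD (hDu i)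
  have hhh : ∀ i, aeval h (h i) = 0 := fun i => self_vanish (hEh i) he (hh i)
  obtain ⟨P, hP, hPu, hPy⟩ := exists_irr ha y₀ (huz a)
  have hPn : ¬ P ∣ h n := by
    rintro ⟨q, hq⟩
    apply hn
    rw [← hz, hq, map_mul, hPy, zero_mul]
  have hdvd : ∀ j, P ∣ u j := by
    intro j
    have hdep : ¬ AlgebraicIndependent k ![u a, u j, h n] := by
      have := dep_three (aeval h) h h0 hcop hhh
        ![C (z n) * X a - C (z a) * X n, C (z n) * X j - C (z j) * X n, X n]
      intro hind
      apply this
      convert hind using 1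
      funext l
      fin_cases l <;> simp [u, algebraMap_eq]
    obtain ⟨r, q, hr⟩ := key_dvd he (huh a) (hh n) (huh j) ha hP hPu hPn hdep
    have h1 := congrArg (eval y₀) hr
    rw [map_sub, map_mul, map_mul, huz, hPy, hz, eval_C, zero_mul, zero_sub, neg_eq_zero] at h1
    have hr0 : r = 0 := (mul_eq_zero.mp h1).resolve_right hn
    rw [hr0, C_0, zero_mul, sub_zero] at hr
    exact ⟨q, hr⟩
  obtain ⟨Q, hQ⟩ := hPu
  have hPQ0 : P * Q ≠ 0 := by rw [← hQ]; exact ha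
  have hEP : E h P = Polynomial.C P := by
    apply E_factor (b := Q)
    · rw [← hQ]; exact hEu a
    · exact hPQ0
  have hPhom : P.IsHomogeneous P.totalDegree := by
    apply hom_factor (b := Q) (n := e)
    · rw [← hQ]; exact huh a
    · exact hPQ0
  have hPd := irr_deg hP
  have hPvan := self_vanish hEP hPd hPhom
  have hDP := D_of_E hEP
  let c : Fin 4 → MvPolynomial (Fin 4) k := fun i => C (z i)
  have hDzP : mkDerivation k c P = 0 := by
    refine zero_of_dvd hPd hPhom hP.ne_zero ?_ ?_
    · rw [D_apply]
      apply IsHomogeneous.sum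
      intro i _
      exact (hPhom.pderiv).C_mul _
    · have h1 : P ∣ h n * mkDerivation k c P := by
        have h2 : h n * mkDerivation k c P = -∑ i, u i * pderiv i P := by
          have h3 : C (z n) * mkDerivation k h P = 0 := by rw [hDP, mul_zero]
          rw [eq_neg_iff_add_eq_zero, ← h3, D_apply, D_apply, Finset.mul_sum, Finset.mul_sum,
            ← Finset.sum_add_distrib]
          refine Finset.sum_congr rfl fun i _ => ?_
          simp only [u, c]
          ring
        rw [h2]
        apply (dvd_neg).mpr
        exact Finset.dvd_sum fun i _ => (hdvd i).mul_right _
      exact (hP.prime.dvd_or_dvd h1).resolve_left hPn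
  have hEz : E c P = Polynomial.C P := E_of_D (fun i => derivation_C _ _) hDzP
  set pt : Fin 4 → k := fun l => t * eval y (h l) + s * z l with hpt
  have hPpt : eval pt P = 0 := by
    have h1 := E_eval c P (fun l => t * eval y (h l)) s
    rw [hEz, Polynomial.eval_C] at h1
    simp only [c, eval_C] at h1
    rw [hpt, ← h1]
    have h2 := hom_scale hPhom t (fun l => eval y (h l))
    have h3 : ∀ w : Fin 4 → k, (aeval w P : k) = eval w P :=
      fun w => RingHom.congr_fun (coe_aeval_eq_eval w) P
    rw [h3, h3] at h2
    rw [h2, ← eval_aeval', hPvan, map_zero, mul_zero]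
  have hupt : ∀ j, z n * eval pt (h j) = z j * eval pt (h n) := by
    intro j
    obtain ⟨q, hq⟩ := hdvd j
    have h1 : eval pt (u j) = 0 := by rw [hq, map_mul, hPpt, zero_mul]
    simp only [u, map_sub, map_mul, eval_C] at h1
    linear_combination h1
  apply mul_left_cancel₀ hn
  linear_combination z i * hupt j - z j * hupt i

end GN

namespace GN

variable {k : Type*} [Field k] {m : ℕ}

/-- If `b + t z` , `u` , `v` are dependent in `R[t]` with `z` a nonzero constant,
then `u` , `v` are dependent in `R`. -/
theorem dep_two (b : MvPolynomial (Fin m) k) (z : k) (hz : z ≠ 0) (u v : MvPolynomial (Fin m) k)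
    (hdep : ¬ AlgebraicIndependent k
      ![Polynomial.C b + Polynomial.C (C z) * Polynomial.X, Polynomial.C u, Polynomial.C v]) :
    ¬ AlgebraicIndependent k ![v, u] := by
  intro hind0
  have hind : AlgebraicIndependent k ![u, v] := by
    have := (algebraicIndependent_equiv (R := k) (f := ![v, u]) (Equiv.swap (0 : Fin 2) 1)).mpr hind0
    convert this using 1
    funext i
    fin_cases i <;> simp
  apply hdep
  rw [algebraicIndependent_iff]
  intro A hA
  rw [algebraicIndependent_iff_injective_aeval] at hind
  let ψ := (aeval ![u, v] : MvPolynomial (Fin 2) k →ₐ[k] MvPolynomial (Fin m) k)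
  let L : Polynomial (MvPolynomial (Fin m) k) := Polynomial.C b + Polynomial.C (C z) * Polynomial.X
  have key : ∀ A : MvPolynomial (Fin 3) k, aeval ![L, Polynomial.C u, Polynomial.C v] A
      = ((finSuccEquiv k 2 A).map (ψ : MvPolynomial (Fin 2) k →+* MvPolynomial (Fin m) k)).comp L := by
    intro A
    induction A using MvPolynomial.induction_on with
    | C a =>
      rw [finSuccEquiv_apply]; simp [ψ]
    | add p q hp hq => simp only [map_add, hp, hq, Polynomial.map_add, Polynomial.add_comp]
    | mul_X p i hp =>
      rw [map_mul, map_mul, hp, Polynomial.map_mul, Polynomial.mul_comp, aeval_X]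
      congr 1
      refine Fin.cases ?_ (fun j => ?_) i
      · rw [finSuccEquiv_X_zero]; simp
      · rw [finSuccEquiv_X_succ]
        fin_cases j <;> simp [ψ]
  have h1 := key A
  rw [hA, eq_comm, Polynomial.comp_eq_zero_iff] at h1
  rcases h1 with h1 | ⟨_, h1⟩
  · rw [Polynomial.map_eq_zero_iff (by exact hind)] at h1
    exact (finSuccEquiv k 2).injective (h1.trans (map_zero _).symm)
  · exfalso
    have h2 := congrArg (fun p => Polynomial.coeff p 1) h1
    simp [L, Polynomial.coeff_C] at h2
    exact hz h2

theorem main_case [IsAlgClosed k] [CharZero k] (f : MvPolynomial (Fin 4) k) {e : ℕ} (he : e ≠ 0)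
    (h : Fin 4 → MvPolynomial (Fin 4) k) (h0 : h ≠ 0) (hh : ∀ i, (h i).IsHomogeneous e)
    (hD : ∀ i, mkDerivation k h (h i) = 0) (hcop : ∀ q, Irreducible q → ∃ i, ¬ q ∣ h i)
    (hDj : ∀ j, mkDerivation k h (pderiv j f) = 0) (hDf : mkDerivation k h f = 0) :
    ∃ c : Fin 4 → k, c ≠ 0 ∧ ∑ i, c i • pderiv i f = 0 := by
  have hinf : Infinite k := inferInstance
  obtain ⟨n, hn⟩ := Function.ne_iff.mp h0
  have hy : ∃ y₀, eval y₀ (h n) ≠ 0 := by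
    by_contra hcon
    push Not at hcon
    exact hn (MvPolynomial.funext fun y => by rw [hcon y]; simp)
  obtain ⟨y₀, hy₀⟩ := hy
  let z : Fin 4 → k := fun i => eval y₀ (h i)
  have hzn : z n ≠ 0 := hy₀
  have hCz : (C (z n)⁻¹ : MvPolynomial (Fin 4) k) * C (z n) = 1 := by
    rw [← C_mul, inv_mul_cancel₀ hzn, C_1]
  let u : Fin 4 → MvPolynomial (Fin 4) k := fun i => C (z n) * h i - C (z i) * h n
  have hud : ∀ i, u i = C (z n) * h i - C (z i) * h n := fun i => rfl
  have huh : ∀ i, (u i).IsHomogeneous e := fun i => ((hh i).C_mul _).sub ((hh n).C_mul _)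
  by_cases hall : ∀ i, u i = 0
  · refine line_case f he (hh n) (hh n) (fun i => (z n)⁻¹ * z i) 0 h ?_ h0 hcop hDj hDf
    intro i
    have h1 := hall i
    rw [hud] at h1
    simp only [C_mul, Pi.zero_apply, C_0, zero_mul, add_zero]
    linear_combination C (z n)⁻¹ * h1 - h i * hCz
  push Not at hall
  obtain ⟨a, ha⟩ := hall
  have hne : ∃ i j, C (z i) * h j ≠ C (z j) * h i := by
    refine ⟨n, a, fun h1 => ha ?_⟩
    rw [hud, h1, sub_self]
  have hpt : ∀ (y : Fin 4 → k) (s : k) (j : Fin 4), eval y (u a) ≠ 0 →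
      eval (fun l => eval y (h l) + s * z l) (h j) = 0 := by
    intro y s j hya
    let w : Fin 4 → k := fun i => eval y (h i)
    have hua : eval y (u a) = z n * w a - z a * w n := by
      simp only [hud, map_sub, map_mul, eval_C, w]
    have c1 := fun i j => claim he h h0 hh hD hcop y₀ z (fun _ => rfl) hne y s 1 i j
    have hne' : ∃ i j, C (w i) * h j ≠ C (w j) * h i := by
      by_contra hcon
      push Not at hcon
      apply hya
      have h1 := congrArg (eval y₀) (hcon a n)
      simp only [map_mul, eval_C] at h1
      rw [hua]
      change w a * z n = w n * z a at h1
      linear_combination h1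
    have c2 := fun i j => claim he h h0 hh hD hcop y w (fun _ => rfl) hne' y₀ 1 s i j
    have e1 : (fun l => 1 * eval y (h l) + s * z l) = fun l => eval y (h l) + s * z l := by
      funext l; ring
    have e2 : (fun l => s * eval y₀ (h l) + 1 * w l) = fun l => eval y (h l) + s * z l := by
      funext l; simp only [w, z]; ring
    simp only [e1] at c1
    simp only [e2] at c2
    set v : Fin 4 → k := fun i => eval (fun l => eval y (h l) + s * z l) (h i) with hv
    change v j = 0
    have c1' : ∀ i j, z i * v j = z j * v i := c1
    have c2' : ∀ i j, w i * v j = w j * v i := c2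
    have h3 : eval y (u a) * v j = 0 := by
      rw [hua]
      linear_combination w a * c1' n j - w n * c1' a j + z j * c2' a n
    exact (mul_eq_zero.mp h3).resolve_left hya
  let φ : MvPolynomial (Fin 4) k →ₐ[k] Polynomial (MvPolynomial (Fin 4) k) :=
    aeval (fun l => Polynomial.C (h l) + Polynomial.C (C (z l)) * Polynomial.X)
  have hφe : ∀ (p : MvPolynomial (Fin 4) k) (y : Fin 4 → k) (s : k),
      eval y (Polynomial.eval (C s) (φ p)) = eval (fun l => eval y (h l) + s * z l) p := by
    intro p y s
    induction p using MvPolynomial.induction_on with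
    | C a => simp [φ, Polynomial.algebraMap_apply]
    | add p q hp hq => simp only [map_add, Polynomial.eval_add, hp, hq]
    | mul_X p i hp =>
      rw [map_mul, Polynomial.eval_mul, map_mul, hp, map_mul]
      simp [φ]
      left; ring
  have hφ : ∀ j, φ (h j) = 0 := by
    intro j
    have h1 : ∀ s : k, Polynomial.eval (C s) (φ (h j)) = 0 := by
      intro s
      have h2 : u a * Polynomial.eval (C s) (φ (h j)) = 0 := by
        apply MvPolynomial.funext
        intro y
        rw [map_mul, hφe, map_zero]
        by_cases hya : eval y (u a) = 0
        · rw [hya, zero_mul]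
        · rw [hpt y s j hya, mul_zero]
      exact (mul_eq_zero.mp h2).resolve_left ha
    apply Polynomial.eq_zero_of_infinite_isRoot
    refine Set.Infinite.mono (s := Set.range (C : k → MvPolynomial (Fin 4) k)) ?_ ?_
    · rintro _ ⟨s, rfl⟩
      exact h1 s
    · exact Set.infinite_range_of_injective (C_injective _ _)
  have hr : ∀ j, ∃ r : k, u j = r • u a := by
    intro j
    have hdep : ¬ AlgebraicIndependent k ![u j, u a] := by
      apply dep_two (h n) (z n) hzn
      have := dep_three φ h h0 hcop hφ
        ![X n, C (z n) * X a - C (z a) * X n, C (z n) * X j - C (z j) * X n]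
      intro hind
      apply this
      convert hind using 1
      funext l
      have hφC : ∀ c : k, φ (C c) = Polynomial.C (C c) := by
        intro c; simp [φ, Polynomial.algebraMap_apply]
      have hφX : ∀ i, φ (X i) = Polynomial.C (h i) + Polynomial.C (C (z i)) * Polynomial.X := by
        intro i; simp [φ]
      have hφu : ∀ i, φ (C (z n) * X i - C (z i) * X n) = Polynomial.C (u i) := by
        intro i
        rw [map_sub, map_mul, map_mul, hφC, hφC, hφX, hφX, hud, map_sub, map_mul, map_mul]
        ring
      fin_cases l
      · exact hφX n
      · exact hφu a
      · exact hφu j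
    obtain ⟨N, B, hB, hB0, hBv⟩ := hom_relation he ![u j, u a]
      (by intro i; fin_cases i; exacts [huh j, huh a]) hdep
    exact (binary hB hB0 (u j) (u a) hBv).resolve_left ha
  choose r hr using hr
  refine line_case f he (hh n) (huh a) (fun i => (z n)⁻¹ * z i) (fun i => (z n)⁻¹ * r i) h ?_ h0
    hcop hDj hDf
  intro i
  have h1 := hr i
  rw [hud i, smul_eq_C_mul] at h1
  simp only [C_mul]
  linear_combination C (z n)⁻¹ * h1 - h i * hCz

theorem forward [IsAlgClosed k] [CharZero k] (f : MvPolynomial (Fin 4) k) (d : ℕ) (hd : 2 ≤ d)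
    (hf : f.IsHomogeneous d) (c : Fin 4 → MvPolynomial (Fin 4) k) (hc : c ≠ 0)
    (hD : ∀ j, mkDerivation k c (pderiv j f) = 0) :
    ∃ c : Fin 4 → k, c ≠ 0 ∧ ∑ i, c i • pderiv i f = 0 := by
  obtain ⟨e, h, h0, hh, hDh, hDj, hcop⟩ := exists_second f d hd hf c hc hD
  have hDf := D_f f hd hf h hDj
  by_cases he : e = 0
  · have h1 : ∀ i, h i = C (coeff 0 (h i)) := by
      intro i
      rw [← totalDegree_eq_zero_iff_eq_C]
      by_cases hi : h i = 0
      · rw [hi, totalDegree_zero]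
      · rw [(hh i).totalDegree hi, he]
    refine ⟨fun i => coeff 0 (h i), ?_, ?_⟩
    · intro h2
      apply h0
      funext i
      rw [h1 i, show coeff 0 (h i) = 0 from congrFun h2 i, C_0]; rfl
    · rw [← hDf, D_apply]
      refine Finset.sum_congr rfl fun i _ => ?_
      rw [smul_eq_C_mul, ← h1 i]
  · exact main_case f he h h0 hh hDh hcop hDj hDf

end GN

/-- Hesse's claim holds in `ℙ³`: for a squarefree homogeneous polynomial `f` of degree
`d ≥ 3` in four variables over an algebraically closed field of characteristic zero,
the Hessian of `f` vanishes identically iff the partial derivatives of `f` are linearly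
dependent, i.e. iff `V(f)` is a cone. -/
theorem stmt0 {k : Type*} [Field k] [IsAlgClosed k] [CharZero k]
    (f : MvPolynomial (Fin 4) k) (d : ℕ) (hd : 3 ≤ d)
    (hsf : Squarefree f) (hhom : f.IsHomogeneous d) :
    hessianDet f = 0 ↔
      ∃ c : Fin 4 → k, c ≠ 0 ∧ ∑ i, c i • pderiv i f = 0 := by
  constructor
  · intro h
    obtain ⟨c, hc, hM⟩ := Matrix.exists_vecMul_eq_zero_iff.mpr h
    refine GN.forward f d (by omega) hhom c hc fun j => ?_
    rw [GN.D_apply]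
    exact congrFun hM j
  · rintro ⟨c, hc, hs⟩
    refine Matrix.exists_vecMul_eq_zero_iff.mp ⟨fun i => C (c i), ?_, ?_⟩
    · intro h
      apply hc
      funext i
      have : (C (c i) : MvPolynomial (Fin 4) k) = 0 := congrFun h i
      simpa using this
    · funext j
      have h1 := congrArg (pderiv j) hs
      rw [map_sum, map_zero] at h1
      rw [Pi.zero_apply, ← h1]
      change ∑ i, C (c i) * pderiv i (pderiv j f) = _
      refine Finset.sum_congr rfl fun i _ => ?_
      rw [smul_eq_C_mul, pderiv_C_mul, GN.pderiv_comm' j i]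
end

section
/- Let k be an algebraically closed field of characteristic zero and let f ∈ k[x_0, x_1, x_2] be a squarefree homogeneous polynomial of degree d ≥ 2. Then the Hessian polynomial h_f is identically zero if and only if there exist a nonzero point p ∈ k^3 and homogeneous linear forms ℓ_1,…,ℓ_d ∈ k[x_0, x_1, x_2], pairwise non-proportional, each vanishing at p, such that f = ℓ_1·ℓ_2·⋯·ℓ_d; that is, if and only if V(f) ⊂ P^2 consists of d distinct lines through a common point (a cone). -/
open MvPolynomial

lemma chain_rule {k S : Type*} [CommRing k] [CommRing S] [Algebra k S] {n : ℕ}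
    (D : Derivation k S S) (g : Fin n → S) (u : MvPolynomial (Fin n) k) :
    D (aeval g u) = ∑ i, aeval g (pderiv i u) * D (g i) := by
  induction u using MvPolynomial.induction_on with
  | C a => simp
  | add p q hp hq => simp [hp, hq, add_mul, Finset.sum_add_distrib]
  | mul_X p j hp =>
    simp only [map_mul, aeval_X, Derivation.leibniz, hp, smul_eq_mul, map_add, pderiv_X,
      add_mul, Finset.sum_add_distrib, Finset.mul_sum]
    congr 1
    · simp [Pi.single_apply]
    · refine Finset.sum_congr rfl fun i _ => by ring

lemma scale_hom {k S : Type*} [CommRing k] [CommRing S] [Algebra k S] {n m : ℕ}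
    (s : S) (g : Fin n → S) (u : MvPolynomial (Fin n) k) (hu : u.IsHomogeneous m) :
    aeval (fun i => s * g i) u = s ^ m * aeval g u := by
  simp only [aeval_def, eval₂_eq', Finset.mul_sum]
  refine Finset.sum_congr rfl fun e he => ?_
  have h1 : ∑ i, e i = m := by
    have := hu.degree_eq_sum_deg_support he
    rw [← Finsupp.degree_eq_sum]; exact this.symm
  simp only [mul_pow, Finset.prod_mul_distrib, Finset.prod_pow_eq_pow_sum, h1]
  ring

lemma top_coeff {k S : Type*} [CommRing k] [CommRing S] [Algebra k S] {n m : ℕ}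
    (x h : Fin n → S) (u : MvPolynomial (Fin n) k) (hu : u.IsHomogeneous m) :
    (aeval (fun i => Polynomial.C (x i) + Polynomial.X * Polynomial.C (h i)) u).coeff m
      = aeval h u := by
  simp only [aeval_def, eval₂_eq', Polynomial.finsetSum_coeff]
  refine Finset.sum_congr rfl fun e he => ?_
  have h1 : ∑ i, e i = m := by
    have := hu.degree_eq_sum_deg_support he
    rw [← Finsupp.degree_eq_sum]; exact this.symm
  rw [Polynomial.algebraMap_apply, Polynomial.coeff_C_mul]
  congr 1
  have key : ∀ s : Finset (Fin n), 
      (∏ i ∈ s, (Polynomial.C (x i) + Polynomial.X * Polynomial.C (h i)) ^ e i).natDegree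
        ≤ ∑ i ∈ s, e i ∧
      (∏ i ∈ s, (Polynomial.C (x i) + Polynomial.X * Polynomial.C (h i)) ^ e i).coeff
        (∑ i ∈ s, e i) = ∏ i ∈ s, h i ^ e i := by
    intro s
    have hb : ∀ i, (Polynomial.C (x i) + Polynomial.X * Polynomial.C (h i)).natDegree ≤ 1 := by
      intro i; rw [add_comm, mul_comm]; exact Polynomial.natDegree_linear_le
    have hp : ∀ i, ((Polynomial.C (x i) + Polynomial.X * Polynomial.C (h i)) ^ e i).natDegree
        ≤ e i := by
      intro i
      simpa using Polynomial.natDegree_pow_le_of_le (e i) (hb i)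
    have hc : ∀ i, ((Polynomial.C (x i) + Polynomial.X * Polynomial.C (h i)) ^ e i).coeff (e i)
        = h i ^ e i := by
      intro i
      have := Polynomial.coeff_pow_of_natDegree_le (m := e i) (hb i)
      simpa using this
    classical
    induction s using Finset.induction_on with
    | empty => simp
    | insert a s ha ih =>
      rw [Finset.prod_insert ha, Finset.sum_insert ha, Finset.prod_insert ha]
      refine ⟨Polynomial.natDegree_mul_le_of_le (hp a) ih.1, ?_⟩
      rw [Polynomial.coeff_mul_add_eq_of_natDegree_le (hp a) ih.1, hc, ih.2]
  rw [← h1]; exact (key _).2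

lemma taylor_coeff {k : Type*} [Field k] {n : ℕ}
    (h : Fin n → MvPolynomial (Fin n) k) (hh : ∀ i, mkDerivation k h (h i) = 0)
    (u : MvPolynomial (Fin n) k) : ∀ m : ℕ,
    ((m : MvPolynomial (Fin n) k) + 1) *
      (aeval (fun i => Polynomial.C (X i) + Polynomial.X * Polynomial.C (h i)) u).coeff (m + 1)
      = mkDerivation k h
       ((aeval (fun i => Polynomial.C (X i) + Polynomial.X * Polynomial.C (h i)) u).coeff m) := by
  induction u using MvPolynomial.induction_on with
  | C a =>
    intro m
    rw [← algebraMap_eq, AlgHom.commutes, Polynomial.algebraMap_apply]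
    rcases m with _ | m <;> simp [Polynomial.coeff_C]
  | add p q hp hq => intro m; rw [map_add, Polynomial.coeff_add, Polynomial.coeff_add, map_add, mul_add, hp, hq]
  | mul_X p j hp =>
    intro m
    simp only [map_mul, aeval_X, mul_add]
    rw [← mul_assoc, mul_comm _ Polynomial.X, mul_assoc]
    rcases m with _ | m
    · have := hp 0
      simp at this ⊢
      rw [this]; ring
    · have h1 := hp (m+1)
      have h2 := hp m
      simp only [Polynomial.coeff_add, Polynomial.coeff_X_mul, Polynomial.coeff_mul_C, map_add,
        Derivation.leibniz, mkDerivation_X, hh, smul_eq_mul, ← h1, ← h2]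
      push_cast
      ring

lemma taylor_zero {k : Type*} [Field k] {n : ℕ}
    (h : Fin n → MvPolynomial (Fin n) k) (u : MvPolynomial (Fin n) k) :
    (aeval (fun i => Polynomial.C (X i) + Polynomial.X * Polynomial.C (h i)) u).coeff 0 = u := by
  rw [Polynomial.coeff_zero_eq_aeval_zero]
  have : ((Polynomial.aeval (0 : MvPolynomial (Fin n) k)).restrictScalars k).comp
     (aeval (fun i => Polynomial.C (X i) + Polynomial.X * Polynomial.C (h i))) =
     AlgHom.id k _ := by
    ext i; simp
  exact DFunLike.congr_fun this u

lemma taylor {k : Type*} [Field k] [CharZero k] {n : ℕ}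
    (h : Fin n → MvPolynomial (Fin n) k) (hh : ∀ i, mkDerivation k h (h i) = 0)
    (u : MvPolynomial (Fin n) k) (hu : mkDerivation k h u = 0) :
    aeval (fun i => Polynomial.C (X i) + Polynomial.X * Polynomial.C (h i)) u
      = Polynomial.C u := by
  have h0 := taylor_zero h u
  have h1 : ∀ m, (aeval (fun i => Polynomial.C (X i) + Polynomial.X * Polynomial.C (h i)) u).coeff
      (m+1) = 0 := by
    intro m
    have hm : ((m : MvPolynomial (Fin n) k) + 1) ≠ 0 := by exact_mod_cast Nat.succ_ne_zero m
    have ht := taylor_coeff h hh u m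
    induction m with
    | zero => rw [h0, hu] at ht; exact (mul_eq_zero.mp ht).resolve_left hm
    | succ m ih =>
      rw [ih (by exact_mod_cast Nat.succ_ne_zero m) (taylor_coeff h hh u m), map_zero] at ht
      exact (mul_eq_zero.mp ht).resolve_left hm
  ext1 m
  rcases m with _ | m
  · rw [h0, Polynomial.coeff_C_zero]
  · rw [h1]; simp

/-- constants -/
lemma eq_C_of_pderiv {k : Type*} [Field k] [CharZero k] {n : ℕ}
    (u : MvPolynomial (Fin n) k) (hu : ∀ i, pderiv i u = 0) : u = C (coeff 0 u) := by
  ext m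
  rw [coeff_C]
  split_ifs with hm
  · rw [hm]
  · obtain ⟨i, hi⟩ : ∃ i, m i ≠ 0 := by
      by_contra! hc; exact hm (by ext i; simp [hc i])
    have := coeff_pderiv (i := i) u (m - Finsupp.single i 1)
    rw [hu i] at this
    have h2 : m - Finsupp.single i 1 + Finsupp.single i 1 = m := by
      apply tsub_add_cancel_of_le
      simpa [Nat.one_le_iff_ne_zero] using hi
    rw [h2] at this
    simp only [coeff_zero] at this
    exact (mul_eq_zero.mp this.symm).resolve_right (Nat.cast_add_one_ne_zero _)

lemma totalDegree_pderiv_lt' {k : Type*} [Field k] {n : ℕ}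
    (u : MvPolynomial (Fin n) k) (i : Fin n) (hu : pderiv i u ≠ 0) :
    (pderiv i u).totalDegree < u.totalDegree := by
  obtain ⟨m, hm, hd⟩ : ∃ m ∈ (pderiv i u).support, (pderiv i u).totalDegree = m.degree := by
    have := Finset.exists_mem_eq_sup (pderiv i u).support (support_nonempty.mpr hu)
      (fun m => m.degree)
    rw [totalDegree_eq]
    simpa [Finsupp.degree, Finsupp.card_toMultiset, Finsupp.sum] using! this
  rw [hd]
  rw [mem_support_iff, coeff_pderiv] at hm
  have := le_totalDegree (mem_support_iff.mpr (left_ne_zero_of_mul hm))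
  change (m + Finsupp.single i 1).degree ≤ _ at this
  rw [map_add, Finsupp.degree_single] at this
  omega

lemma pderiv_comm' {k : Type*} [Field k] {n : ℕ} (i j : Fin n) (u : MvPolynomial (Fin n) k) :
    pderiv i (pderiv j u) = pderiv j (pderiv i u) := by
  ext m
  simp only [coeff_pderiv]
  rw [add_right_comm]
  by_cases hij : i = j
  · subst hij; rfl
  · simp [hij, Ne.symm hij]; ring

lemma deriv_zero_of_algebraic {k S : Type*} [Field k] [CharZero k] [CommRing S] [IsDomain S]
    [Algebra k S] (A : Subalgebra k S) (D : Derivation k S S) (hA : ∀ a ∈ A, D a = 0)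
    (x : S) (hx : IsAlgebraic A x) : D x = 0 := by
  let D' : Derivation A S S :=
    { toFun := D
      map_add' := D.map_add
      map_smul' := fun a s => by
        simp [Algebra.smul_def, D.leibniz, hA a a.2, show algebraMap A S a = (a : S) from rfl]
      map_one_eq_zero' := by simp
      leibniz' := fun a b => by simp }
  have hD' : ∀ y, D' y = D y := fun y => rfl
  by_contra hne
  have hinj : Function.Injective (algebraMap A S) := Subtype.val_injective
  have : ∀ n : ℕ, ∀ p : Polynomial A, p ≠ 0 → Polynomial.aeval x p = 0 → p.natDegree ≤ n →
      False := by
    intro n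
    induction n with
    | zero =>
      intro p hp0 hp hn
      rw [Polynomial.eq_C_of_natDegree_le_zero hn] at hp hp0
      simp only [Polynomial.aeval_C] at hp
      apply hp0
      rw [(map_eq_zero_iff _ hinj).mp hp, Polynomial.C_0]
    | succ n ih =>
      intro p hp0 hp hn
      by_cases hd : p.natDegree = 0
      · rw [Polynomial.eq_C_of_natDegree_eq_zero hd] at hp hp0
        simp only [Polynomial.aeval_C] at hp
        apply hp0
        rw [(map_eq_zero_iff _ hinj).mp hp, Polynomial.C_0]
      have h1 := D'.map_aeval p x
      rw [hp, map_zero, hD', smul_eq_mul] at h1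
      have h2 := (mul_eq_zero.mp h1.symm).resolve_right hne
      refine ih _ ?_ h2 ?_
      · intro h3
        have : CharZero A := charZero_of_injective_algebraMap (FaithfulSMul.algebraMap_injective k A)
        exact hd (Polynomial.derivative_eq_zero.mp h3)
      · have := Polynomial.natDegree_derivative_lt hd
        omega
  obtain ⟨p, hp0, hp⟩ := hx
  exact this _ p hp0 hp le_rfl

lemma alg_dep {k : Type*} [Field k] [CharZero k] {n : ℕ}
    (g v : Fin n → MvPolynomial (Fin n) k) (hv : v ≠ 0)
    (hD : ∀ j, mkDerivation k v (g j) = 0) :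
    ¬ AlgebraicIndependent k g := by
  intro hg
  have hb : IsTranscendenceBasis k g := by
    apply hg.isTranscendenceBasis_of_lift_trdeg_le_of_finite
    rw [MvPolynomial.trdeg_of_isDomain]; simp
  have halg := hb.isAlgebraic
  apply hv
  ext1 i
  have := deriv_zero_of_algebraic (Algebra.adjoin k (Set.range g)) (mkDerivation k v) ?_ (X i)
    (halg.isAlgebraic _)
  · simpa using this
  · intro a ha
    induction ha using Algebra.adjoin_induction with
    | mem x hx => obtain ⟨j, rfl⟩ := hx; exact hD j
    | algebraMap r => simp
    | add x y _ _ hx hy => simp [hx, hy]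
    | mul x y _ _ hx hy => simp [hx, hy]

lemma mkDer_apply {k : Type*} [Field k] {n : ℕ} (h : Fin n → MvPolynomial (Fin n) k)
    (u : MvPolynomial (Fin n) k) : mkDerivation k h u = ∑ i, pderiv i u * h i := by
  have := chain_rule (mkDerivation k h) (fun i => X i) u
  simpa using this

lemma exists_h {k : Type*} [Field k] [CharZero k] {n : ℕ}
    (f : MvPolynomial (Fin n) k)
    (hdep : ¬ AlgebraicIndependent k (fun i => pderiv i f)) :
    ∃ h : Fin n → MvPolynomial (Fin n) k, h ≠ 0 ∧ (∀ j, mkDerivation k h (pderiv j f) = 0) ∧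
      ∀ i, mkDerivation k h (h i) = 0 := by
  classical
  rw [algebraicIndependent_iff] at hdep
  push Not at hdep
  have hex : ∃ N : ℕ, ∃ p : MvPolynomial (Fin n) k, aeval (fun i => pderiv i f) p = 0 ∧ p ≠ 0 ∧
    p.totalDegree = N := by
    obtain ⟨p, h1, h2⟩ := hdep
    exact ⟨_, p, h1, h2, rfl⟩
  obtain ⟨p, h1, h2, h3⟩ := Nat.find_spec hex
  have hmin : ∀ q : MvPolynomial (Fin n) k, q.totalDegree < p.totalDegree →
      aeval (fun i => pderiv i f) q = 0 → q = 0 := by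
    intro q hq h0
    by_contra hne
    exact Nat.find_min hex (h3 ▸ hq) ⟨q, h0, hne, rfl⟩
  have hf : ∀ j, mkDerivation k (fun i => aeval (fun i => pderiv i f) (pderiv i p)) (pderiv j f)
      = 0 := by
    intro j
    have := chain_rule (pderiv j) (fun i => pderiv i f) p
    rw [h1, map_zero] at this
    rw [mkDer_apply, this]
    refine Finset.sum_congr rfl fun i _ => ?_
    rw [mul_comm]
    rw [pderiv_comm']
  refine ⟨fun i => aeval (fun i => pderiv i f) (pderiv i p), ?_, hf, ?_⟩
  · intro h0
    have hz : ∀ i, pderiv i p = 0 := by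
      intro i
      by_contra hne
      exact hne (hmin _ (totalDegree_pderiv_lt' p i hne) (congrFun h0 i))
    have hp := eq_C_of_pderiv p hz
    rw [hp] at h1 h2
    rw [aeval_C, algebraMap_eq, C_eq_zero] at h1
    simp [h1] at h2
  · intro i
    rw [chain_rule]
    simp only [hf, mul_zero, Finset.sum_const_zero]

/-- elimination -/
lemma elim {A S : Type*} [CommRing A] [IsDomain A] [UniqueFactorizationMonoid A]
    [CommRing S] (φ : Polynomial A →+* S) (p q : Polynomial A) (hp : Irreducible p)
    (hpq : ¬ p ∣ q) (h1 : φ p = 0) (h2 : φ q = 0) :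
    ∃ r : A, r ≠ 0 ∧ φ (Polynomial.C r) = 0 := by
  classical
  by_cases hd : p.natDegree = 0
  · rw [Polynomial.eq_C_of_natDegree_eq_zero hd] at h1
    refine ⟨_, fun h0 => ?_, h1⟩
    apply hp.ne_zero
    rw [Polynomial.eq_C_of_natDegree_eq_zero hd, h0, Polynomial.C_0]
  have hprim : p.IsPrimitive := hp.isPrimitive hd
  let K := FractionRing A
  have hirr : Irreducible (p.map (algebraMap A K)) :=
    (hprim.irreducible_iff_irreducible_map_fraction_map (K := K)).mp hp
  have hnd : ¬ p.map (algebraMap A K) ∣ q.map (algebraMap A K) := fun h =>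
    hpq (hprim.dvd_of_fraction_map_dvd_fraction_map (K := K) h)
  obtain ⟨a, b, hab⟩ := (hirr.coprime_iff_not_dvd).mpr hnd
  obtain ⟨s, hs, hs'⟩ := IsLocalization.integerNormalization_spec (nonZeroDivisors A) a
  obtain ⟨t, ht, ht'⟩ := IsLocalization.integerNormalization_spec (nonZeroDivisors A) b
  set a' := IsLocalization.integerNormalization (nonZeroDivisors A) a
  set b' := IsLocalization.integerNormalization (nonZeroDivisors A) b
  refine ⟨s * t, mul_ne_zero (nonZeroDivisors.ne_zero hs) (nonZeroDivisors.ne_zero ht), ?_⟩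
  have key : Polynomial.C (s * t) = Polynomial.C t * a' * p + Polynomial.C s * b' * q := by
    apply Polynomial.map_injective (algebraMap A K) (IsFractionRing.injective A K)
    simp only [Polynomial.map_add, Polynomial.map_mul, hs', ht', Polynomial.map_C, map_mul,
      Algebra.smul_def, Polynomial.algebraMap_apply]
    linear_combination (-(Polynomial.C ((algebraMap A K) s) * Polynomial.C ((algebraMap A K) t))) * hab
  rw [key]; simp [h1, h2]

/-- no common factor of the partials -/
lemma no_common {k : Type*} [Field k] [CharZero k] {n : ℕ}
    (f : MvPolynomial (Fin n) k) (d : ℕ) (hd : d ≠ 0) (hsf : Squarefree f)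
    (hhom : f.IsHomogeneous d) (g : MvPolynomial (Fin n) k) (hg : Irreducible g)
    (hdvd : ∀ i, g ∣ pderiv i f) : False := by
  have hf : g ∣ f := by
    have h1 : g ∣ d • f := by
      rw [← hhom.sum_X_mul_pderiv]
      exact Finset.dvd_sum fun i _ => (hdvd i).mul_left _
    rw [nsmul_eq_mul, ← map_natCast (C : k →+* MvPolynomial (Fin n) k)] at h1
    have hu : IsUnit (C (d : k) : MvPolynomial (Fin n) k) :=
      (IsUnit.mk0 _ (Nat.cast_ne_zero.mpr hd)).map C
    exact (hu.dvd_mul_left).mp h1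
  obtain ⟨r, rfl⟩ := hf
  have hr : ¬ g ∣ r := by
    rintro ⟨s, rfl⟩
    exact hg.not_isUnit (hsf g ⟨s, by ring⟩)
  have hz : ∀ i, pderiv i g = 0 := by
    intro i
    have h1 := hdvd i
    rw [pderiv_mul] at h1
    have h2 : g ∣ pderiv i g * r := (dvd_add_left (Dvd.intro _ rfl)).mp h1
    have h3 := (hg.prime.dvd_or_dvd h2).resolve_right hr
    by_contra hne
    have h4 := totalDegree_pderiv_lt' g i hne
    obtain ⟨s, hs⟩ := h3
    rw [hs] at hne
    rw [hs, totalDegree_mul_of_isDomain (left_ne_zero_of_mul hne) (right_ne_zero_of_mul hne)] at h4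
    omega
  have hC := eq_C_of_pderiv g hz
  by_cases h0 : coeff 0 g = 0
  · rw [h0, C_0] at hC; exact hg.ne_zero hC
  · apply hg.not_isUnit; rw [hC]; exact (IsUnit.mk0 _ h0).map C

lemma homogenize_split {k : Type*} [Field k] [IsAlgClosed k] (n : ℕ) :
    ∀ p : Polynomial k, p.natDegree ≤ n → ∃ c : k, ∃ a : Fin n → Fin 2 → k,
      (∀ i, a i ≠ 0) ∧ p.homogenize n = C c * ∏ i, (C (a i 0) * X 0 + C (a i 1) * X 1) := by
  induction n with
  | zero =>
    intro p hp
    refine ⟨p.coeff 0, fun i => i.elim0, fun i => i.elim0, ?_⟩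
    rw [Polynomial.eq_C_of_natDegree_le_zero hp]
    simp
  | succ n ih =>
    intro p hp
    by_cases hn : p.natDegree ≤ n
    · obtain ⟨c, a, ha, h⟩ := ih p hn
      refine ⟨c, Fin.cons ![0, 1] a, ?_, ?_⟩
      · intro i
        refine Fin.cases ?_ (fun i => ?_) i
        · intro h0; simpa using congrFun h0 1
        · simpa using ha i
      · have := Polynomial.homogenize_mul p 1 hn (n := 1) (by simp)
        rw [mul_one] at this
        rw [this, h, Fin.prod_univ_succ]
        simp
        ring
    · have hdeg : p.natDegree = n + 1 := by omega
      obtain ⟨t, ht⟩ := IsAlgClosed.exists_root p (by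
        intro h0
        have := Polynomial.natDegree_eq_of_degree_eq_some h0
        have h1 : p.natDegree = 0 := this
        omega)
      obtain ⟨q, rfl⟩ := Polynomial.dvd_iff_isRoot.mpr ht
      have hq : q.natDegree ≤ n := by
        have hq0 : q ≠ 0 := by rintro rfl; simp at hdeg
        rw [Polynomial.natDegree_mul (Polynomial.X_sub_C_ne_zero t) hq0,
          Polynomial.natDegree_X_sub_C] at hdeg
        omega
      obtain ⟨c, a, ha, h⟩ := ih q hq
      refine ⟨c, Fin.cons ![1, -t] a, ?_, ?_⟩
      · intro i
        refine Fin.cases ?_ (fun i => ?_) i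
        · intro h0; simpa using congrFun h0 0
        · simpa using ha i
      · have := Polynomial.homogenize_mul (Polynomial.X - Polynomial.C t) q (m := 1)
          (by simp) hq
        rw [add_comm 1 n] at this
        rw [this, h, Fin.prod_univ_succ]
        simp
        ring

lemma binary_split {k : Type*} [Field k] [IsAlgClosed k] (n : ℕ)
    (r : MvPolynomial (Fin 2) k) (hr : r.IsHomogeneous n) : ∃ c : k, ∃ a : Fin n → Fin 2 → k,
      (∀ i, a i ≠ 0) ∧ r = C c * ∏ i, (C (a i 0) * X 0 + C (a i 1) * X 1) := by
  have h := Polynomial.homogenize_eq_of_isHomogeneous hr rfl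
  rw [← h]
  apply homogenize_split
  rw [aeval_def, eval₂_eq']
  apply Polynomial.natDegree_sum_le_of_forall_le
  intro e he
  have h1 := hr.degree_eq_sum_deg_support he
  have h2 : e 0 + e 1 = n := by
    rw [h1]
    have := Finsupp.degree_eq_sum e
    rw [Fin.sum_univ_two] at this
    exact this.symm
  rw [Polynomial.algebraMap_apply]
  refine (Polynomial.natDegree_C_mul_le _ _).trans ?_
  simp
  omega

lemma comp_coeff {k S : Type*} [CommRing k] [CommRing S] [Algebra k S] {m : ℕ} (h : Fin m → S)
    (r : MvPolynomial (Fin m) k) (n : ℕ) :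
    (aeval (fun i => Polynomial.X * Polynomial.C (h i)) r).coeff n =
      aeval h (homogeneousComponent n r) := by
  conv_lhs => rw [← sum_homogeneousComponent r]
  have hC : ∀ u : MvPolynomial (Fin m) k, aeval (fun i => Polynomial.C (h i)) u
      = Polynomial.C (aeval h u) := by
    intro u
    have : (aeval (fun i => Polynomial.C (h i))) =
      (IsScalarTower.toAlgHom k S (Polynomial S)).comp (aeval h : MvPolynomial (Fin m) k →ₐ[k] S) := by
      ext i; simp
    rw [this]; rfl
  rw [map_sum, Polynomial.finsetSum_coeff]
  have h1 : ∀ i, (aeval (fun i => Polynomial.X * Polynomial.C (h i))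
      (homogeneousComponent i r)).coeff n = if n = i then aeval h (homogeneousComponent i r) else 0 := by
    intro i
    rw [scale_hom _ _ _ (homogeneousComponent_isHomogeneous i r), hC,
      Polynomial.coeff_X_pow_mul', Polynomial.coeff_C]
    by_cases hni : n = i
    · simp [hni]
    · rw [if_neg hni]
      split_ifs <;> first | rfl | omega
  simp only [h1, Finset.sum_ite_eq, Finset.mem_range]
  split_ifs with hlt
  · rfl
  · rw [homogeneousComponent_eq_zero _ _ (by omega), map_zero]

lemma elim3 {k S : Type*} [Field k] [CommRing S] [IsDomain S] [Algebra k S]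
    (h : Fin 3 → S) (F : Fin 3 → MvPolynomial (Fin 3) k) (j₀ : Fin 3) (hF : F j₀ ≠ 0)
    (h0 : ∀ j, aeval h (F j) = 0)
    (hnc : ∀ g, Irreducible g → (∀ i, g ∣ F i) → False) (l : Fin 3) :
    ∃ r : MvPolynomial (Fin 2) k, r ≠ 0 ∧ aeval (fun i => h (l.succAbove i)) r = 0 := by
  classical
  obtain ⟨g, hg, hg0⟩ : ∃ g : MvPolynomial (Fin 3) k, Irreducible g ∧ aeval h g = 0 := by
    obtain ⟨u, hu⟩ := UniqueFactorizationMonoid.factors_prod hF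
    have h1 : aeval h (UniqueFactorizationMonoid.factors (F j₀)).prod = 0 := by
      have := h0 j₀
      rw [← hu, map_mul] at this
      exact (mul_eq_zero.mp this).resolve_right (u.isUnit.map _).ne_zero
    rw [map_multiset_prod, Multiset.prod_eq_zero_iff, Multiset.mem_map] at h1
    obtain ⟨g, hg, hg0⟩ := h1
    exact ⟨g, UniqueFactorizationMonoid.irreducible_of_factor g hg, hg0⟩
  obtain ⟨j, hj⟩ : ∃ j, ¬ g ∣ F j := by
    by_contra! hc; exact hnc g hg hc
  let E : MvPolynomial (Fin 3) k ≃ₐ[k] Polynomial (MvPolynomial (Fin 2) k) :=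
    (renameEquiv k (finSuccEquiv' l)).trans (optionEquivLeft k (Fin 2))
  obtain ⟨r, hr, hr0⟩ := elim ((aeval h : MvPolynomial (Fin 3) k →ₐ[k] S).comp
    E.symm.toAlgHom).toRingHom (E g) (E (F j)) ((MulEquiv.irreducible_iff E).mpr hg)
    (fun hd => hj ((map_dvd_iff E).mp hd)) (by simpa using hg0) (by simpa using h0 j)
  refine ⟨r, hr, ?_⟩
  have hE : E (rename l.succAbove r) = Polynomial.C r := by
    have : (E.toAlgHom.comp (rename l.succAbove)) =
        IsScalarTower.toAlgHom k (MvPolynomial (Fin 2) k) (Polynomial (MvPolynomial (Fin 2) k)) := by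
      apply MvPolynomial.algHom_ext
      intro i
      simp [E, optionEquivLeft_X_some]
    exact DFunLike.congr_fun this r
  rw [← hE] at hr0
  have hr1 : aeval h (rename l.succAbove r) = 0 := by simpa using hr0
  rw [aeval_rename] at hr1
  exact hr1

lemma lin_rel {k S : Type*} [Field k] [IsAlgClosed k] [CommRing S] [IsDomain S] [Algebra k S]
    (h : Fin 2 → S) (r : MvPolynomial (Fin 2) k) (hr : r ≠ 0)
    (h0 : aeval (fun i => Polynomial.X * Polynomial.C (h i)) r = 0) :
    ∃ a : Fin 2 → k, a ≠ 0 ∧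
      algebraMap k S (a 0) * h 0 + algebraMap k S (a 1) * h 1 = 0 := by
  obtain ⟨n, hn⟩ : ∃ n, homogeneousComponent n r ≠ 0 := by
    by_contra! hc
    apply hr
    rw [← sum_homogeneousComponent r]
    exact Finset.sum_eq_zero fun i _ => hc i
  have h1 : aeval h (homogeneousComponent n r) = 0 := by
    rw [← comp_coeff, h0, Polynomial.coeff_zero]
  obtain ⟨c, a, ha, hs⟩ := binary_split n _ (homogeneousComponent_isHomogeneous n r)
  rw [hs] at hn h1
  have hc : c ≠ 0 := by rintro rfl; simp at hn
  rw [map_mul, map_prod, algHom_C, mul_eq_zero, Finset.prod_eq_zero_iff] at h1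
  rcases h1 with h1 | ⟨i, -, hi⟩
  · exact absurd ((map_eq_zero_iff _ (FaithfulSMul.algebraMap_injective k S)).mp h1) hc
  · exact ⟨a i, ha i, by simpa using hi⟩

lemma prop_rel {k S : Type*} [Field k] [CommRing S] [IsDomain S] [Algebra k S]
    (x y : S) (hx : x ≠ 0) (a b : k) (hab : a ≠ 0 ∨ b ≠ 0)
    (h : algebraMap k S a * x + algebraMap k S b * y = 0) :
    ∃ c : k, y = algebraMap k S c * x := by
  have hb : b ≠ 0 := by
    rintro rfl
    have ha : a ≠ 0 := by simpa using hab
    rw [map_zero, zero_mul, add_zero, mul_eq_zero,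
      map_eq_zero_iff _ (FaithfulSMul.algebraMap_injective k S)] at h
    tauto
  refine ⟨-(b⁻¹ * a), ?_⟩
  have h1 : algebraMap k S b⁻¹ * algebraMap k S b = 1 := by
    rw [← map_mul, inv_mul_cancel₀ hb, map_one]
  rw [map_neg, map_mul]
  linear_combination (algebraMap k S b⁻¹) * h - y * h1

lemma exists_q {k : Type*} [Field k] [IsAlgClosed k] [CharZero k]
    (f : MvPolynomial (Fin 3) k) (d : ℕ) (hd : 2 ≤ d)
    (hsf : Squarefree f) (hhom : f.IsHomogeneous d) (hH : hessianDet f = 0) :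
    ∃ q : Fin 3 → k, q ≠ 0 ∧ mkDerivation k (fun i => (C (q i) : MvPolynomial (Fin 3) k)) f = 0 := by
  obtain ⟨v, hv, hMv⟩ := Matrix.exists_mulVec_eq_zero_iff.mpr hH
  have hvD : ∀ j, mkDerivation k v (pderiv j f) = 0 := by
    intro j
    have := congrFun hMv j
    simp only [Matrix.mulVec, dotProduct, Matrix.of_apply, Pi.zero_apply] at this
    rw [mkDer_apply, ← this]
    exact Finset.sum_congr rfl fun i _ => by rw [pderiv_comm']
  obtain ⟨h, hne, hf, hh⟩ := exists_h f (alg_dep _ v hv hvD)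
  have hfh : ∀ j, aeval h (pderiv j f) = 0 := by
    intro j
    rw [← top_coeff (fun i => X i) h _ hhom.pderiv, taylor h hh _ (hf j),
      Polynomial.coeff_C, if_neg (by omega)]
  obtain ⟨i₀, hi₀⟩ : ∃ i, h i ≠ 0 := by
    by_contra! hc; exact hne (funext hc)
  obtain ⟨j₀, hj₀⟩ : ∃ j, pderiv j f ≠ 0 := by
    by_contra! hc
    have h1 := eq_C_of_pderiv f hc
    have h2 := hhom.coeff_eq_zero (d := 0) (by simp; omega)
    rw [h2, C_0] at h1
    exact hsf.ne_zero h1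
  have hrel : ∀ l : Fin 3, ∃ a : Fin 2 → k, a ≠ 0 ∧
      algebraMap k (MvPolynomial (Fin 3) k) (a 0) * h (l.succAbove 0) +
        algebraMap k (MvPolynomial (Fin 3) k) (a 1) * h (l.succAbove 1) = 0 := by
    intro l
    obtain ⟨r, hr, hr0⟩ := elim3 (fun i => Polynomial.X * Polynomial.C (h i))
      (fun j => pderiv j f) j₀ hj₀ (by
        intro j
        ext1 n
        rw [comp_coeff, Polynomial.coeff_zero]
        by_cases hn : d - 1 = n
        · subst hn
          rw [homogeneousComponent_eq_self hhom.pderiv, hfh]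
        · rw [homogeneousComponent_of_mem (n := d - 1)
            ((mem_homogeneousSubmodule _ _).mpr hhom.pderiv), if_neg (Ne.symm hn), map_zero])
      (fun g hg hdvd => no_common f d (by omega) hsf hhom g hg hdvd) l
    exact lin_rel (fun i => h (l.succAbove i)) r hr hr0
  have hprop : ∀ j, ∃ c : k, h j = algebraMap k (MvPolynomial (Fin 3) k) c * h i₀ := by
    intro j
    by_cases hj : j = i₀
    · exact ⟨1, by simp [hj]⟩
    have hcomb : ∀ i j : Fin 3, j ≠ i → ∃ l : Fin 3, (l.succAbove 0 = i ∧ l.succAbove 1 = j) ∨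
      (l.succAbove 0 = j ∧ l.succAbove 1 = i) := by decide
    obtain ⟨l, hl⟩ := hcomb i₀ j hj
    obtain ⟨a, ha, hal⟩ := hrel l
    have ha' : a 0 ≠ 0 ∨ a 1 ≠ 0 := by
      by_contra! hc
      apply ha; ext i; fin_cases i
      · exact hc.1
      · exact hc.2
    rcases hl with ⟨h1, h2⟩ | ⟨h1, h2⟩
    · rw [h1, h2] at hal
      exact prop_rel _ _ hi₀ _ _ ha' hal
    · rw [h1, h2, add_comm] at hal
      exact prop_rel _ _ hi₀ _ _ ha'.symm hal
  choose q hq using hprop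
  have hDq : ∀ j, mkDerivation k (fun i => (C (q i) : MvPolynomial (Fin 3) k)) (pderiv j f) = 0 := by
    intro j
    have h1 := hf j
    rw [mkDer_apply] at h1 ⊢
    have h2 : (∑ i, pderiv i (pderiv j f) * C (q i)) * h i₀ = 0 := by
      rw [← h1, Finset.sum_mul]
      refine Finset.sum_congr rfl fun i _ => ?_
      rw [hq i, algebraMap_eq, mul_assoc]
    exact (mul_eq_zero.mp h2).resolve_right hi₀
  refine ⟨q, ?_, ?_⟩
  · rintro rfl
    apply hi₀
    rw [hq i₀]; simp
  · have hE := congrArg (mkDerivation k (fun i => (C (q i) : MvPolynomial (Fin 3) k)))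
      hhom.sum_X_mul_pderiv
    simp only [map_sum, Derivation.leibniz, hDq, mkDerivation_X, mul_zero, zero_add,
      map_nsmul, smul_eq_mul] at hE
    rw [← mkDer_apply] at hE
    obtain ⟨e, rfl⟩ : ∃ e, d = e + 2 := ⟨d - 2, by omega⟩
    rw [nsmul_eq_mul] at hE
    have h3 : ((e : MvPolynomial (Fin 3) k) + 1) *
      mkDerivation k (fun i => (C (q i) : MvPolynomial (Fin 3) k)) f = 0 := by
      push_cast at hE
      linear_combination -hE
    exact (mul_eq_zero.mp h3).resolve_left (by exact_mod_cast Nat.succ_ne_zero e)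

lemma split_of_q {k : Type*} [Field k] [IsAlgClosed k] [CharZero k]
    (f : MvPolynomial (Fin 3) k) (d : ℕ) (hd : 2 ≤ d) (hhom : f.IsHomogeneous d)
    (q : Fin 3 → k) (hq : q ≠ 0)
    (hD : mkDerivation k (fun i => (C (q i) : MvPolynomial (Fin 3) k)) f = 0) :
    ∃ ℓ : Fin d → MvPolynomial (Fin 3) k,
          (∀ i, (ℓ i).IsHomogeneous 1) ∧
          (∀ i, eval q (ℓ i) = 0) ∧ f = ∏ i, ℓ i := by
  obtain ⟨l, hl⟩ : ∃ i, q i ≠ 0 := by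
    by_contra! hc; exact hq (funext hc)
  let Y : Fin 3 → MvPolynomial (Fin 3) k := fun i => X i - C (q i / q l) * X l
  have hY : f = aeval Y f := by
    have ht := taylor (fun i => (C (q i) : MvPolynomial (Fin 3) k)) (by simp) f hD
    have h2 := congrArg ((Polynomial.aeval (-(C (1 / q l)) * X l :
      MvPolynomial (Fin 3) k)).restrictScalars k) ht
    have h3 : ((Polynomial.aeval (-(C (1 / q l)) * X l :
      MvPolynomial (Fin 3) k)).restrictScalars k).comp
       (aeval (fun i => Polynomial.C (X i) + Polynomial.X * Polynomial.C (C (q i)))) =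
       aeval Y := by
      apply MvPolynomial.algHom_ext
      intro i
      simp [Y, div_eq_mul_inv]
      ring
    rw [← h3]
    simpa using h2.symm
  have hYl : Y l = 0 := by simp [Y, div_self hl]
  have hYhom : ∀ i, (Y i).IsHomogeneous 1 := fun i =>
    (isHomogeneous_X k i).sub (isHomogeneous_C_mul_X _ _)
  have hYe : ∀ i, eval q (Y i) = 0 := by
    intro i; simp [Y, hl]
  let r : MvPolynomial (Fin 2) k :=
    aeval (l.insertNth (0 : MvPolynomial (Fin 2) k) (fun i => X i) : Fin 3 → MvPolynomial (Fin 2) k) f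
  have hr : r.IsHomogeneous d := by
    have := hhom.aeval (l.insertNth (0 : MvPolynomial (Fin 2) k) (fun i => X i) :
      Fin 3 → MvPolynomial (Fin 2) k) (n := 1) (by
        intro i
        refine Fin.succAboveCases l ?_ (fun j => ?_) i
        · simpa using isHomogeneous_zero _ _ _
        · simpa using isHomogeneous_X _ _)
    rw [one_mul] at this
    exact this
  have hfr : f = aeval (fun i => Y (l.succAbove i)) r := by
    conv_lhs => rw [hY]
    have : (aeval Y : MvPolynomial (Fin 3) k →ₐ[k] MvPolynomial (Fin 3) k) =
      (aeval (fun i => Y (l.succAbove i))).comp (aeval (l.insertNth (0 : MvPolynomial (Fin 2) k)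
        (fun i => X i) : Fin 3 → MvPolynomial (Fin 2) k)) := by
      apply MvPolynomial.algHom_ext
      intro i
      refine Fin.succAboveCases l ?_ (fun j => ?_) i
      · simp [hYl]
      · simp
    rw [this]; rfl
  obtain ⟨c, a, -, hs⟩ := binary_split d r hr
  obtain ⟨e, rfl⟩ : ∃ e, d = e + 1 := ⟨d - 1, by omega⟩
  let L : Fin (e + 1) → MvPolynomial (Fin 3) k := fun i =>
    C (a i 0) * Y (l.succAbove 0) + C (a i 1) * Y (l.succAbove 1)
  have hLhom : ∀ i, (L i).IsHomogeneous 1 := fun i =>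
    ((hYhom _).C_mul _).add ((hYhom _).C_mul _)
  have hLe : ∀ i, eval q (L i) = 0 := by intro i; simp [L, hYe]
  refine ⟨Fin.cons (C c * L 0) (fun i => L i.succ), ?_, ?_, ?_⟩
  · intro i
    refine Fin.cases ?_ (fun i => ?_) i
    · exact (hLhom 0).C_mul _
    · exact hLhom _
  · intro i
    refine Fin.cases ?_ (fun i => ?_) i
    · simp [hLe]
    · exact hLe _
  · have h5 : f = C c * ∏ i, L i := by
      rw [hfr, hs, map_mul, map_prod, algHom_C]
      simp [L]
    rw [h5, Fin.prod_univ_succ, Fin.prod_univ_succ]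
    simp [mul_assoc]

theorem stmt1 {k : Type*} [Field k] [IsAlgClosed k] [CharZero k]
    (f : MvPolynomial (Fin 3) k) (d : ℕ) (hd : 2 ≤ d)
    (hsf : Squarefree f) (hhom : f.IsHomogeneous d) :
    hessianDet f = 0 ↔
      ∃ p : Fin 3 → k, p ≠ 0 ∧
        ∃ ℓ : Fin d → MvPolynomial (Fin 3) k,
          (∀ i, (ℓ i).IsHomogeneous 1) ∧
          (∀ i, eval p (ℓ i) = 0) ∧
          (∀ i j, i ≠ j → ∀ c : k, ℓ i ≠ c • ℓ j) ∧
          f = ∏ i, ℓ i := by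
  constructor
  · intro hH
    obtain ⟨q, hq, hD⟩ := exists_q f d hd hsf hhom hH
    obtain ⟨ℓ, h1, h2, h3⟩ := split_of_q f d hd hhom q hq hD
    refine ⟨q, hq, ℓ, h1, h2, ?_, h3⟩
    intro i j hij c hc
    have hdvd : ℓ j * ℓ j ∣ f := by
      have h4 : ℓ i * ℓ j ∣ f := by
        rw [h3, ← Finset.prod_pair hij]
        exact Finset.prod_dvd_prod_of_subset _ _ _ (Finset.subset_univ _)
      refine dvd_trans ?_ h4
      rw [hc, smul_mul_assoc, smul_eq_C_mul]
      exact Dvd.intro_left _ rfl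
    have hu := (hsf _ hdvd).map (eval q)
    rw [h2] at hu
    exact not_isUnit_zero hu
  · rintro ⟨p, hp, ℓ, h1, h2, -, h3⟩
    have hℓ : ∀ i, mkDerivation k (fun i => (C (p i) : MvPolynomial (Fin 3) k)) (ℓ i) = 0 := by
      intro i
      have h4 := taylor_coeff (fun i => (C (p i) : MvPolynomial (Fin 3) k)) (by simp) (ℓ i) 0
      rw [taylor_zero, zero_add, top_coeff _ _ _ (h1 i)] at h4
      rw [← h4]
      have h5 : aeval (fun i => (C (p i) : MvPolynomial (Fin 3) k)) (ℓ i) = C (eval p (ℓ i)) := by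
        have : (aeval (fun i => (C (p i) : MvPolynomial (Fin 3) k))) =
          (Algebra.ofId k (MvPolynomial (Fin 3) k)).comp (aeval p) := by
          apply MvPolynomial.algHom_ext
          intro i; simp [Algebra.ofId_apply]
        rw [this]; rfl
      rw [h5, h2, C_0, mul_zero]
    have hDf : mkDerivation k (fun i => (C (p i) : MvPolynomial (Fin 3) k)) f = 0 := by
      rw [h3]
      refine Finset.prod_induction _ (fun x => mkDerivation k
        (fun i => (C (p i) : MvPolynomial (Fin 3) k)) x = 0) ?_ ?_ (fun i _ => hℓ i)
      · intro x y hx hy; simp [hx, hy]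
      · simp
    refine Matrix.exists_mulVec_eq_zero_iff.mp ⟨fun i => C (p i), ?_, ?_⟩
    · intro h0
      apply hp
      funext i
      exact C_eq_zero.mp (congrFun h0 i)
    · funext j
      have h6 := congrArg (pderiv j) hDf
      rw [mkDer_apply, map_sum, map_zero] at h6
      simp only [Derivation.leibniz, pderiv_C, mul_zero, zero_add, smul_eq_mul] at h6
      simp only [Matrix.mulVec, dotProduct, Matrix.of_apply, Pi.zero_apply]
      rw [← h6]
      exact Finset.sum_congr rfl fun i _ => mul_comm _ _
end

section
/- Let k be an algebraically closed field of characteristic zero and let f ∈ k[x_0, x_1] be a squarefree homogeneous polynomial of degree d ≥ 1. Then the Hessian polynomial h_f (the determinant of the 2×2 matrix of second partial derivatives of f) is identically zero if and only if d = 1. -/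
open MvPolynomial

theorem hess_pderiv_comm {k : Type*} [Field k] (i j : Fin 2) (f : MvPolynomial (Fin 2) k) :
    pderiv i (pderiv j f) = pderiv j (pderiv i f) := by
  have h : ⁅(pderiv i : Derivation k (MvPolynomial (Fin 2) k) (MvPolynomial (Fin 2) k)),
      (pderiv j : Derivation k (MvPolynomial (Fin 2) k) (MvPolynomial (Fin 2) k))⁆ = 0 := by
    apply MvPolynomial.derivation_ext
    intro l
    rw [Derivation.commutator_apply]
    classical
    simp only [pderiv_X, Pi.single_apply]
    split_ifs <;> simp
  have h2 := congrArg (fun D => D f) h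
  simpa [Derivation.commutator_apply, sub_eq_zero] using h2

theorem hess_pderiv_zero {k : Type*} [Field k]
    (f : MvPolynomial (Fin 2) k) (d : ℕ) (hd : 1 ≤ d)
    (hsf : Squarefree f) (hhom : f.IsHomogeneous d) (i : Fin 2)
    (h : f ∣ (pderiv i f) ^ 2) : pderiv i f = 0 := by
  have h1 : f ∣ pderiv i f :=
    hsf.isRadical 2 _ h
  by_contra h0
  obtain ⟨g, hg⟩ := h1
  have hf : f ≠ 0 := by rintro rfl; simp at h0
  have hg0 : g ≠ 0 := by rintro rfl; simp [hg] at h0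
  have e1 := (hhom.pderiv (i := i)).totalDegree h0
  have e2 := hhom.totalDegree hf
  rw [hg, totalDegree_mul_of_isDomain hf hg0] at e1
  omega

theorem stmt2 {k : Type*} [Field k] [IsAlgClosed k] [CharZero k]
    (f : MvPolynomial (Fin 2) k) (d : ℕ) (hd : 1 ≤ d)
    (hsf : Squarefree f) (hhom : f.IsHomogeneous d) :
    hessianDet f = 0 ↔ d = 1 := by
  unfold hessianDet
  rw [Matrix.det_fin_two]
  simp only [Matrix.of_apply]
  rw [hess_pderiv_comm 1 0 f]
  constructor
  · intro hh
    by_contra hne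
    obtain ⟨e, rfl⟩ : ∃ e, d = e + 2 := ⟨d - 2, by omega⟩
    have E := hhom.sum_X_mul_pderiv
    have E0 := (hhom.pderiv (i := 0)).sum_X_mul_pderiv
    have E1 := (hhom.pderiv (i := 1)).sum_X_mul_pderiv
    simp only [Fin.sum_univ_two, nsmul_eq_mul] at E E0 E1
    rw [hess_pderiv_comm 1 0 f] at E0
    rw [show e + 2 - 1 = e + 1 from rfl] at E0 E1
    have key : ∀ i : Fin 2, ((e + 1 : ℕ) : MvPolynomial (Fin 2) k) *
        (((e + 2 : ℕ) : MvPolynomial (Fin 2) k) * f * pderiv i (pderiv i f)) =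
        ((e + 1 : ℕ) : MvPolynomial (Fin 2) k) *
        (((e + 1 : ℕ) : MvPolynomial (Fin 2) k) * (pderiv i f) ^ 2) := by
      intro i
      generalize ((e + 1 : ℕ) : MvPolynomial (Fin 2) k) = u at *
      generalize ((e + 2 : ℕ) : MvPolynomial (Fin 2) k) = v at *
      fin_cases i
      · simp only [Fin.zero_eta]
        generalize pderiv 0 (pderiv 0 f) = a at *
        generalize pderiv 0 (pderiv 1 f) = b at *
        generalize pderiv 1 (pderiv 1 f) = c at *
        linear_combination (-u * a) * E + (u * pderiv 0 f + X 1 * b) * E0 - X 1 * a * E1 + X 1 ^ 2 * hh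
      · simp only [Fin.mk_one]
        generalize pderiv 0 (pderiv 0 f) = a at *
        generalize pderiv 0 (pderiv 1 f) = b at *
        generalize pderiv 1 (pderiv 1 f) = c at *
        linear_combination (-u * c) * E + (u * pderiv 1 f + X 0 * b) * E1 - X 0 * c * E0 + X 0 ^ 2 * hh
    have z : ∀ i : Fin 2, pderiv i f = 0 := by
      intro i
      apply hess_pderiv_zero f _ hd hsf hhom
      have hu : ((e + 1 : ℕ) : MvPolynomial (Fin 2) k) ≠ 0 := Nat.cast_ne_zero.2 (by omega)
      have k1 := mul_left_cancel₀ hu (key i)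
      have hun : IsUnit ((e + 1 : ℕ) : MvPolynomial (Fin 2) k) := by
        rw [← map_natCast (C : k →+* MvPolynomial (Fin 2) k)]
        exact (IsUnit.mk0 _ (Nat.cast_ne_zero.2 (by omega))).map C
      rw [← hun.dvd_mul_left, ← k1]
      exact Dvd.dvd.mul_right (Dvd.intro_left _ rfl) _
    rw [z, z] at E
    have hv : ((e + 2 : ℕ) : MvPolynomial (Fin 2) k) ≠ 0 := Nat.cast_ne_zero.2 (by omega)
    simp only [mul_zero, add_zero] at E
    exact hsf.ne_zero ((mul_eq_zero.1 E.symm).resolve_left hv)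
  · rintro rfl
    have z : ∀ i j : Fin 2, pderiv i (pderiv j f) = 0 := by
      intro i j
      have := (hhom.pderiv (i := j))
      have h0 := totalDegree_eq_zero_iff_eq_C.1 (Nat.le_zero.1 this.totalDegree_le)
      rw [h0, pderiv_C]
    simp [z]
end

section
/- Let k be an algebraically closed field of characteristic zero and let f ∈ k[x_0, x_1, x_2, x_3] be a squarefree homogeneous polynomial of degree d ≥ 3 whose Hessian polynomial h_f is identically zero. Then either (a) there exists an invertible 4×4 matrix T over k such that f(T·x) is a polynomial in x_0 and x_1 only, and in that case f is a product of d pairwise non-proportional linear forms all vanishing on a common 2-dimensional linear subspace of k^4 (V(f) consists of d distinct planes through a line), or (b) there exists an invertible 4×4 matrix T over k such that g := f(T·x) is a polynomial in x_0, x_1, x_2 only and the partial derivatives ∂g/∂x_0, ∂g/∂x_1, ∂g/∂x_2 are linearly independent over k (V(f) is a cone over a plane curve with vertex exactly a point). -/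
open MvPolynomial

set_option linter.unusedSectionVars false

section generic
variable {σ : Type*} [Fintype σ] {A : Type*} [CommRing A]

lemma gn_chain {B : Type*} [CommRing B] [Algebra A B] (D : Derivation A B B) (p : σ → B)
    (F : MvPolynomial σ A) :
    D (aeval p F) = ∑ i, aeval p (pderiv i F) * D (p i) := by
  classical
  induction F using MvPolynomial.induction_on with
  | C a => simp
  | add P Q hP hQ => simp [hP, hQ, add_mul, Finset.sum_add_distrib]
  | mul_X P j hP =>
    simp only [map_mul, aeval_X, Derivation.leibniz, hP, smul_eq_mul, pderiv_X, map_add,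
      add_mul, Finset.sum_add_distrib, Finset.mul_sum]
    congr 1
    · rw [Finset.sum_eq_single j]
      · simp
      · intro b _ hb; simp [hb.symm]
      · simp
    · apply Finset.sum_congr rfl; intro i _; ring

/-- the derivation attached to a polynomial vector field -/
noncomputable def gnD (h : σ → MvPolynomial σ A) :
    Derivation A (MvPolynomial σ A) (MvPolynomial σ A) := mkDerivation A h

lemma gnD_X (h : σ → MvPolynomial σ A) (i : σ) : gnD h (X i) = h i := by
  simp [gnD]

lemma gnD_apply (h : σ → MvPolynomial σ A) (F : MvPolynomial σ A) :
    gnD h F = ∑ i, h i * pderiv i F := by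
  have := gn_chain (gnD h) X F
  simp only [gnD_X, aeval_X_left, AlgHom.id_apply] at this
  rw [this]; exact Finset.sum_congr rfl fun i _ => mul_comm _ _

noncomputable def gnFlow (h : σ → MvPolynomial σ A) :
    MvPolynomial σ A →ₐ[A] Polynomial (MvPolynomial σ A) :=
  aeval (fun i => Polynomial.C (X i) + Polynomial.C (h i) * Polynomial.X)

lemma gnFlow_coeff_zero (h : σ → MvPolynomial σ A) (F : MvPolynomial σ A) :
    (gnFlow h F).coeff 0 = F := by
  induction F using MvPolynomial.induction_on with
  | C a =>
    rw [← algebraMap_eq, AlgHom.commutes]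
    simp [Polynomial.algebraMap_apply]
  | add P Q hP hQ => simp [hP, hQ]
  | mul_X P j hP => simp [Polynomial.mul_coeff_zero, hP]; simp [gnFlow]

lemma gnFlow_coeff_succ (h : σ → MvPolynomial σ A) (hh : ∀ i, gnD h (h i) = 0)
    (F : MvPolynomial σ A) (n : ℕ) :
    ((n : MvPolynomial σ A) + 1) * (gnFlow h F).coeff (n + 1) = gnD h ((gnFlow h F).coeff n) := by
  induction F using MvPolynomial.induction_on generalizing n with
  | C a =>
    rw [← algebraMap_eq, AlgHom.commutes]
    cases n <;> simp [Polynomial.algebraMap_apply, Polynomial.coeff_C]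
  | add P Q hP hQ => simp [hP, hQ, mul_add]
  | mul_X P j hP =>
    have hX : gnFlow h (X j) = Polynomial.C (X j) + Polynomial.C (h j) * Polynomial.X := by
      simp [gnFlow]
    have e : ∀ m, (gnFlow h (P * X j)).coeff (m+1) =
        (gnFlow h P).coeff (m+1) * X j + (gnFlow h P).coeff m * h j := by
      intro m
      rw [map_mul, hX, mul_add, ← mul_assoc, Polynomial.coeff_add, Polynomial.coeff_mul_C,
        Polynomial.coeff_mul_X, Polynomial.coeff_mul_C]
    have e0 : (gnFlow h (P * X j)).coeff 0 = (gnFlow h P).coeff 0 * X j := by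
      rw [gnFlow_coeff_zero, gnFlow_coeff_zero]
    rw [e]
    cases n with
    | zero =>
      rw [e0]
      have := hP 0
      simp only [Derivation.leibniz, gnD_X, smul_eq_mul, ← this]
      push_cast
      ring
    | succ n =>
      rw [e]
      have h1 := hP (n+1)
      have h2 := hP n
      simp only [Derivation.leibniz, gnD_X, smul_eq_mul, map_add, hh, ← h1, ← h2]
      push_cast
      ring

variable [IsDomain A] [CharZero A]

lemma gnFlow_const (h : σ → MvPolynomial σ A) (hh : ∀ i, gnD h (h i) = 0)
    (F : MvPolynomial σ A) (hF : gnD h F = 0) : gnFlow h F = Polynomial.C F := by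
  have key : ∀ n, (gnFlow h F).coeff (n+1) = 0 := by
    intro n
    have h1 := gnFlow_coeff_succ h hh F n
    have h2 : gnD h ((gnFlow h F).coeff n) = 0 := by
      induction n with
      | zero => rw [gnFlow_coeff_zero, hF]
      | succ n ih =>
        have h2 := gnFlow_coeff_succ h hh F n
        have h3 : ((n + 1 : ℕ) : MvPolynomial σ A) ≠ 0 := Nat.cast_ne_zero.2 (Nat.succ_ne_zero n)
        push_cast at h3
        rw [ih h2, mul_eq_zero, or_iff_right h3] at h2
        rw [h2, map_zero]
    rw [h2] at h1
    rcases mul_eq_zero.1 h1 with h3 | h3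
    · exfalso
      have : ((n + 1 : ℕ) : MvPolynomial σ A) = 0 := by push_cast; exact h3
      exact Nat.cast_ne_zero.2 (Nat.succ_ne_zero n) this
    · exact h3
  ext1 n
  cases n with
  | zero => rw [gnFlow_coeff_zero]; simp
  | succ n => rw [key n, Polynomial.coeff_C]; simp

lemma gnD_factor (h : σ → MvPolynomial σ A) (hh : ∀ i, gnD h (h i) = 0)
    (P Q : MvPolynomial σ A) (hPQ : gnD h (P * Q) = 0) (h0 : P * Q ≠ 0) : gnD h P = 0 := by
  have h1 := gnFlow_const h hh _ hPQ
  have hP : gnFlow h P ≠ 0 := fun e => left_ne_zero_of_mul h0 (by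
    rw [← gnFlow_coeff_zero h P, e]; simp)
  have hQ : gnFlow h Q ≠ 0 := fun e => right_ne_zero_of_mul h0 (by
    rw [← gnFlow_coeff_zero h Q, e]; simp)
  have h2 := congrArg Polynomial.natDegree h1
  rw [map_mul, Polynomial.natDegree_mul hP hQ, Polynomial.natDegree_C] at h2
  have h3 : (gnFlow h P).coeff 1 = 0 := Polynomial.coeff_eq_zero_of_natDegree_lt (by omega)
  have h4 := gnFlow_coeff_succ h hh P 0
  rw [gnFlow_coeff_zero] at h4
  rw [← h4]; simp [h3]

/-- pointwise version of the flow -/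
lemma gnFlow_eval (h : σ → MvPolynomial σ A) (hh : ∀ i, gnD h (h i) = 0)
    (F : MvPolynomial σ A) (hF : gnD h F = 0) (a : σ → A) (t : A) :
    eval (fun i => a i + t * eval a (h i)) F = eval a F := by
  have h1 := gnFlow_const h hh _ hF
  have h2 := congrArg (fun p => Polynomial.eval t (Polynomial.map (eval a) p)) h1
  simp only [Polynomial.map_C, Polynomial.eval_C] at h2
  rw [← h2]
  have : ∀ G : MvPolynomial σ A, Polynomial.eval t (Polynomial.map (eval a) (gnFlow h G)) =
      eval (fun i => a i + t * eval a (h i)) G := by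
    intro G
    induction G using MvPolynomial.induction_on with
    | C a =>
      rw [← algebraMap_eq, AlgHom.commutes]
      simp [Polynomial.algebraMap_apply]
    | add P Q hP hQ => simp [hP, hQ]
    | mul_X P j hP => rw [map_mul, Polynomial.map_mul, Polynomial.eval_mul, hP]; simp [gnFlow, mul_comm t]
  exact (this F).symm

/-- invariance along a constant vector -/
lemma gn_const_invariant (v : σ → A) (F : MvPolynomial σ A)
    (hF : ∑ i, C (v i) * pderiv i F = 0) (a : σ → A) : eval (a + v) F = eval a F := by
  have h := gnFlow_eval (fun i => C (v i)) (by intro i; rw [gnD_apply]; simp) F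
    (by rw [gnD_apply]; exact hF) a 1
  simpa [Pi.add_def] using h

lemma gn_homog_factor (P Q : MvPolynomial σ A) (n : ℕ) (hPQ : (P * Q).IsHomogeneous n)
    (h0 : P * Q ≠ 0) : ∃ m, P.IsHomogeneous m := by
  classical
  let τ : MvPolynomial σ A →ₐ[A] Polynomial (MvPolynomial σ A) :=
    aeval (fun i => Polynomial.C (X i) * Polynomial.X)
  have hmon : ∀ (s : σ →₀ ℕ) (a : A), τ (monomial s a) =
      Polynomial.monomial s.degree (monomial s a) := by
    intro s a
    simp only [τ, aeval_monomial]
    rw [Finsupp.prod]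
    simp only [mul_pow]
    rw [Finset.prod_mul_distrib, Finset.prod_pow_eq_pow_sum, ← Polynomial.C_mul_X_pow_eq_monomial]
    rw [monomial_eq, Polynomial.C_mul, ← mul_assoc, Finsupp.prod, map_prod]
    simp [Polynomial.algebraMap_apply, Finsupp.degree_apply]
  have hc : ∀ (F : MvPolynomial σ A) (j : ℕ), (τ F).coeff j = homogeneousComponent j F := by
    intro F j
    induction F using MvPolynomial.induction_on' with
    | monomial s a =>
      rw [hmon, Polynomial.coeff_monomial]
      split_ifs with hs
      · exact (homogeneousComponent_eq_self (isHomogeneous_monomial a hs)).symm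
      · have := homogeneousComponent_of_mem (m := j) (isHomogeneous_monomial a (rfl : s.degree = s.degree))
        rw [this, if_neg (Ne.symm hs)]
    | add P Q hP hQ => rw [map_add, Polynomial.coeff_add, hP, hQ, map_add]
  have hne : ∀ F, F ≠ 0 → τ F ≠ 0 := by
    intro F hF h
    apply hF
    rw [← sum_homogeneousComponent F]
    exact Finset.sum_eq_zero fun i _ => by rw [← hc, h]; simp
  have hP := hne P (left_ne_zero_of_mul h0)
  have hQ := hne Q (right_ne_zero_of_mul h0)
  have hmulτ : τ P * τ Q = Polynomial.monomial n (P * Q) := by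
    rw [← map_mul]
    ext1 j
    rw [hc, Polynomial.coeff_monomial]
    rw [homogeneousComponent_of_mem hPQ]
    split_ifs <;> first | rfl | omega
  have d1 := Polynomial.natDegree_mul hP hQ
  have d2 := Polynomial.natTrailingDegree_mul hP hQ
  rw [hmulτ, Polynomial.natDegree_monomial_eq _ h0] at d1
  rw [hmulτ, Polynomial.natTrailingDegree_monomial h0] at d2
  have l1 := Polynomial.natTrailingDegree_le_natDegree (τ P)
  have l2 := Polynomial.natTrailingDegree_le_natDegree (τ Q)
  refine ⟨(τ P).natDegree, ?_⟩
  have : P = homogeneousComponent (τ P).natDegree P := by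
    conv_lhs => rw [← sum_homogeneousComponent P]
    rw [Finset.sum_eq_single (τ P).natDegree]
    · intro b _ hb
      rw [← hc]
      rcases lt_or_gt_of_ne hb with hb | hb
      · exact Polynomial.coeff_eq_zero_of_lt_natTrailingDegree (by omega)
      · exact Polynomial.coeff_eq_zero_of_natDegree_lt hb
    · intro hnot
      apply homogeneousComponent_eq_zero
      simpa using hnot
  have h5 := homogeneousComponent_isHomogeneous (τ P).natDegree P
  rwa [← this] at h5

end generic

set_option linter.unusedSectionVars false

section field
variable {σ : Type*} [Fintype σ] {k : Type*} [Field k] [CharZero k]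

lemma gn_homog_const_of_pderiv {p : MvPolynomial σ k} {m : ℕ} (hp : p.IsHomogeneous m)
    (h : ∀ j, pderiv j p = 0) (h0 : p ≠ 0) : m = 0 := by
  have := hp.sum_X_mul_pderiv
  simp only [h, mul_zero, Finset.sum_const_zero] at this
  by_contra hm
  rcases smul_eq_zero.1 this.symm with h1 | h1
  · exact hm h1
  · exact h0 h1

lemma gn_dvd_degree {A : Type*} [CommRing A] [IsDomain A] {p q : MvPolynomial σ A} {m n : ℕ}
    (hp : p.IsHomogeneous m) (hq : q.IsHomogeneous n) (hnm : n < m) (h : p ∣ q) : q = 0 := by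
  by_contra hq0
  obtain ⟨r, rfl⟩ := h
  have h1 := totalDegree_mul_of_isDomain (left_ne_zero_of_mul hq0) (right_ne_zero_of_mul hq0)
  rw [hq.totalDegree hq0, hp.totalDegree (left_ne_zero_of_mul hq0)] at h1
  omega

lemma gn_homog_zero {A : Type*} [CommRing A] {p : MvPolynomial σ A} (hp : p.IsHomogeneous 0) :
    ∃ c, p = C c := ⟨_, (totalDegree_eq_zero_iff_eq_C).1 (Nat.le_zero.1 hp.totalDegree_le)⟩

/-- two forms with vanishing Wronskians are proportional -/
lemma gn_prop {p q : MvPolynomial σ k} {m : ℕ} (hp : p.IsHomogeneous m) (hq : q.IsHomogeneous m)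
    (hp0 : p ≠ 0) (h : ∀ j, p * pderiv j q = q * pderiv j p) : ∃ c : k, q = C c * p := by
  by_cases hq0 : q = 0
  · exact ⟨0, by simp [hq0]⟩
  obtain ⟨p', q', c, hcop, rfl, rfl⟩ := UniqueFactorizationMonoid.exists_reduced_factors p hp0 q
  have hc0 : c ≠ 0 := left_ne_zero_of_mul hp0
  have hp'0 : p' ≠ 0 := right_ne_zero_of_mul hp0
  have hq'0 : q' ≠ 0 := right_ne_zero_of_mul hq0
  have h' : ∀ j, p' * pderiv j q' = q' * pderiv j p' := by
    intro j
    have := h j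
    simp only [Derivation.leibniz, smul_eq_mul] at this
    have h2 : (c * c) * (p' * pderiv j q') = (c * c) * (q' * pderiv j p') := by
      linear_combination this
    exact mul_left_cancel₀ (mul_ne_zero hc0 hc0) h2
  obtain ⟨a, ha⟩ := gn_homog_factor p' c m (by rwa [mul_comm]) (by rwa [mul_comm])
  obtain ⟨b, hb⟩ := gn_homog_factor q' c m (by rwa [mul_comm]) (by rwa [mul_comm])
  have hpd : ∀ j, pderiv j p' = 0 := by
    intro j
    rcases Nat.eq_zero_or_pos a with rfl | hapos
    · obtain ⟨x, rfl⟩ := gn_homog_zero ha; simp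
    have hdvd : p' ∣ pderiv j p' := by
      apply hcop.dvd_of_dvd_mul_left
      exact ⟨_, (h' j).symm⟩
    exact gn_dvd_degree ha ha.pderiv (by omega) hdvd
  have hqd : ∀ j, pderiv j q' = 0 := by
    intro j
    have := h' j
    rw [hpd j, mul_zero] at this
    exact (mul_eq_zero.1 this).resolve_left hp'0
  have ha0 := gn_homog_const_of_pderiv ha hpd hp'0
  have hb0 := gn_homog_const_of_pderiv hb hqd hq'0
  subst ha0 hb0
  obtain ⟨x, rfl⟩ := gn_homog_zero ha
  obtain ⟨y, rfl⟩ := gn_homog_zero hb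
  have hx : x ≠ 0 := fun e => hp'0 (by simp [e])
  refine ⟨y / x, ?_⟩
  rw [mul_comm c (C x), ← mul_assoc, ← C_mul, div_mul_cancel₀ _ hx, mul_comm]

/-- minimal homogeneous relation -/
lemma gn_min_relation {τ : Type*} [Fintype τ] (u : τ → MvPolynomial σ k) {e : ℕ} (he : 0 < e)
    (hu : ∀ i, (u i).IsHomogeneous e) (hdep : ¬ AlgebraicIndependent k u) :
    ∃ (n : ℕ) (R : MvPolynomial τ k), R.IsHomogeneous n ∧ R ≠ 0 ∧ aeval u R = 0 ∧
      ∀ m < n, ∀ R' : MvPolynomial τ k, R'.IsHomogeneous m → aeval u R' = 0 → R' = 0 := by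
  classical
  have hex : ∃ n, ∃ R : MvPolynomial τ k, R.IsHomogeneous n ∧ R ≠ 0 ∧ aeval u R = 0 := by
    rw [algebraicIndependent_iff] at hdep
    push Not at hdep
    obtain ⟨R, hR, hR0⟩ := hdep
    have : ∃ n, homogeneousComponent n R ≠ 0 := by
      by_contra hcon
      push Not at hcon
      apply hR0
      rw [← sum_homogeneousComponent R]
      exact Finset.sum_eq_zero fun i _ => hcon i
    obtain ⟨n, hn⟩ := this
    refine ⟨n, _, homogeneousComponent_isHomogeneous n R, hn, ?_⟩
    have h1 : ∀ i, (aeval u (homogeneousComponent i R)).IsHomogeneous (e * i) := fun i =>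
      (homogeneousComponent_isHomogeneous i R).aeval _ hu
    have h2 : homogeneousComponent (e * n) (aeval u R) = aeval u (homogeneousComponent n R) := by
      conv_lhs => rw [← sum_homogeneousComponent R, map_sum, map_sum]
      by_cases hnR : n ∈ Finset.range (R.totalDegree + 1)
      · rw [Finset.sum_eq_single_of_mem n hnR]
        · exact homogeneousComponent_eq_self (h1 n)
        · intro b _ hb
          rw [homogeneousComponent_of_mem (h1 b), if_neg]
          intro hh
          exact hb (Nat.eq_of_mul_eq_mul_left he hh).symm
      · exact absurd (homogeneousComponent_eq_zero _ _ (by simpa using hnR)) hn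
    rw [← h2, hR, map_zero]
  obtain ⟨R, h1, h2, h3⟩ := Nat.find_spec hex
  refine ⟨Nat.find hex, R, h1, h2, h3, ?_⟩
  intro m hm R' hR' hR'0
  by_contra hne
  exact Nat.find_min hex hm ⟨R', hR', hne, hR'0⟩

lemma gn_jacobian [DecidableEq σ] (u : σ → MvPolynomial σ k)
    (hdet : (Matrix.of fun i j => pderiv j (u i)).det = 0) : ¬ AlgebraicIndependent k u := by
  intro hind
  obtain ⟨v, hv0, hv⟩ := (Matrix.exists_mulVec_eq_zero_iff).2 hdet
  have hB : IsTranscendenceBasis k u := by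
    apply hind.isTranscendenceBasis_of_lift_trdeg_le_of_finite
    rw [MvPolynomial.trdeg_of_isDomain]
    simp
  have halg := hB.isAlgebraic
  have hDu : ∀ i, gnD v (u i) = 0 := by
    intro i
    rw [gnD_apply]
    have := congrFun hv i
    simp only [Matrix.mulVec, dotProduct, Matrix.of_apply, Pi.zero_apply] at this
    rw [← this]
    exact Finset.sum_congr rfl fun _ _ => mul_comm _ _
  have hDS : ∀ s ∈ Algebra.adjoin k (Set.range u), gnD v s = 0 := by
    intro s hs
    induction hs using Algebra.adjoin_induction with
    | mem x hx => obtain ⟨i, rfl⟩ := hx; exact hDu i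
    | algebraMap r => simp
    | add x y _ _ hx hy => simp [hx, hy]
    | mul x y _ _ hx hy => simp [hx, hy]
  apply hv0
  funext l
  classical
  set S := Algebra.adjoin k (Set.range u)
  have hchain : ∀ p : Polynomial S, gnD v (Polynomial.aeval (X l : MvPolynomial σ k) p) =
      Polynomial.aeval (X l : MvPolynomial σ k) (Polynomial.derivative p) * v l := by
    intro p
    induction p using Polynomial.induction_on' with
    | add p q hp hq => simp [hp, hq, add_mul]
    | monomial n a =>
      have ha : gnD v (algebraMap S (MvPolynomial σ k) a) = 0 := hDS _ a.2
      rw [Polynomial.aeval_monomial, Polynomial.derivative_monomial, Polynomial.aeval_monomial,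
        Derivation.leibniz, ha, smul_zero, add_zero, Derivation.leibniz_pow, gnD_X]
      simp
      ring
  have hexp : ∃ n, ∃ p : Polynomial S, p.natDegree = n ∧ p ≠ 0 ∧
      Polynomial.aeval (X l : MvPolynomial σ k) p = 0 := by
    obtain ⟨p, hp, hp0⟩ := halg.isAlgebraic (X l : MvPolynomial σ k)
    exact ⟨_, p, rfl, hp, hp0⟩
  obtain ⟨p, hpn, hp0, hp⟩ := Nat.find_spec hexp
  have hdeg : p.natDegree ≠ 0 := by
    intro h
    rw [Polynomial.eq_C_of_natDegree_eq_zero h] at hp hp0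
    rw [Polynomial.aeval_C] at hp
    apply hp0
    have : p.coeff 0 = 0 := by
      apply Subtype.ext
      exact hp
    rw [this, Polynomial.C_0]
  have hlt := Polynomial.natDegree_derivative_lt hdeg
  have hd0 : Polynomial.derivative p ≠ 0 := by
    intro h
    exact hdeg (Polynomial.derivative_eq_zero.1 h)
  have h1 := hchain p
  rw [hp, map_zero] at h1
  rcases mul_eq_zero.1 h1.symm with h2 | h2
  · exact absurd ⟨_, rfl, hd0, h2⟩ (Nat.find_min hexp (hpn ▸ hlt))
  · exact h2
end field

set_option linter.unusedSectionVars false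

section field
variable {σ : Type*} [Fintype σ] {k : Type*} [Field k] [CharZero k]

lemma gn_pderiv_comm (f : MvPolynomial σ k) (i j : σ) :
    pderiv i (pderiv j f) = pderiv j (pderiv i f) := by
  classical
  induction f using MvPolynomial.induction_on with
  | C a => simp
  | add P Q hP hQ => simp [hP, hQ]
  | mul_X P l hP =>
    simp only [Derivation.leibniz, smul_eq_mul, map_add, hP, pderiv_X, Pi.single_apply]
    split_ifs <;> simp <;> ring

lemma gn_raw_field [DecidableEq σ] (f : MvPolynomial σ k) (d : ℕ) (hd : 3 ≤ d)
    (hf : f.IsHomogeneous d)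
    (hdet : (Matrix.of fun i j => pderiv i (pderiv j f)).det = 0) :
    ∃ (N : ℕ) (g : σ → MvPolynomial σ k), (∀ i, (g i).IsHomogeneous N) ∧ (∃ i, g i ≠ 0) ∧
      (∀ j, ∑ i, g i * pderiv i (pderiv j f) = 0) ∧ (∀ i, gnD g (g i) = 0) := by
  have hu : ∀ i, (pderiv i f).IsHomogeneous (d - 1) := fun i => hf.pderiv
  have hdep : ¬ AlgebraicIndependent k (fun i => pderiv i f) := by
    apply gn_jacobian
    rw [← hdet]
    congr 1
    ext1 i j
    simp only [Matrix.of_apply]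
    exact gn_pderiv_comm _ _ _
  obtain ⟨n, R, hR, hR0, hR1, hmin⟩ := gn_min_relation _ (by omega) hu hdep
  set u := fun i => pderiv i f with hudef
  have hn : n ≠ 0 := by
    rintro rfl
    obtain ⟨c, rfl⟩ := gn_homog_zero hR
    simp at hR1
    exact hR0 (by simp [hR1])
  have hH : ∀ j, ∑ i, aeval u (pderiv i R) * pderiv i (pderiv j f) = 0 := by
    intro j
    have := gn_chain (pderiv j) u R
    rw [hR1, map_zero] at this
    rw [this]
    refine Finset.sum_congr rfl fun i _ => ?_
    rw [gn_pderiv_comm f i j]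
  refine ⟨(d - 1) * (n - 1), fun i => aeval u (pderiv i R), ?_, ?_, hH, ?_⟩
  · intro i
    exact hR.pderiv.aeval _ hu
  · by_contra hcon
    push Not at hcon
    apply hn
    apply gn_homog_const_of_pderiv hR _ hR0
    intro j
    exact hmin (n - 1) (by omega) _ hR.pderiv (hcon j)
  · intro i
    rw [gn_chain]
    apply Finset.sum_eq_zero
    intro l _
    rw [gnD_apply, hH, mul_zero]

lemma gn_field [DecidableEq σ] (f : MvPolynomial σ k) (d : ℕ) (hd : 3 ≤ d)
    (hf : f.IsHomogeneous d)
    (hdet : (Matrix.of fun i j => pderiv i (pderiv j f)).det = 0) :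
    ∃ (e : ℕ) (h : σ → MvPolynomial σ k), (∀ i, (h i).IsHomogeneous e) ∧ (∃ i, h i ≠ 0) ∧
      (∀ c, (∀ i, c ∣ h i) → IsUnit c) ∧
      (∀ j, ∑ i, h i * pderiv i (pderiv j f) = 0) ∧ (∀ i, gnD h (h i) = 0) ∧
      ∑ i, h i * pderiv i f = 0 := by
  classical
  obtain ⟨N, g, hg, ⟨i0, hi0⟩, hH, hgD⟩ := gn_raw_field f d hd hf hdet
  let _ : NormalizationMonoid (MvPolynomial σ k) :=
    @StrongNormalizationMonoid.toNormalizationMonoid _ _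
      UniqueFactorizationMonoid.strongNormalizationMonoid
  let _ : NormalizedGCDMonoid (MvPolynomial σ k) :=
    UniqueFactorizationMonoid.toNormalizedGCDMonoid _
  obtain ⟨h, hh, hgcd⟩ := Finset.extract_gcd (s := Finset.univ) g ⟨i0, Finset.mem_univ _⟩
  set ρ := Finset.univ.gcd g
  replace hh : ∀ i, g i = ρ * h i := fun i => hh i (Finset.mem_univ _)
  have hρ : ρ ≠ 0 := fun e => hi0 (by rw [hh, e, zero_mul])
  have hne : ρ * h i0 ≠ 0 := hh i0 ▸ hi0
  obtain ⟨r, hr⟩ := gn_homog_factor ρ (h i0) N (hh i0 ▸ hg i0) hne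
  have hhom : ∀ i, h i ≠ 0 → (h i).IsHomogeneous (N - r) := by
    intro i hi
    obtain ⟨m, hm⟩ := gn_homog_factor (h i) ρ N (by rw [mul_comm, ← hh]; exact hg i)
      (mul_ne_zero hi hρ)
    have : r + m = N := (hr.mul hm).inj_right (hh i ▸ hg i) (mul_ne_zero hρ hi)
    rwa [show N - r = m by omega]
  have hgh : ∀ F, gnD g F = ρ * gnD h F := by
    intro F
    rw [gnD_apply, gnD_apply, Finset.mul_sum]
    exact Finset.sum_congr rfl fun i _ => by rw [hh, mul_assoc]
  have hH' : ∀ j, ∑ i, h i * pderiv i (pderiv j f) = 0 := by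
    intro j
    have := hH j
    simp only [hh, mul_assoc, ← Finset.mul_sum] at this
    exact (mul_eq_zero.1 this).resolve_left hρ
  refine ⟨N - r, h, ?_, ⟨i0, right_ne_zero_of_mul hne⟩, ?_, hH', ?_, ?_⟩
  · intro i
    by_cases hi : h i = 0
    · rw [hi]; exact isHomogeneous_zero _ _ _
    · exact hhom i hi
  · intro c hc
    have : c ∣ Finset.univ.gcd h := Finset.dvd_gcd fun i _ => hc i
    rw [hgcd] at this
    exact isUnit_of_dvd_one this
  · intro i
    by_cases hi : h i = 0
    · rw [hi, map_zero]
    have h1 := gnD_factor g hgD (h i) ρ (by rw [mul_comm, ← hh]; exact hgD i) (mul_ne_zero hi hρ)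
    rw [hgh] at h1
    exact (mul_eq_zero.1 h1).resolve_left hρ
  · have e1 : ∀ i, X i * ∑ j, h j * pderiv j (pderiv i f) = 0 := fun i => by rw [hH', mul_zero]
    have e2 : ∑ i, X i * ∑ j, h j * pderiv j (pderiv i f) = 0 :=
      Finset.sum_eq_zero fun i _ => e1 i
    simp only [Finset.mul_sum] at e2
    rw [Finset.sum_comm] at e2
    have e3 : ∀ j, ∑ i, X i * (h j * pderiv j (pderiv i f)) = (d - 1) • (h j * pderiv j f) := by
      intro j
      have := (hf.pderiv (i := j)).sum_X_mul_pderiv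
      rw [← mul_smul_comm, ← this, Finset.mul_sum]
      refine Finset.sum_congr rfl fun i _ => ?_
      rw [gn_pderiv_comm f j i]; ring
    simp only [e3] at e2
    rw [← Finset.smul_sum] at e2
    rcases smul_eq_zero.1 e2 with h1 | h1
    · omega
    · exact h1

lemma gn_self_comp (h : σ → MvPolynomial σ k) {e : ℕ} (he : 0 < e)
    (hh : ∀ i, (h i).IsHomogeneous e) (hD : ∀ i, gnD h (h i) = 0) (i : σ) :
    aeval h (h i) = 0 := by
  apply MvPolynomial.funext
  intro a
  rw [map_zero]
  have e1 : eval a (aeval h (h i)) = eval (fun j => eval a (h j)) (h i) := by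
    generalize h i = F
    induction F using MvPolynomial.induction_on with
    | C a => simp
    | add P Q hP hQ => rw [map_add, map_add, hP, hQ, map_add]
    | mul_X P j hP => rw [map_mul, map_mul, hP, map_mul, aeval_X, eval_X]
  rw [e1]
  let p : Polynomial k := aeval (fun j => Polynomial.C (a j) * Polynomial.X +
    Polynomial.C (eval a (h j))) (h i) - Polynomial.X ^ e * Polynomial.C (eval a (h i))
  have hpe : ∀ t, p.eval t = eval (fun j => a j * t + eval a (h j)) (h i) - t ^ e * eval a (h i) := by
    intro t
    simp only [p, Polynomial.eval_sub, Polynomial.eval_mul, Polynomial.eval_pow, Polynomial.eval_X,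
      Polynomial.eval_C]
    congr 1
    generalize h i = F
    induction F using MvPolynomial.induction_on with
    | C a => simp
    | add P Q hP hQ => simp [hP, hQ]
    | mul_X P j hP => simp [hP]
  have hp : p = 0 := by
    apply Polynomial.eq_zero_of_infinite_isRoot
    apply Set.Infinite.mono (s := {0}ᶜ)
    · intro t ht
      have ht : t ≠ 0 := ht
      simp only [Set.mem_ofPred_eq, Polynomial.IsRoot.def, hpe]
      have h1 := gnFlow_eval h hD (h i) (hD i) a t⁻¹
      have h3 : eval (fun j => t * (a j + t⁻¹ * eval a (h j))) (h i) =
          t ^ e * eval (fun j => a j + t⁻¹ * eval a (h j)) (h i) := by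
        simp only [eval_eq, Finset.mul_sum]
        refine Finset.sum_congr rfl fun s hs => ?_
        have := (hh i).degree_eq_sum_deg_support hs
        simp only [mul_pow, Finset.prod_mul_distrib, Finset.prod_pow_eq_pow_sum]
        rw [← this]
        ring
      rw [h1] at h3
      rw [← h3, sub_eq_zero]
      congr 2
      funext j
      field_simp
    · exact (Set.finite_singleton (0:k)).infinite_compl
  have := hpe 0
  rw [hp] at this
  simp [he.ne'] at this
  exact this.symm

end field

lemma gn_elim {A S ι : Type*} [CommRing A] [IsDomain A] [UniqueFactorizationMonoid A]
    [CommRing S] [IsDomain S] (a : A →+* S) (ha : Function.Injective a) (s : S)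
    (q : ι → Polynomial A) (hq : ∀ i, Polynomial.eval₂ a s (q i) = 0)
    (hcop : ∀ c, (∀ i, c ∣ q i) → IsUnit c) (hne : ∃ i, q i ≠ 0) : False := by
  classical
  let _ : NormalizationMonoid A :=
    @StrongNormalizationMonoid.toNormalizationMonoid _ _
      UniqueFactorizationMonoid.strongNormalizationMonoid
  let _ : NormalizedGCDMonoid A := UniqueFactorizationMonoid.toNormalizedGCDMonoid _
  have hex : ∃ n, ∃ p : Polynomial A, p.natDegree = n ∧ p ≠ 0 ∧ Polynomial.eval₂ a s p = 0 :=
    ⟨_, q hne.choose, rfl, hne.choose_spec, hq _⟩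
  obtain ⟨F0, hF0n, hF00, hF0⟩ := Nat.find_spec hex
  set F := F0.primPart with hF
  have hprim : F.IsPrimitive := F0.isPrimitive_primPart
  have hFn : F.natDegree = Nat.find hex := by rw [hF, Polynomial.natDegree_primPart, hF0n]
  have hFe : Polynomial.eval₂ a s F = 0 := by
    rw [F0.eq_C_content_mul_primPart, Polynomial.eval₂_mul, Polynomial.eval₂_C] at hF0
    rcases mul_eq_zero.1 hF0 with h | h
    · exfalso
      apply hF00
      rw [map_eq_zero_iff a ha] at h
      exact Polynomial.content_eq_zero_iff.1 h
    · exact h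
  have hF1 : F ≠ 0 := hprim.ne_zero
  have hpos : F.natDegree ≠ 0 := by
    intro h
    rw [Polynomial.eq_C_of_natDegree_eq_zero h, Polynomial.eval₂_C, map_eq_zero_iff a ha] at hFe
    apply hF1
    rw [Polynomial.eq_C_of_natDegree_eq_zero h, hFe, Polynomial.C_0]
  have key : ∀ (n : ℕ) (p : Polynomial A), p.natDegree ≤ n → Polynomial.eval₂ a s p = 0 →
      ∃ c : A, c ≠ 0 ∧ F ∣ Polynomial.C c * p := by
    intro n
    induction n with
    | zero =>
      intro p hpn hp
      refine ⟨1, one_ne_zero, ?_⟩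
      by_cases hp0 : p = 0
      · simp [hp0]
      · exact absurd ⟨p, rfl, hp0, hp⟩ (Nat.find_min hex (by omega))
    | succ n ih =>
      intro p hpn hp
      by_cases hp0 : p = 0
      · exact ⟨1, one_ne_zero, by simp [hp0]⟩
      by_cases hlt : p.natDegree < F.natDegree
      · exact absurd ⟨p, rfl, hp0, hp⟩ (Nat.find_min hex (by omega))
      push Not at hlt
      have h1 := Polynomial.natDegree_cancelLeads_lt_of_natDegree_le_natDegree hlt (by omega)
      obtain ⟨c, hc, w, hw⟩ := ih (F.cancelLeads p) (by omega) (by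
        simp [Polynomial.cancelLeads, Polynomial.eval₂_sub, Polynomial.eval₂_mul, hp, hFe])
      refine ⟨c * F.leadingCoeff, mul_ne_zero hc (Polynomial.leadingCoeff_ne_zero.2 hF1), ?_⟩
      rw [Polynomial.cancelLeads, Nat.sub_eq_zero_of_le hlt] at hw
      refine ⟨w + Polynomial.C c * (Polynomial.C p.leadingCoeff *
        Polynomial.X ^ (p.natDegree - F.natDegree)), ?_⟩
      rw [Polynomial.C_mul]
      linear_combination hw
  have hdvd : ∀ i, F ∣ q i := by
    intro i
    by_cases h0 : q i = 0
    · simp [h0]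
    obtain ⟨c, hc, hF⟩ := key _ (q i) le_rfl (hq i)
    have hcq : Polynomial.C c * q i ≠ 0 := mul_ne_zero (by simpa using hc) h0
    rw [← hprim.dvd_primPart_iff_dvd hcq,
      (Polynomial.associated_primPart_mul hcq).dvd_iff_dvd_right] at hF
    rw [← hprim.dvd_primPart_iff_dvd h0]
    exact (Polynomial.isUnit_primPart_C c).dvd_mul_left.1 hF
  have hu := hcop F hdvd
  exact hpos (Polynomial.natDegree_eq_zero_of_isUnit hu)

lemma gn_triple {k S ι : Type*} [Field k] [CommRing S] [IsDomain S] [Algebra k S] (u : Fin 4 → S)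
    (q : ι → MvPolynomial (Fin 4) k) (hq : ∀ i, aeval u (q i) = 0)
    (hcop : ∀ c, (∀ i, c ∣ q i) → IsUnit c) (hne : ∃ i, q i ≠ 0) :
    ¬ AlgebraicIndependent k (fun i : Fin 3 => u i.succ) := by
  intro hind
  have hlink : ∀ F : MvPolynomial (Fin 4) k,
      Polynomial.eval₂ (aeval (fun i : Fin 3 => u i.succ) : MvPolynomial (Fin 3) k →ₐ[k] S).toRingHom
        (u 0) (finSuccEquiv k 3 F) = aeval u F := by
    intro F
    induction F using MvPolynomial.induction_on with
    | C a => simp [finSuccEquiv_apply]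
    | add P Q hP hQ => rw [map_add, Polynomial.eval₂_add, hP, hQ, map_add]
    | mul_X P j hP =>
      rw [map_mul, Polynomial.eval₂_mul, hP, map_mul, aeval_X]
      congr 1
      cases j using Fin.cases with
      | zero => rw [finSuccEquiv_X_zero]; simp
      | succ j => rw [finSuccEquiv_X_succ]; simp
  refine gn_elim (aeval (fun i : Fin 3 => u i.succ) : MvPolynomial (Fin 3) k →ₐ[k] S).toRingHom
    hind (u 0) (fun i => finSuccEquiv k 3 (q i)) (fun i => by rw [hlink, hq]) ?_ ?_
  · intro c hc
    have := hcop ((finSuccEquiv k 3).symm c) (fun i => by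
      have := map_dvd (finSuccEquiv k 3).symm (hc i)
      simpa using this)
    have h2 := this.map (finSuccEquiv k 3)
    simpa using h2
  · obtain ⟨i, hi⟩ := hne
    exact ⟨i, by simpa using hi⟩

lemma gn_triple' {k S ι : Type*} [Field k] [CommRing S] [IsDomain S] [Algebra k S] (u : Fin 4 → S)
    (q : ι → MvPolynomial (Fin 4) k) (hq : ∀ i, aeval u (q i) = 0)
    (hcop : ∀ c, (∀ i, c ∣ q i) → IsUnit c) (hne : ∃ i, q i ≠ 0) (τ : Fin 3 → Fin 4)
    (hτ : Function.Injective τ) :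
    ¬ AlgebraicIndependent k (fun i : Fin 3 => u (τ i)) := by
  have hns : ¬ Function.Surjective τ := by
    intro hs
    have := Fintype.card_le_of_surjective τ hs
    simp at this
  rw [Function.Surjective] at hns
  push Not at hns
  obtain ⟨x, hx⟩ := hns
  have hinj : Function.Injective (Fin.cons x τ : Fin 4 → Fin 4) := by
    rw [Fin.cons_injective_iff]
    exact ⟨by rintro ⟨y, hy⟩; exact hx y hy, hτ⟩
  let π : Fin 4 ≃ Fin 4 := Equiv.ofBijective _ (Finite.injective_iff_bijective.1 hinj)
  have hπ : ∀ i : Fin 3, π i.succ = τ i := fun i => by simp [π]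
  have := gn_triple (fun i => u (π i)) (fun i => renameEquiv k π.symm (q i)) (fun i => by
    rw [renameEquiv_apply, aeval_rename]
    have : (fun i => u (π i)) ∘ π.symm = u := by funext j; simp
    rw [this, hq]) (fun c hc => by
      have := hcop ((renameEquiv k π.symm).symm c) (fun i => by
        have := map_dvd (renameEquiv k π.symm).symm (hc i)
        simpa only [AlgEquiv.symm_apply_apply] using this)
      have h2 := this.map (renameEquiv k π.symm)
      simpa only [AlgEquiv.apply_symm_apply] using h2)
    (by
      obtain ⟨i, hi⟩ := hne
      exact ⟨i, (map_ne_zero_iff _ (renameEquiv k π.symm).injective).2 hi⟩)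
  simpa only [hπ] using this

set_option linter.unusedSectionVars false

section field
variable {σ : Type*} [Fintype σ] {k : Type*} [Field k] [CharZero k]

lemma gn_sep_rel (u : Fin 3 → MvPolynomial σ k) {e : ℕ} (he : 0 < e)
    (hu : ∀ i, (u i).IsHomogeneous e) (hdep : ¬ AlgebraicIndependent k u) (hu0 : u 0 ≠ 0)
    (hnp : ¬ ∃ c : k, u 1 = C c * u 0) :
    ∃ (N : ℕ) (R : MvPolynomial (Fin 3) k), R.IsHomogeneous N ∧ aeval u R = 0 ∧
      aeval u (pderiv 2 R) ≠ 0 := by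
  obtain ⟨n, R, hR, hR0, hR1, hmin⟩ := gn_min_relation u he hu hdep
  have hn : n ≠ 0 := by
    rintro rfl
    obtain ⟨c, rfl⟩ := gn_homog_zero hR
    simp at hR1
    exact hR0 (by simp [hR1])
  refine ⟨n, R, hR, hR1, fun h2 => ?_⟩
  have hm : ∀ i, aeval u (pderiv i R) = 0 → pderiv i R = 0 := fun i hi =>
    hmin (n - 1) (by omega) _ hR.pderiv hi
  have hE : aeval u (∑ i, X i * pderiv i R) = aeval u (n • R) := by rw [hR.sum_X_mul_pderiv]
  rw [map_sum, Fin.sum_univ_three, map_mul, map_mul, map_mul, aeval_X, aeval_X, aeval_X, h2,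
    map_nsmul, hR1, smul_zero, mul_zero, add_zero] at hE
  have hch : ∀ j, aeval u (pderiv 0 R) * pderiv j (u 0) + aeval u (pderiv 1 R) * pderiv j (u 1) = 0 := by
    intro j
    have := gn_chain (pderiv j) u R
    rw [hR1, map_zero, Fin.sum_univ_three, h2, zero_mul, add_zero] at this
    exact this.symm
  set a0 := aeval u (pderiv 0 R) with ha0
  set a1 := aeval u (pderiv 1 R) with ha1
  apply hnp
  apply gn_prop (hu 0) (hu 1) hu0
  intro j
  by_cases h0 : a0 = 0
  · by_cases h1 : a1 = 0
    · exfalso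
      apply hn
      apply gn_homog_const_of_pderiv hR _ hR0
      intro j
      fin_cases j
      · exact hm 0 h0
      · exact hm 1 h1
      · exact hm 2 h2
    · apply mul_left_cancel₀ h1
      linear_combination u 0 * hch j - pderiv j (u 0) * hE
  · apply mul_left_cancel₀ h0
    linear_combination pderiv j (u 1) * hE - u 1 * hch j

lemma gn_taylor {B : Type*} [CommRing B] [Algebra k B] (a b T δ : B) (R : MvPolynomial (Fin 3) k) :
    ∃ E, aeval ![a, b, T + δ] R = aeval ![a, b, T] R +
      δ * (aeval ![a, b, T] (pderiv 2 R) + δ * E) := by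
  induction R using MvPolynomial.induction_on with
  | C a => exact ⟨0, by simp⟩
  | add P Q hP hQ =>
    obtain ⟨E, hE⟩ := hP
    obtain ⟨E', hE'⟩ := hQ
    refine ⟨E + E', ?_⟩
    simp only [map_add, hE, hE']
    ring
  | mul_X P j hP =>
    obtain ⟨E, hE⟩ := hP
    fin_cases j
    · refine ⟨E * a, ?_⟩
      simp [hE, pderiv_X]
      ring
    · refine ⟨E * b, ?_⟩
      simp [hE, pderiv_X]
      ring
    · refine ⟨E * T + aeval ![a, b, T] (pderiv 2 P) + δ * E, ?_⟩
      simp [hE, pderiv_X]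
      ring

lemma gn_scale {τ B : Type*} [CommRing B] [Algebra k B] {R : MvPolynomial τ k} {N : ℕ}
    (hR : R.IsHomogeneous N) (u : τ → B) (c : B) :
    aeval (fun i => c * u i) R = c ^ N * aeval u R := by
  simp only [aeval_def, eval₂_eq, Finset.mul_sum]
  refine Finset.sum_congr rfl fun s hs => ?_
  have := hR.degree_eq_sum_deg_support hs
  simp only [mul_pow, Finset.prod_mul_distrib, Finset.prod_pow_eq_pow_sum]
  rw [← this]
  ring

lemma gn_three {A B : Type*} [CommRing A] [Algebra k A] [CommRing B] [Algebra k B] (φ : A →ₐ[k] B)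
    (a b c : A) (R : MvPolynomial (Fin 3) k) :
    φ (aeval ![a, b, c] R) = aeval ![φ a, φ b, φ c] R := by
  rw [comp_aeval_apply]
  congr 2
  funext i
  fin_cases i <;> rfl

lemma gn_scale3 {B : Type*} [CommRing B] [Algebra k B] {R : MvPolynomial (Fin 3) k} {N : ℕ}
    (hR : R.IsHomogeneous N) (x y z c : B) :
    aeval ![c * x, c * y, c * z] R = c ^ N * aeval ![x, y, z] R := by
  rw [← gn_scale hR]
  congr 2
  funext i
  fin_cases i <;> rfl

lemma gn_final {Q A : Type*} [CommRing Q] [IsDomain Q] [Algebra k Q] [CommRing A] [IsDomain A]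
    [Algebra k A] (dq : Q →ₐ[k] A) {R : MvPolynomial (Fin 3) k} {N : ℕ}
    (hR : R.IsHomogeneous N) (x0 x1 xj y0 y1 yj : Q)
    (hx : aeval ![x0, x1, xj] R = 0) (hy : aeval ![y0, y1, yj] R = 0)
    (hxy : x0 * y1 = x1 * y0) (e0 : dq x0 = dq y0) (ej : dq xj = dq yj)
    (h0 : dq y0 ≠ 0) (hR2 : aeval ![dq y0, dq y1, dq yj] (pderiv 2 R) ≠ 0) :
    xj * y0 = x0 * yj := by
  by_contra hne
  have h1 : aeval ![y0 * x0, y0 * x1, y0 * xj] R = 0 := by rw [gn_scale3 hR, hx, mul_zero]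
  have h2 : aeval ![x0 * y0, x0 * y1, x0 * yj] R = 0 := by rw [gn_scale3 hR, hy, mul_zero]
  obtain ⟨E, hE⟩ := gn_taylor (x0 * y0) (x0 * y1) (x0 * yj) (xj * y0 - x0 * yj) R
  have e1 : x0 * yj + (xj * y0 - x0 * yj) = y0 * xj := by ring
  have e2 : x0 * y0 = y0 * x0 := by ring
  have e3 : x0 * y1 = y0 * x1 := by rw [hxy]; ring
  rw [h2, e1, e2, e3, h1, zero_add] at hE
  have hd := (mul_eq_zero.1 hE.symm).resolve_left (sub_ne_zero.2 hne)
  have h3 := congrArg dq hd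
  rw [map_add, map_mul, map_sub, map_mul, map_mul, e0, ej, mul_comm (dq yj), sub_self, zero_mul,
    add_zero, map_zero, ← e2, ← e3, gn_scale3 hR.pderiv, map_mul, map_pow, e0, gn_three] at h3
  exact (mul_ne_zero (pow_ne_zero _ h0) hR2) h3

lemma gn_quot {A B : Type*} [CommRing A] [IsDomain A] [Algebra k A] [CommRing B] [Algebra k B]
    (P : B) (hP : Prime P) (dg : B →ₐ[k] A) (hPd : dg P = 0) (cx cy : A →ₐ[k] B)
    (hdx : ∀ F, dg (cx F) = F) (hdy : ∀ F, dg (cy F) = F)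
    {R : MvPolynomial (Fin 3) k} {N : ℕ}
    (hR : R.IsHomogeneous N) (a b c : A) (ha : a ≠ 0) (hR1 : aeval ![a, b, c] R = 0)
    (hR2 : aeval ![a, b, c] (pderiv 2 R) ≠ 0)
    (hM : P ∣ cx a * cy b - cx b * cy a) : P ∣ cx a * cy c - cx c * cy a := by
  let I := Ideal.span {P}
  have hIp : I.IsPrime := (Ideal.span_singleton_prime hP.ne_zero).2 hP
  let q : B →ₐ[k] (B ⧸ I) := Ideal.Quotient.mkₐ k I
  let dq : (B ⧸ I) →ₐ[k] A :=
    Ideal.Quotient.liftₐ I dg (by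
      intro a ha
      obtain ⟨r, rfl⟩ := Ideal.mem_span_singleton.1 ha
      rw [map_mul, hPd, zero_mul])
  have hdq : ∀ F, dq (q F) = dg F := fun F => rfl
  have hqz : ∀ F, q F = 0 ↔ P ∣ F := fun F => by
    rw [← Ideal.mem_span_singleton]; exact Ideal.Quotient.eq_zero_iff_mem
  have hqM : q (cx a) * q (cy b) = q (cx b) * q (cy a) := by
    rw [← sub_eq_zero, ← map_mul, ← map_mul, ← map_sub, hqz]
    exact hM
  have hx : aeval ![q (cx a), q (cx b), q (cx c)] R = 0 := by
    have ht := gn_three (q.comp cx) a b c R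
    rw [hR1, map_zero] at ht
    exact ht.symm
  have hy : aeval ![q (cy a), q (cy b), q (cy c)] R = 0 := by
    have ht := gn_three (q.comp cy) a b c R
    rw [hR1, map_zero] at ht
    exact ht.symm
  have := gn_final dq hR _ _ _ _ _ _ hx hy hqM (by rw [hdq, hdq, hdx, hdy])
    (by rw [hdq, hdq, hdx, hdy])
    (by rw [hdq, hdy]; exact ha) (by rw [hdq, hdq, hdq, hdy, hdy, hdy]; exact hR2)
  rw [← hqz, map_sub, map_mul, map_mul, this, sub_self]

/-- the common component of the fibres -/
lemma gn_P (h : σ → MvPolynomial σ k) {e : ℕ} 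
    (hh : ∀ i, (h i).IsHomogeneous e) (hD : ∀ i, gnD h (h i) = 0) (i0 i1 : σ) (h0 : h i0 ≠ 0)
    (hnp : ¬ ∃ c : k, h i1 = C c * h i0)
    (hrel : ∀ j, j ≠ i0 → j ≠ i1 → ∃ (N : ℕ) (R : MvPolynomial (Fin 3) k), R.IsHomogeneous N ∧
      aeval ![h i0, h i1, h j] R = 0 ∧ aeval ![h i0, h i1, h j] (pderiv 2 R) ≠ 0) :
    ∃ (P : MvPolynomial σ (MvPolynomial σ k)) (m : ℕ), Prime P ∧ P.IsHomogeneous m ∧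
      eval X P = 0 ∧ gnD (fun i => map C (h i)) P = 0 ∧
      ∀ j, P ∣ map C (h i0) * C (h j) - map C (h j) * C (h i0) := by
  classical
  set M := map C (h i0) * C (h i1) - map C (h i1) * C (h i0) with hM
  have hdx : ∀ F : MvPolynomial σ k, eval X (map C F : MvPolynomial σ (MvPolynomial σ k)) = F := by
    intro F
    rw [eval_map, eval₂_eta]
  have hM0 : M ≠ 0 := by
    intro hM0
    obtain ⟨b, hb⟩ : ∃ b, eval b (h i0) ≠ 0 := by
      by_contra hcon
      push Not at hcon
      exact h0 (MvPolynomial.funext fun b => by rw [hcon, map_zero])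
    have h1 := congrArg (map (eval b)) hM0
    have hc : ∀ F : MvPolynomial σ k, map (eval b) (map C F) = F := by
      intro F
      rw [map_map]
      have : (eval b).comp C = RingHom.id k := by ext; simp
      rw [this, map_id]
    simp only [hM, map_sub, map_mul, map_C, hc, map_zero] at h1
    apply hnp
    refine ⟨eval b (h i1) / eval b (h i0), ?_⟩
    have h2 : C (eval b (h i0)) * h i1 = C (eval b (h i1)) * h i0 := by linear_combination -h1
    have hc1 : (C (eval b (h i0))⁻¹ : MvPolynomial σ k) * C (eval b (h i0)) = 1 := by
      rw [← C_mul, inv_mul_cancel₀ hb, C_1]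
    rw [div_eq_inv_mul, C_mul, mul_assoc, ← h2, ← mul_assoc, hc1, one_mul]
  have hMhom : M.IsHomogeneous e := by
    apply IsHomogeneous.sub
    · exact (((hh i0).map C).mul (isHomogeneous_C σ (h i1)))
    · exact (((hh i1).map C).mul (isHomogeneous_C σ (h i0)))
  have hMdiag : eval X M = 0 := by
    simp only [hM, map_sub, map_mul, hdx, eval_C]; ring
  have hDx : ∀ i, gnD (fun i => map C (h i) : σ → MvPolynomial σ (MvPolynomial σ k))
      (map C (h i)) = 0 := by
    intro i
    rw [gnD_apply]
    simp only [pderiv_map, ← map_mul, ← map_sum]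
    rw [← gnD_apply, hD, map_zero]
  have hDC : ∀ a, gnD (fun i => map C (h i) : σ → MvPolynomial σ (MvPolynomial σ k)) (C a) = 0 := by
    intro a; rw [gnD_apply]; simp
  have hDM : gnD (fun i => map C (h i) : σ → MvPolynomial σ (MvPolynomial σ k)) M = 0 := by
    rw [hM]
    simp only [map_sub, Derivation.leibniz, hDx, hDC]
    simp
  obtain ⟨s, hs, hassoc⟩ := UniqueFactorizationMonoid.exists_prime_factors M hM0
  have hsd : eval X s.prod = 0 := by
    obtain ⟨w, hw⟩ := hassoc
    rw [← hw, map_mul] at hMdiag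
    exact (mul_eq_zero.1 hMdiag).resolve_right (w.isUnit.map _).ne_zero
  rw [map_multiset_prod, Multiset.prod_eq_zero_iff, Multiset.mem_map] at hsd
  obtain ⟨P, hPs, hPd⟩ := hsd
  have hP := hs P hPs
  have hPM : P ∣ M := (Multiset.dvd_prod hPs).trans hassoc.dvd
  obtain ⟨Q, hQ⟩ := hPM
  obtain ⟨m, hm⟩ := gn_homog_factor P Q e (hQ ▸ hMhom) (hQ ▸ hM0)
  refine ⟨P, m, hP, hm, hPd, gnD_factor _ hDx P Q (hQ ▸ hDM) (hQ ▸ hM0), ?_⟩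
  intro j
  by_cases hj0 : j = i0
  · subst hj0; simp [mul_comm]
  by_cases hj1 : j = i1
  · subst hj1; exact ⟨Q, hQ⟩
  obtain ⟨N, R, hR, hR1, hR2⟩ := hrel j hj0 hj1
  let dg : MvPolynomial σ (MvPolynomial σ k) →ₐ[k] MvPolynomial σ k :=
    (aeval (X : σ → MvPolynomial σ k) :
      MvPolynomial σ (MvPolynomial σ k) →ₐ[MvPolynomial σ k] MvPolynomial σ k).restrictScalars k
  have hdg : ∀ F, dg F = eval X F := fun F => by
    simp only [dg, AlgHom.restrictScalars_apply, aeval_def, ← eval₂_id]; rfl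
  let cx : MvPolynomial σ k →ₐ[k] MvPolynomial σ (MvPolynomial σ k) := mapAlgHom (Algebra.ofId k _)
  have hcx : ∀ F, cx F = map C F := fun F => rfl
  let cy : MvPolynomial σ k →ₐ[k] MvPolynomial σ (MvPolynomial σ k) :=
    (Algebra.ofId (MvPolynomial σ k) (MvPolynomial σ (MvPolynomial σ k))).restrictScalars k
  have hcy : ∀ F, cy F = C F := fun F => rfl
  exact gn_quot P hP dg (by rw [hdg, hPd]) cx cy (fun F => by rw [hdg, hcx, hdx])
    (fun F => by rw [hdg, hcy, eval_C]) hR (h i0) (h i1) (h j) h0 hR1 hR2 ⟨Q, hQ⟩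
end field

set_option linter.unusedSectionVars false

section field
variable {σ : Type*} [Fintype σ] {k : Type*} [Field k] [CharZero k]

lemma gn_mapmap (b : σ → k) (F : MvPolynomial σ k) : map (eval b) (map C F) = F := by
  rw [map_map]
  have : (eval b).comp C = RingHom.id k := by ext; simp
  rw [this, map_id]

lemma gn_Pb_kill (h : σ → MvPolynomial σ k) (i0 : σ) (h0 : h i0 ≠ 0)
    (P : MvPolynomial σ (MvPolynomial σ k)) (m : ℕ) (hP : Prime P) (hm : P.IsHomogeneous m)
    (hPd : eval X P = 0) (hPD : gnD (fun i => map C (h i)) P = 0)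
    (hdvd : ∀ j, P ∣ map C (h i0) * C (h j) - map C (h j) * C (h i0)) (b c : σ → k) :
    ∑ i, C (eval c (h i)) * pderiv i (map (eval b) P) = 0 := by
  have hdx : ∀ F : MvPolynomial σ k, eval X (map C F : MvPolynomial σ (MvPolynomial σ k)) = F := by
    intro F
    rw [eval_map, eval₂_eta]
  set Pb := map (eval b) P with hPb
  have hPbm : Pb.IsHomogeneous m := hm.map _
  have hD : ∑ i, h i * pderiv i Pb = 0 := by
    have h1 := congrArg (map (eval b)) hPD
    rw [gnD_apply, map_sum, map_zero] at h1
    rw [← h1]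
    refine Finset.sum_congr rfl fun i _ => ?_
    rw [map_mul, gn_mapmap, hPb, pderiv_map]
  set E : MvPolynomial σ (MvPolynomial σ k) := ∑ i, C (h i) * map C (pderiv i Pb) with hE
  have hEm : E.IsHomogeneous (m - 1) := by
    apply IsHomogeneous.sum
    intro i _
    have := (isHomogeneous_C σ (h i)).mul ((hPbm.pderiv (i := i)).map (C : k →+* MvPolynomial σ k))
    rwa [zero_add] at this
  have hm0 : m ≠ 0 := by
    rintro rfl
    obtain ⟨c, rfl⟩ := gn_homog_zero hm
    rw [eval_C] at hPd
    rw [hPd, C_0] at hP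
    exact hP.ne_zero rfl
  have hPE : P ∣ E := by
    have h1 : P ∣ map C (h i0) * E := by
      have : map C (h i0) * E =
          ∑ i, (map C (h i0) * C (h i) - map C (h i) * C (h i0)) * map C (pderiv i Pb) := by
        simp only [sub_mul, Finset.sum_sub_distrib]
        have h2 : ∑ i, map C (h i) * C (h i0) * map C (pderiv i Pb) =
            C (h i0) * map C (∑ i, h i * pderiv i Pb) := by
          rw [map_sum, Finset.mul_sum]
          refine Finset.sum_congr rfl fun i _ => ?_
          rw [map_mul]; ring
        rw [h2, hD, map_zero, mul_zero, sub_zero, hE, Finset.mul_sum]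
        refine Finset.sum_congr rfl fun i _ => ?_
        ring
      rw [this]
      exact Finset.dvd_sum fun i _ => (hdvd i).mul_right _
    refine (hP.dvd_or_dvd h1).resolve_left ?_
    rintro ⟨Q, hQ⟩
    have h2 := congrArg (eval X) hQ
    rw [hdx, map_mul, hPd, zero_mul] at h2
    exact h0 h2
  have hE0 : E = 0 := gn_dvd_degree hm hEm (by omega) hPE
  have h3 := congrArg (map (eval c)) hE0
  rw [hE, map_sum, map_zero] at h3
  rw [← h3]
  refine Finset.sum_congr rfl fun i _ => ?_
  rw [map_mul, map_C, gn_mapmap]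

lemma gn_homog_eval {F : MvPolynomial σ k} {m : ℕ} (hF : F.IsHomogeneous m) (t : k) (b : σ → k) :
    eval (t • b) F = t ^ m * eval b F := by
  have := gn_scale hF b t
  exact this

/-- the span of the values of h -/
def gnV (h : σ → MvPolynomial σ k) : Submodule k (σ → k) :=
  Submodule.span k (Set.range fun (c : σ → k) (i : σ) => eval c (h i))

lemma gn_V_small (h : Fin 4 → MvPolynomial (Fin 4) k) (i0 : Fin 4) (h0 : h i0 ≠ 0)
    (P : MvPolynomial (Fin 4) (MvPolynomial (Fin 4) k)) (m : ℕ) (hP : Prime P)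
    (hm : P.IsHomogeneous m)
    (hPd : eval X P = 0) (hPD : gnD (fun i => map C (h i)) P = 0)
    (hdvd : ∀ j, P ∣ map C (h i0) * C (h j) - map C (h j) * C (h i0)) :
    Module.finrank k (gnV h) ≤ 2 := by
  by_contra hcon
  have hV : ∀ b, ∀ v ∈ gnV h, ∑ i, C (v i) * pderiv i (map (eval b) P) = 0 := by
    intro b v hv
    induction hv using Submodule.span_induction with
    | mem x hx =>
      obtain ⟨c, rfl⟩ := hx
      exact gn_Pb_kill h i0 h0 P m hP hm hPd hPD hdvd b c
    | zero => simp
    | add x y _ _ hx hy =>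
      simp only [Pi.add_apply, C_add, add_mul, Finset.sum_add_distrib, hx, hy, add_zero]
    | smul a x _ hx =>
      simp only [Pi.smul_apply, smul_eq_mul, C_mul, mul_assoc, ← Finset.mul_sum, hx, mul_zero]
  have hinv : ∀ b a, ∀ v ∈ gnV h, eval (a + v) (map (eval b) P) = eval a (map (eval b) P) :=
    fun b a v hv => gn_const_invariant v _ (hV b v hv) a
  have hbb : ∀ b, eval b (map (eval b) P) = 0 := by
    intro b
    have h1 := congrArg (eval b) hPd
    rw [map_zero] at h1
    rw [← h1]
    have h2 : ((eval b).comp (map (eval b)) : MvPolynomial (Fin 4) (MvPolynomial (Fin 4) k) →+* k)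
      = (eval b).comp (eval X) := by
      apply MvPolynomial.ringHom_ext
      · intro r; simp
      · intro i; simp
    exact congrArg (fun φ : MvPolynomial (Fin 4) (MvPolynomial (Fin 4) k) →+* k => φ P) h2
  have hzero : ∀ b, gnV h ⊔ Submodule.span k {b} = ⊤ → map (eval b) P = 0 := by
    intro b hb
    apply MvPolynomial.funext
    intro a
    have ha : a ∈ gnV h ⊔ Submodule.span k {b} := hb ▸ Submodule.mem_top
    obtain ⟨v, hv, w, hw, rfl⟩ := Submodule.mem_sup.1 ha
    obtain ⟨t, rfl⟩ := Submodule.mem_span_singleton.1 hw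
    rw [add_comm, hinv b _ v hv, gn_homog_eval (hm.map _), hbb, mul_zero, map_zero]
  obtain ⟨l, hl0, hl⟩ : ∃ l : MvPolynomial (Fin 4) k, l ≠ 0 ∧ ∀ b, eval b l ≠ 0 →
      gnV h ⊔ Submodule.span k {b} = ⊤ := by
    by_cases htop : gnV h = ⊤
    · exact ⟨1, one_ne_zero, fun b _ => by rw [htop]; simp⟩
    · obtain ⟨g, hg0, hg⟩ := Submodule.exists_le_ker_of_lt_top _ (lt_top_iff_ne_top.2 htop)
      refine ⟨∑ i, C (g (Pi.single i 1)) * X i, ?_, ?_⟩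
      · intro hl
        apply hg0
        apply LinearMap.pi_ext'
        intro i
        ext
        have := congrArg (eval (Pi.single i (1:k))) hl
        simpa [Pi.single_apply] using this
      · intro b hb
        have hbV : b ∉ gnV h := by
          intro hbV
          apply hb
          have h1 : g b = 0 := hg hbV
          have h2 : b = ∑ i, b i • Pi.single i (1:k) := by
            ext j; simp [Pi.single_apply]
          rw [h2, map_sum] at h1
          simp only [map_smul, smul_eq_mul] at h1
          simp only [map_sum, map_mul, eval_C, eval_X]
          rw [← h1]
          exact Finset.sum_congr rfl fun i _ => mul_comm _ _
        apply Submodule.eq_top_of_finrank_eq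
        have hlt : gnV h < gnV h ⊔ Submodule.span k {b} := by
          refine lt_of_le_of_ne le_sup_left fun he => hbV ?_
          rw [he]
          exact Submodule.mem_sup_right (Submodule.mem_span_singleton_self b)
        have h3 := Submodule.finrank_lt_finrank_of_lt hlt
        have h4 := Submodule.finrank_le (gnV h ⊔ Submodule.span k {b})
        simp only [Module.finrank_fin_fun] at h4 ⊢
        omega
  apply hP.ne_zero
  ext1 s
  rw [coeff_zero]
  have : l * coeff s P = 0 := by
    apply MvPolynomial.funext
    intro b
    rw [map_mul, map_zero]
    by_cases hb : eval b l = 0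
    · rw [hb, zero_mul]
    · have := congrArg (coeff s) (hzero b (hl b hb))
      rw [coeff_map, coeff_zero] at this
      rw [this, mul_zero]
  exact (mul_eq_zero.1 this).resolve_left hl0
end field

set_option linter.unusedSectionVars false

section field
variable {k : Type*} [Field k] [CharZero k]

lemma gn_functional (g : (Fin 4 → k) →ₗ[k] k) (h : Fin 4 → MvPolynomial (Fin 4) k) (c : Fin 4 → k) :
    eval c (∑ i, C (g (Pi.single i 1)) * h i) = g (fun i => eval c (h i)) := by
  have h2 : (fun i => eval c (h i)) = ∑ i, eval c (h i) • Pi.single i (1:k) := by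
    ext j; simp [Pi.single_apply]
  rw [h2, map_sum, map_sum]
  simp only [map_smul, smul_eq_mul, map_mul, eval_C]
  exact Finset.sum_congr rfl fun i _ => mul_comm _ _

lemma gn_exists_eval {F : MvPolynomial (Fin 4) k} (h0 : F ≠ 0) : ∃ b, eval b F ≠ 0 := by
  by_contra hcon
  push Not at hcon
  exact h0 (MvPolynomial.funext fun b => by rw [hcon, map_zero])

lemma gn_rank2 (h : Fin 4 → MvPolynomial (Fin 4) k) (i0 i1 : Fin 4) (h0 : h i0 ≠ 0)
    (hnp : ¬ ∃ c : k, h i1 = C c * h i0) (hV : Module.finrank k (gnV h) ≤ 2) :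
    ∃ (A B : Fin 4 → k) (u w : MvPolynomial (Fin 4) k), A ≠ 0 ∧ (∀ c : k, B ≠ c • A) ∧
      ∀ i, h i = C (A i) * u + C (B i) * w := by
  have hmem : ∀ c, (fun i => eval c (h i)) ∈ gnV h := fun c => Submodule.subset_span ⟨c, rfl⟩
  rcases Nat.lt_or_ge 1 (Module.finrank k (gnV h)) with hr | hr
  · have hr2 : Module.finrank k (gnV h) = 2 := by omega
    let b := Module.finBasisOfFinrankEq k (gnV h) hr2
    obtain ⟨g0, hg0⟩ := LinearMap.exists_extend (b.coord 0)
    obtain ⟨g1, hg1⟩ := LinearMap.exists_extend (b.coord 1)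
    refine ⟨b 0, b 1, ∑ i, C (g0 (Pi.single i 1)) * h i, ∑ i, C (g1 (Pi.single i 1)) * h i,
      ?_, ?_, ?_⟩
    · intro h
      exact b.ne_zero 0 (Subtype.ext h)
    · intro c hc
      have h1 : b 1 = c • b 0 := Subtype.ext hc
      have h2 := congrArg (b.coord 1) h1
      simp [Finsupp.single_apply] at h2
    · intro i
      apply MvPolynomial.funext
      intro c
      rw [map_add, map_mul, map_mul, gn_functional, gn_functional, eval_C, eval_C]
      have e0 : g0 (fun i => eval c (h i)) = b.coord 0 ⟨_, hmem c⟩ := by rw [← hg0]; rfl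
      have e1 : g1 (fun i => eval c (h i)) = b.coord 1 ⟨_, hmem c⟩ := by rw [← hg1]; rfl
      rw [e0, e1]
      have h3 := b.sum_repr ⟨_, hmem c⟩
      rw [Fin.sum_univ_two] at h3
      have h4 := congrFun (congrArg Subtype.val h3) i
      simp only [Submodule.coe_add, Submodule.coe_smul, Pi.add_apply, Pi.smul_apply,
        smul_eq_mul] at h4
      rw [← h4, Module.Basis.coord_apply, Module.Basis.coord_apply]
      ring
  · exfalso
    obtain ⟨v, hv⟩ := finrank_le_one_iff.1 hr
    obtain ⟨y, hy⟩ := gn_exists_eval h0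
    apply hnp
    refine ⟨eval y (h i1) / eval y (h i0), ?_⟩
    apply MvPolynomial.funext
    intro x
    obtain ⟨s, hs⟩ := hv ⟨_, hmem x⟩
    obtain ⟨t, ht⟩ := hv ⟨_, hmem y⟩
    have hs' : ∀ i, s * (v : Fin 4 → k) i = eval x (h i) := fun i =>
      congrFun (congrArg Subtype.val hs) i
    have ht' : ∀ i, t * (v : Fin 4 → k) i = eval y (h i) := fun i =>
      congrFun (congrArg Subtype.val ht) i
    rw [map_mul, eval_C, div_mul_eq_mul_div, eq_div_iff hy, ← hs', ← hs', ← ht', ← ht']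
    ring

lemma gn_cone (f : MvPolynomial (Fin 4) k) (d : ℕ) (hd : 3 ≤ d) (hf : f.IsHomogeneous d)
    (hdet : (Matrix.of fun i j => pderiv i (pderiv j f)).det = 0) :
    ∃ a : Fin 4 → k, a ≠ 0 ∧ ∑ i, C (a i) * pderiv i f = 0 := by
  obtain ⟨e, h, hh, ⟨i0, h0⟩, hcop, hjac, hD, hf0⟩ := gn_field f d hd hf hdet
  by_cases hall : ∀ j, ∃ c : k, h j = C c * h i0
  · choose c hc using hall
    refine ⟨c, ?_, ?_⟩
    · intro hc0
      have := hc i0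
      rw [hc0] at this
      simp at this
      exact h0 this
    · have : h i0 * ∑ i, C (c i) * pderiv i f = 0 := by
        rw [← hf0, Finset.mul_sum]
        refine Finset.sum_congr rfl fun i _ => ?_
        rw [hc i]; ring
      exact (mul_eq_zero.1 this).resolve_left h0
  · push Not at hall
    obtain ⟨i1, hi1⟩ := hall
    have hnp : ¬ ∃ c : k, h i1 = C c * h i0 := by push Not; exact hi1
    have he : 0 < e := by
      rcases Nat.eq_zero_or_pos e with rfl | he
      · exfalso
        obtain ⟨c0, hc0⟩ := gn_homog_zero (hh i0)
        obtain ⟨c1, hc1⟩ := gn_homog_zero (hh i1)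
        have hc00 : c0 ≠ 0 := by rintro rfl; exact h0 (by rw [hc0, C_0])
        apply hnp
        refine ⟨c1 / c0, ?_⟩
        rw [hc0, hc1, ← C_mul, div_mul_cancel₀ _ hc00]
      · exact he
    have hne : i1 ≠ i0 := by
      rintro rfl
      exact hnp ⟨1, by rw [C_1, one_mul]⟩
    have hrel : ∀ j, j ≠ i0 → j ≠ i1 → ∃ (N : ℕ) (R : MvPolynomial (Fin 3) k), R.IsHomogeneous N ∧
      aeval ![h i0, h i1, h j] R = 0 ∧ aeval ![h i0, h i1, h j] (pderiv 2 R) ≠ 0 := by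
      intro j hj0 hj1
      have hτ : Function.Injective ![i0, i1, j] := by
        intro x y
        fin_cases x <;> fin_cases y <;> simp [hj0, hj1, hne, hj0.symm, hj1.symm, hne.symm]
      have h1 := gn_triple' h h (gn_self_comp h he hh hD) hcop ⟨i0, h0⟩ _ hτ
      have e1 : (fun i : Fin 3 => h (![i0, i1, j] i)) = ![h i0, h i1, h j] := by
        funext i
        fin_cases i <;> rfl
      rw [e1] at h1
      refine gn_sep_rel _ he ?_ h1 h0 hnp
      intro i
      fin_cases i
      · exact hh i0
      · exact hh i1
      · exact hh j
    obtain ⟨P, m, hP, hm, hPd, hPD, hdvd⟩ := gn_P h hh hD i0 i1 h0 hnp hrel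
    have hV := gn_V_small h i0 h0 P m hP hm hPd hPD hdvd
    obtain ⟨A, B, u, w, hA, hB, huw⟩ := gn_rank2 h i0 i1 h0 hnp hV
    set fA := ∑ i, C (A i) * pderiv i f with hfA
    set fB := ∑ i, C (B i) * pderiv i f with hfB
    by_cases hfA0 : fA = 0
    · exact ⟨A, hA, hfA0⟩
    have hhom : ∀ a : Fin 4 → k, (∑ i, C (a i) * pderiv i f).IsHomogeneous (d - 1) := by
      intro a
      apply IsHomogeneous.sum
      intro i _
      have := (isHomogeneous_C (Fin 4) (a i)).mul (hf.pderiv (i := i))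
      rwa [zero_add] at this
    have h1 : u * fA + w * fB = 0 := by
      rw [← hf0, hfA, hfB, Finset.mul_sum, Finset.mul_sum, ← Finset.sum_add_distrib]
      refine Finset.sum_congr rfl fun i _ => ?_
      rw [huw i]; ring
    have hpd : ∀ (a : Fin 4 → k) j, pderiv j (∑ i, C (a i) * pderiv i f) =
        ∑ i, C (a i) * pderiv i (pderiv j f) := by
      intro a j
      rw [map_sum]
      refine Finset.sum_congr rfl fun i _ => ?_
      rw [pderiv_C_mul, gn_pderiv_comm]
    have h2 : ∀ j, u * pderiv j fA + w * pderiv j fB = 0 := by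
      intro j
      rw [← hjac j, hfA, hfB, hpd, hpd, Finset.mul_sum, Finset.mul_sum, ← Finset.sum_add_distrib]
      refine Finset.sum_congr rfl fun i _ => ?_
      rw [huw i]; ring
    obtain ⟨c, hc⟩ : ∃ c, fB = C c * fA := by
      apply gn_prop (hhom A) (hhom B) hfA0
      intro j
      by_cases hu : u = 0
      · have hw : w ≠ 0 := by
          rintro rfl
          apply h0
          rw [huw, hu, mul_zero, mul_zero, add_zero]
        apply mul_left_cancel₀ hw
        linear_combination fA * h2 j - pderiv j fA * h1
      · apply mul_left_cancel₀ hu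
        linear_combination pderiv j fB * h1 - fB * h2 j
    refine ⟨B - c • A, sub_ne_zero.2 (hB c), ?_⟩
    have : ∑ i, C ((B - c • A) i) * pderiv i f = fB - C c * fA := by
      rw [hfA, hfB, Finset.mul_sum, ← Finset.sum_sub_distrib]
      refine Finset.sum_congr rfl fun i _ => ?_
      simp only [Pi.sub_apply, Pi.smul_apply, smul_eq_mul, C_sub, C_mul]
      ring
    rw [this, hc, sub_self]
end field

set_option linter.unusedSectionVars false

section field
variable {k : Type*} [Field k] [CharZero k]

/-- linear substitution -/
noncomputable def gnS (T : Matrix (Fin 4) (Fin 4) k) :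
    MvPolynomial (Fin 4) k →ₐ[k] MvPolynomial (Fin 4) k :=
  aeval (fun i => ∑ j, C (T i j) * X j)

lemma gnS_eval (T : Matrix (Fin 4) (Fin 4) k) (F : MvPolynomial (Fin 4) k) (a : Fin 4 → k) :
    eval a (gnS T F) = eval (T.mulVec a) F := by
  have h2 : ((eval a).comp (gnS T).toRingHom : MvPolynomial (Fin 4) k →+* k)
      = eval (T.mulVec a) := by
    apply MvPolynomial.ringHom_ext
    · intro r; simp [gnS]
    · intro i; simp [gnS, Matrix.mulVec, dotProduct]
  exact congrArg (fun φ : MvPolynomial (Fin 4) k →+* k => φ F) h2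

lemma gnS_inv (T : Matrix (Fin 4) (Fin 4) k) (hT : IsUnit T.det) (F : MvPolynomial (Fin 4) k) :
    gnS T⁻¹ (gnS T F) = F := by
  apply MvPolynomial.funext
  intro a
  rw [gnS_eval, gnS_eval, Matrix.mulVec_mulVec, Matrix.mul_nonsing_inv _ hT, Matrix.one_mulVec]

lemma gnS_zero (T : Matrix (Fin 4) (Fin 4) k) (hT : IsUnit T.det) (F : MvPolynomial (Fin 4) k)
    (h : gnS T F = 0) : F = 0 := by
  rw [← gnS_inv T hT F, h, map_zero]

lemma gnS_pderiv (T : Matrix (Fin 4) (Fin 4) k) (F : MvPolynomial (Fin 4) k) (j : Fin 4) :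
    pderiv j (gnS T F) = gnS T (∑ i, C (T i j) * pderiv i F) := by
  have h1 := gn_chain (pderiv j) (fun i => ∑ j, C (T i j) * X j : Fin 4 → MvPolynomial (Fin 4) k) F
  have h2 : ∀ i, pderiv j (∑ l, C (T i l) * X l : MvPolynomial (Fin 4) k) = C (T i j) := by
    intro i
    rw [map_sum]
    simp [pderiv_X, Pi.single_apply]
  unfold gnS
  rw [h1, map_sum]
  refine Finset.sum_congr rfl fun i _ => ?_
  rw [h2, map_mul, mul_comm]
  congr 1
  exact (aeval_C _ _).symm

lemma gnS_dir (T : Matrix (Fin 4) (Fin 4) k) (F : MvPolynomial (Fin 4) k) (c : Fin 4 → k) :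
    ∑ j, C (c j) * pderiv j (gnS T F) = gnS T (∑ i, C (T.mulVec c i) * pderiv i F) := by
  have hC : ∀ a : k, gnS T (C a) = C a := fun a => aeval_C _ _
  simp only [gnS_pderiv, map_sum, map_mul, hC, Finset.mul_sum]
  rw [Finset.sum_comm]
  refine Finset.sum_congr rfl fun i _ => ?_
  rw [Matrix.mulVec, dotProduct, map_sum, Finset.sum_mul]
  refine Finset.sum_congr rfl fun j _ => ?_
  rw [C_mul]; ring

lemma gnS_homog (T : Matrix (Fin 4) (Fin 4) k) {F : MvPolynomial (Fin 4) k} {d : ℕ}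
    (hF : F.IsHomogeneous d) : (gnS T F).IsHomogeneous d := by
  have h := hF.aeval (fun i => ∑ j, C (T i j) * X j : Fin 4 → MvPolynomial (Fin 4) k) (n := 1) (by
    intro i
    apply IsHomogeneous.sum
    intro j _
    exact (isHomogeneous_X k j).C_mul _)
  rwa [one_mul] at h

lemma gn_multiset_fun {α : Type*} [CommMonoid α] (S : Multiset α) (d : ℕ) (h : S.card = d) :
    ∃ F : Fin d → α, (∀ i, F i ∈ S) ∧ S.prod = ∏ i, F i := by
  subst h
  induction S using Quot.inductionOn with
  | h l =>
    refine ⟨fun i => l.get i, fun i => List.get_mem l i, ?_⟩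
    have := List.prod_ofFn (f := l.get)
    rw [List.ofFn_get] at this
    exact (Multiset.prod_coe l).trans this

lemma gn_binary [IsAlgClosed k] (g : MvPolynomial (Fin 4) k) (d : ℕ) (hd : d ≠ 0)
    (hg : g.IsHomogeneous d)
    (h2 : pderiv 2 g = 0) (h3 : pderiv 3 g = 0) :
    ∃ ℓ : Fin d → MvPolynomial (Fin 4) k,
      (∀ i, ∃ s t : k, ℓ i = C s * X 0 + C t * X 1) ∧ g = ∏ i, ℓ i := by
  classical
  let p : Polynomial k := aeval ![Polynomial.X, 1, 0, 0] g
  have hpe : ∀ t : k, p.eval t = eval ![t, 1, 0, 0] g := by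
    intro t
    have h2 : ((Polynomial.evalRingHom t).comp
        (aeval (R := k) ![Polynomial.X, 1, 0, 0] : MvPolynomial (Fin 4) k →ₐ[k] Polynomial k).toRingHom)
        = eval ![t, 1, 0, 0] := by
      apply MvPolynomial.ringHom_ext
      · intro r; simp
      · intro i; fin_cases i <;> simp
    exact congrArg (fun φ : MvPolynomial (Fin 4) k →+* k => φ g) h2
  have hpd : p.natDegree ≤ d := by
    simp only [p, aeval_def, eval₂_eq]
    apply Polynomial.natDegree_sum_le_of_forall_le
    intro s hs
    have h1 := hg.degree_eq_sum_deg_support hs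
    refine (Polynomial.natDegree_mul_le).trans ?_
    rw [Polynomial.algebraMap_eq, Polynomial.natDegree_C, zero_add]
    refine (Polynomial.natDegree_prod_le _ _).trans ?_
    rw [h1]
    apply Finset.sum_le_sum
    intro i _
    refine Polynomial.natDegree_pow_le.trans ?_
    have : ((![Polynomial.X, 1, 0, 0] : Fin 4 → Polynomial k) i).natDegree ≤ 1 := by
      fin_cases i <;> simp
    calc _ ≤ s i * 1 := Nat.mul_le_mul_left _ this
      _ = s i := mul_one _
  have hsp := IsAlgClosed.splits p
  have hcard : p.roots.card = p.natDegree := hsp.natDegree_eq_card_roots.symm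
  obtain ⟨γ, hγ⟩ := IsAlgClosed.exists_pow_nat_eq p.leadingCoeff (Nat.pos_of_ne_zero hd)
  let S : Multiset (MvPolynomial (Fin 4) k) :=
    p.roots.map (fun r => X 0 - C r * X 1) + Multiset.replicate (d - p.natDegree) (X 1)
  have hS : S.card = d := by
    simp only [S, Multiset.card_add, Multiset.card_map, Multiset.card_replicate, hcard]
    omega
  have hinv : ∀ a : Fin 4 → k, eval a g = eval ![a 0, a 1, 0, 0] g := by
    intro a
    have := gn_const_invariant ![0, 0, a 2, a 3] g
      (by simp [Fin.sum_univ_four, h2, h3]) ![a 0, a 1, 0, 0]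
    rw [← this]
    congr 2
    funext i
    fin_cases i <;> simp
  have hgS : g = C p.leadingCoeff * S.prod := by
    have hX : (X 1 : MvPolynomial (Fin 4) k) ≠ 0 := X_ne_zero 1
    apply mul_right_cancel₀ hX
    apply MvPolynomial.funext
    intro a
    rw [map_mul, map_mul, eval_X]
    by_cases ha : a 1 = 0
    · rw [ha, mul_zero, mul_zero]
    congr 1
    have e1 : ![a 0, a 1, 0, 0] = a 1 • ![a 0 / a 1, 1, 0, 0] := by
      funext i
      fin_cases i <;> simp
      field_simp
    rw [hinv, e1, gn_homog_eval hg, ← hpe, hsp.eval_eq_prod_roots, map_mul, eval_C]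
    have e2 : eval a S.prod = a 1 ^ d * (p.roots.map (a 0 / a 1 - ·)).prod := by
      simp only [S, Multiset.prod_add, Multiset.prod_replicate, map_mul, map_pow, eval_X,
        map_multiset_prod, Multiset.map_map]
      have e3 : (p.roots.map ((eval a) ∘ fun r => (X 0 - C r * X 1 : MvPolynomial (Fin 4) k))) =
          p.roots.map (fun r => a 1 * (a 0 / a 1 - r)) := by
        apply Multiset.map_congr rfl
        intro r _
        simp
        field_simp
      rw [e3, Multiset.prod_map_mul, Multiset.map_const', Multiset.prod_replicate, hcard]
      have : a 1 ^ d = a 1 ^ p.natDegree * a 1 ^ (d - p.natDegree) := by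
        rw [← pow_add]; congr 1; omega
      rw [this]; ring
    rw [e2]; ring
  obtain ⟨F, hF, hFp⟩ := gn_multiset_fun S d hS
  refine ⟨fun i => C γ * F i, ?_, ?_⟩
  · intro i
    have := hF i
    rcases Multiset.mem_add.1 this with h | h
    · obtain ⟨r, _, hr⟩ := Multiset.mem_map.1 h
      refine ⟨γ, - (γ * r), ?_⟩
      simp only [← hr, C_neg, C_mul]; ring
    · have := Multiset.eq_of_mem_replicate h
      refine ⟨0, γ, ?_⟩
      simp only [this, C_0]; ring
  · rw [Finset.prod_mul_distrib, Finset.prod_const, Finset.card_univ, Fintype.card_fin, ← hFp,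
      ← C_pow, hγ]
    exact hgS

lemma gn_case_a [IsAlgClosed k] (f : MvPolynomial (Fin 4) k) (d : ℕ) (hd : 3 ≤ d)
    (hsf : Squarefree f) (hhom : f.IsHomogeneous d) (v : Fin 4 → (Fin 4 → k))
    (hv : LinearIndependent k v) (hv2 : ∑ i, C (v 2 i) * pderiv i f = 0)
    (hv3 : ∑ i, C (v 3 i) * pderiv i f = 0) :
    ∃ T : Matrix (Fin 4) (Fin 4) k, IsUnit T.det ∧
      pderiv 2 (gnS T f) = 0 ∧
      pderiv 3 (gnS T f) = 0 ∧
      ∃ ℓ : Fin d → MvPolynomial (Fin 4) k,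
        (∀ i, (ℓ i).IsHomogeneous 1) ∧
        (∀ i j, i ≠ j → ∀ c : k, ℓ i ≠ c • ℓ j) ∧
        (∃ W : Submodule k (Fin 4 → k), Module.finrank k W = 2 ∧
          ∀ i, ∀ w ∈ W, eval w (ℓ i) = 0) ∧
        f = ∏ i, ℓ i := by
  set T : Matrix (Fin 4) (Fin 4) k := Matrix.of fun i j => v j i with hTdef
  have hT : IsUnit T.det := by
    rw [← Matrix.isUnit_iff_isUnit_det, ← Matrix.linearIndependent_cols_iff_isUnit]
    exact hv
  have h2 : pderiv 2 (gnS T f) = 0 := by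
    rw [gnS_pderiv]
    simp only [hTdef, Matrix.of_apply, hv2, map_zero]
  have h3 : pderiv 3 (gnS T f) = 0 := by
    rw [gnS_pderiv]
    simp only [hTdef, Matrix.of_apply, hv3, map_zero]
  have hf0 : f ≠ 0 := hsf.ne_zero
  refine ⟨T, hT, h2, h3, ?_⟩
  obtain ⟨ℓ, hℓ, hprod⟩ := gn_binary (gnS T f) d (by omega) (gnS_homog T hhom) h2 h3
  have hfp : f = ∏ i, gnS T⁻¹ (ℓ i) := by
    rw [← map_prod, ← hprod, gnS_inv T hT]
  have hl1 : ∀ i, (gnS T⁻¹ (ℓ i)).IsHomogeneous 1 := by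
    intro i
    apply gnS_homog
    obtain ⟨s, t, hst⟩ := hℓ i
    rw [hst]
    exact ((isHomogeneous_X k _).C_mul _).add ((isHomogeneous_X k _).C_mul _)
  have hl0 : ∀ i, gnS T⁻¹ (ℓ i) ≠ 0 := by
    intro i hi
    apply hf0
    rw [hfp]
    exact Finset.prod_eq_zero (Finset.mem_univ i) hi
  refine ⟨fun i => gnS T⁻¹ (ℓ i), hl1, ?_, ?_, hfp⟩
  · intro i j hij c hc
    have hdvd : gnS T⁻¹ (ℓ j) * gnS T⁻¹ (ℓ j) ∣ f := by
      have h1 : f = gnS T⁻¹ (ℓ i) * (gnS T⁻¹ (ℓ j) *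
          ∏ l ∈ (Finset.univ.erase i).erase j, gnS T⁻¹ (ℓ l)) := by
        rw [Finset.mul_prod_erase _ (fun l => gnS T⁻¹ (ℓ l))
          (Finset.mem_erase.2 ⟨hij.symm, Finset.mem_univ j⟩),
          Finset.mul_prod_erase _ (fun l => gnS T⁻¹ (ℓ l)) (Finset.mem_univ i)]
        exact hfp
      rw [h1, ← mul_assoc]
      apply Dvd.dvd.mul_right
      apply mul_dvd_mul_right
      simp only [] at hc
      rw [hc, smul_eq_C_mul]
      exact dvd_mul_left _ _
    have hu := hsf _ hdvd
    have h0 : gnS T⁻¹ (ℓ j) ∣ 1 := isUnit_iff_dvd_one.1 hu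
    have := gn_dvd_degree (hl1 j) (isHomogeneous_one (Fin 4) k) one_pos h0
    exact one_ne_zero this
  · refine ⟨Submodule.span k (Set.range ![v 2, v 3]), ?_, ?_⟩
    · have hli : LinearIndependent k ![v 2, v 3] := by
        have := hv.comp ![2, 3] (by decide)
        convert this using 1
        funext i
        fin_cases i <;> rfl
      rw [finrank_span_eq_card hli, Fintype.card_fin]
    · intro i w hw
      simp only
      rw [gnS_eval]
      rw [Matrix.range_cons, Matrix.range_cons, Matrix.range_empty, Set.union_empty] at hw
      obtain ⟨s, t, rfl⟩ := Submodule.mem_span_pair.1 hw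
      have e1 : s • v 2 + t • v 3 = T.mulVec ![0, 0, s, t] := by
        funext l
        simp [Matrix.mulVec, dotProduct, Fin.sum_univ_four, hTdef]
        ring
      rw [e1, Matrix.mulVec_mulVec, Matrix.nonsing_inv_mul _ hT, Matrix.one_mulVec]
      obtain ⟨s, t, hst⟩ := hℓ i
      rw [hst]
      simp

lemma gn_case_b (f : MvPolynomial (Fin 4) k) (v : Fin 4 → (Fin 4 → k))
    (hv : LinearIndependent k v) (hv3 : ∑ i, C (v 3 i) * pderiv i f = 0)
    (hN : ∀ a : Fin 4 → k, ∑ i, C (a i) * pderiv i f = 0 → ∃ t : k, t • v 3 = a) :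
    ∃ T : Matrix (Fin 4) (Fin 4) k, IsUnit T.det ∧
      pderiv 3 (gnS T f) = 0 ∧
      LinearIndependent k (fun i : Fin 3 => pderiv (Fin.castSucc i) (gnS T f)) := by
  set T : Matrix (Fin 4) (Fin 4) k := Matrix.of fun i j => v j i with hTdef
  have hT : IsUnit T.det := by
    rw [← Matrix.isUnit_iff_isUnit_det, ← Matrix.linearIndependent_cols_iff_isUnit]
    exact hv
  have h3 : pderiv 3 (gnS T f) = 0 := by
    rw [gnS_pderiv]
    simp only [hTdef, Matrix.of_apply, hv3, map_zero]
  refine ⟨T, hT, h3, ?_⟩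
  rw [Fintype.linearIndependent_iff]
  intro c hc
  have h4 := gnS_dir T f (Fin.snoc c 0 : Fin 4 → k)
  have h5 : ∑ j, C ((Fin.snoc c 0 : Fin 4 → k) j) * pderiv j (gnS T f) = 0 := by
    rw [Fin.sum_univ_castSucc, ← hc]
    simp [smul_eq_C_mul, h3]
  rw [h5] at h4
  obtain ⟨t, ht⟩ := hN _ (gnS_zero T hT _ h4.symm)
  have e1 : t • v 3 = T.mulVec (Fin.snoc (0 : Fin 3 → k) t : Fin 4 → k) := by
    funext l
    rw [Matrix.mulVec, dotProduct, Fin.sum_univ_castSucc]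
    have hs : (Fin.snoc (0 : Fin 3 → k) t : Fin 4 → k) 3 = t :=
      Fin.snoc_last (α := fun _ => k) t (0 : Fin 3 → k)
    simp [hTdef, mul_comm, hs]
  have e2 : (Fin.snoc (0 : Fin 3 → k) t : Fin 4 → k) = Fin.snoc c 0 := by
    have := congrArg (T⁻¹.mulVec) (e1.symm.trans ht)
    rwa [Matrix.mulVec_mulVec, Matrix.mulVec_mulVec, Matrix.nonsing_inv_mul _ hT,
      Matrix.one_mulVec, Matrix.one_mulVec] at this
  intro i
  have := congrFun e2 (Fin.castSucc i)
  simpa using this.symm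
end field

/-- Classification of hypersurfaces in `ℙ³` with vanishing Hessian: such a hypersurface
either consists of `d` distinct planes through a line, or is a cone over a plane curve
with vertex exactly a point. -/
theorem stmt3 {k : Type*} [Field k] [IsAlgClosed k] [CharZero k]
    (f : MvPolynomial (Fin 4) k) (d : ℕ) (hd : 3 ≤ d)
    (hsf : Squarefree f) (hhom : f.IsHomogeneous d)
    (hhess : hessianDet f = 0) :
    (∃ T : Matrix (Fin 4) (Fin 4) k, IsUnit T.det ∧
      pderiv 2 (aeval (fun i => ∑ j, C (T i j) * X j) f) = 0 ∧
      pderiv 3 (aeval (fun i => ∑ j, C (T i j) * X j) f) = 0 ∧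
      ∃ ℓ : Fin d → MvPolynomial (Fin 4) k,
        (∀ i, (ℓ i).IsHomogeneous 1) ∧
        (∀ i j, i ≠ j → ∀ c : k, ℓ i ≠ c • ℓ j) ∧
        (∃ W : Submodule k (Fin 4 → k), Module.finrank k W = 2 ∧
          ∀ i, ∀ w ∈ W, eval w (ℓ i) = 0) ∧
        f = ∏ i, ℓ i) ∨
    (∃ T : Matrix (Fin 4) (Fin 4) k, IsUnit T.det ∧
      pderiv 3 (aeval (fun i => ∑ j, C (T i j) * X j) f) = 0 ∧
      LinearIndependent k (fun i : Fin 3 =>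
        pderiv (Fin.castSucc i) (aeval (fun i => ∑ j, C (T i j) * X j) f))) := by
  have hfr : Module.finrank k (Fin 4 → k) = 4 := Module.finrank_fin_fun k
  obtain ⟨a, ha, haf⟩ := gn_cone f d hd hhom hhess
  by_cases hN : ∀ b : Fin 4 → k, ∑ i, C (b i) * pderiv i f = 0 → ∃ t : k, t • a = b
  · right
    have h1 : LinearIndependent k ![a] := by
      rw [linearIndependent_unique_iff]; exact ha
    obtain ⟨x, hx⟩ := exists_linearIndependent_cons_of_lt_finrank h1 (by omega)
    obtain ⟨y, hy⟩ := exists_linearIndependent_cons_of_lt_finrank hx (by omega)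
    obtain ⟨z, hz⟩ := exists_linearIndependent_cons_of_lt_finrank hy (by omega)
    exact gn_case_b f _ hz haf hN
  · left
    push Not at hN
    obtain ⟨b, hb, hab⟩ := hN
    have h1 : LinearIndependent k ![a, b] := (LinearIndependent.pair_iff' ha).2 hab
    obtain ⟨x, hx⟩ := exists_linearIndependent_cons_of_lt_finrank h1 (by omega)
    obtain ⟨y, hy⟩ := exists_linearIndependent_cons_of_lt_finrank hx (by omega)
    exact gn_case_a f d hd hsf hhom _ hy haf hb
end
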